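/- arXiv:1406.3731 — 4 statements merged into one kernel-verified Lean document; each statement's English description precedes it below -/
import Mathlib

section
/- Let G be a finitely generated abelian group and ω a set of primes. Let A be a ℤG-module whose underlying abelian group has finite rank, and let B be a ℤG-module whose underlying additive group is a Černikov ω-group. If A has no infinite ℤG-module quotient that is isomorphic as a ℤG-module to a quotient of B, then Ext^n_{ℤG}(A,B) is a Černikov ω-group for all n ≥ 0. -/
/-!
Statement 2: Proposition A of "Torsion cohomology for solvable groups of finite
rank".  Here `Ext^n_{ℤG}(A, B)` is interpreted as the `Ext` group in the abelian
category `Rep ℤ G` of `ℤG`-modules.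
-/

open CategoryTheory

noncomputable section




/-- The rational circle `ℚ/ℤ`. -/
abbrev RatCircle : Type := ℚ ⧸ AddSubgroup.zmultiples (1 : ℚ)

/-- The quasicyclic (Prüfer) `p`-group, realized as the `p`-primary part of `ℚ/ℤ`. -/
def pruferSubgroup (p : ℕ) : AddSubgroup RatCircle where
  carrier := {x | ∃ n : ℕ, (p ^ n : ℕ) • x = 0}
  zero_mem' := ⟨0, smul_zero _⟩
  add_mem' := by
    rintro a b ⟨m, hm⟩ ⟨n, hn⟩
    refine ⟨m + n, ?_⟩
    have ha : (p ^ m * p ^ n) • a = 0 := by rw [mul_comm, mul_smul, hm, smul_zero]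
    have hb : (p ^ m * p ^ n) • b = 0 := by rw [mul_smul, hn, smul_zero]
    rw [smul_add, pow_add, ha, hb, add_zero]
  neg_mem' := by
    rintro a ⟨m, hm⟩
    exact ⟨m, by rw [smul_neg, hm, neg_zero]⟩

/-- A group has a quasicyclic `p`-section if some quotient of a subgroup is
isomorphic to the Prüfer `p`-group. -/
def HasQuasicyclicSection (G : Type*) [Group G] (p : ℕ) : Prop :=
  ∃ (H : Subgroup G) (K : Subgroup H) (_ : K.Normal),
    Nonempty ((H ⧸ K) ≃* Multiplicative (pruferSubgroup p))

/-- The spectrum of a group: the set of primes `p` such that the group has a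
section isomorphic to the quasicyclic `p`-group. -/
def groupSpectrum (G : Type*) [Group G] : Set ℕ :=
  {p | p.Prime ∧ HasQuasicyclicSection G p}

/-- The spectrum of an (additive) abelian group, via `Multiplicative`. -/
abbrev addSpectrum (A : Type*) [AddGroup A] : Set ℕ :=
  groupSpectrum (Multiplicative A)

/-- An abelian group has finite rank if its torsion-free rank and all of its
`p`-ranks are finite. -/
def FiniteRankAbelian (A : Type*) [AddCommGroup A] : Prop :=
  (∃ n : ℕ, ∀ k : ℕ, (∃ f : (Fin k →₀ ℤ) →+ A, Function.Injective f) → k ≤ n) ∧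
  ∀ p : ℕ, p.Prime → {a : A | (p : ℕ) • a = 0}.Finite

/-- A group has finite rank (in the sense appropriate for abelian groups:
finite torsion-free rank and finite `p`-ranks). -/
def FiniteRankGroup (G : Type*) [Group G] : Prop :=
  (∃ n : ℕ, ∀ k : ℕ,
    (∃ f : Multiplicative (Fin k →₀ ℤ) →* G, Function.Injective f) → k ≤ n) ∧
  ∀ p : ℕ, p.Prime → {g : G | g ^ p = 1}.Finite

/-- A solvable group of finite rank: a solvable group all of whose abelian
sections have finite rank. -/
def SolvableOfFiniteRank (G : Type*) [Group G] : Prop :=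
  IsSolvable G ∧
    ∀ (H : Subgroup G) (K : Subgroup H) (_ : K.Normal),
      (∀ x y : H ⧸ K, x * y = y * x) → FiniteRankGroup (H ⧸ K)

/-- A group is virtually abelian. -/
def VirtuallyAbelian (G : Type*) [Group G] : Prop :=
  ∃ H : Subgroup G, H.index ≠ 0 ∧ ∀ x y : H, x * y = y * x

/-- A Černikov abelian group: it has a subgroup of finite index that is a direct
sum of finitely many quasicyclic groups. -/
def IsCernikov (A : Type*) [AddCommGroup A] : Prop :=
  ∃ (S : AddSubgroup A) (r : ℕ) (p : Fin r → ℕ),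
    S.index ≠ 0 ∧ (∀ i, (p i).Prime) ∧
    Nonempty (S ≃+ ((i : Fin r) → pruferSubgroup (p i)))

/-- A torsion `ω`-group: every element has finite order divisible only by primes
in `ω`. -/
def IsOmegaTorsion (ω : Set ℕ) (A : Type*) [AddGroup A] : Prop :=
  ∀ a : A, IsOfFinAddOrder a ∧
    ∀ p : ℕ, p.Prime → (p : ℤ) ∣ (addOrderOf a : ℤ) → p ∈ ω

/-- A Černikov `ω`-group. -/
def IsCernikovOmega (ω : Set ℕ) (A : Type*) [AddCommGroup A] : Prop :=
  IsCernikov A ∧ IsOmegaTorsion ω A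


noncomputable section
set_option linter.style.haveILetI false

def NTors (N : ℕ) (M : Type*) [AddCommGroup M] : Prop := ∀ x : M, ∃ k : ℕ, (N ^ k) • x = 0

theorem antitone_sets_stab {M : Type*} {F : Set M} (hF : F.Finite) (S : ℕ → ℕ → Set M)
    (hS : ∀ i k, S i k ⊆ F) (h1 : ∀ i i' k, i ≤ i' → S i' k ⊆ S i k)
    (h2 : ∀ i k k', k ≤ k' → S i k' ⊆ S i k) :
    ∃ n, ∀ i, n ≤ i → ∀ k, S i k = S n k := by
  classical
  have hfin : ∀ i k, (S i k).Finite := fun i k => hF.subset (hS i k)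
  obtain ⟨⟨i1, k1⟩, hmin⟩ : ∃ p : ℕ × ℕ, ∀ q : ℕ × ℕ, (S p.1 p.2).ncard ≤ (S q.1 q.2).ncard := by
    obtain ⟨p, -, hp⟩ := WellFounded.has_min (InvImage.wf (fun p : ℕ × ℕ => (S p.1 p.2).ncard)
      Nat.lt_wfRel.wf) Set.univ ⟨(0,0), trivial⟩
    exact ⟨p, fun q => not_lt.1 (hp q trivial)⟩
  have hst : ∀ k, ∃ j, ∀ i, j ≤ i → S i k = S j k := by
    intro k
    obtain ⟨j, -, hj⟩ := WellFounded.has_min (InvImage.wf (fun p : ℕ => (S p k).ncard)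
      Nat.lt_wfRel.wf) Set.univ ⟨0, trivial⟩
    refine ⟨j, fun i hi => ?_⟩
    exact Set.eq_of_subset_of_ncard_le (h1 _ _ _ hi) (not_lt.1 (hj i trivial)) (hfin _ _)
  choose j hj using hst
  refine ⟨max i1 ((Finset.range k1).sup j), fun i hi k => ?_⟩
  set n := max i1 ((Finset.range k1).sup j)
  by_cases hk : k < k1
  · have : j k ≤ n := le_trans (Finset.le_sup (f := j) (Finset.mem_range.2 hk)) (le_max_right _ _)
    rw [hj k i (this.trans hi), hj k n this]
  · have key : ∀ i, i1 ≤ i → S i k = S i1 k1 := fun i hi =>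
      Set.eq_of_subset_of_ncard_le ((h1 _ _ _ hi).trans (h2 _ _ _ (not_lt.1 hk)))
        (hmin (i, k)) (hfin _ _)
    rw [key i ((le_max_left _ _).trans hi), key n (le_max_left _ _)]

theorem artinian_of_ntors {M : Type*} [AddCommGroup M] {N : ℕ} (hM : NTors N M)
    (hf : {x : M | N • x = 0}.Finite) : IsArtinian ℤ M := by
  rw [← monotone_stabilizes_iff_artinian]
  intro H
  have hH : ∀ i i', i ≤ i' → (OrderDual.ofDual (H i')) ≤ OrderDual.ofDual (H i) :=
    fun i i' h => H.monotone h
  obtain ⟨n, hn⟩ := antitone_sets_stab hf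
    (fun i k => {x : M | N • x = 0 ∧ ∃ y ∈ OrderDual.ofDual (H i), N ^ k • y = x})
    (fun i k x hx => hx.1)
    (fun i i' k h x hx => ⟨hx.1, by obtain ⟨y, hy, e⟩ := hx.2; exact ⟨y, hH _ _ h hy, e⟩⟩)
    (fun i k k' h x hx => ⟨hx.1, by
      obtain ⟨y, hy, e⟩ := hx.2
      obtain ⟨d, rfl⟩ := Nat.exists_eq_add_of_le h
      refine ⟨N ^ d • y, nsmul_mem hy _, ?_⟩
      rw [← e, pow_add, mul_smul]⟩)
  refine ⟨n, fun i hi => ?_⟩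
  have key : ∀ t : ℕ, ∀ x ∈ OrderDual.ofDual (H n), N ^ t • x = 0 → x ∈ OrderDual.ofDual (H i) := by
    intro t
    induction t with
    | zero => intro x _ h; simp at h; rw [h]; exact zero_mem _
    | succ t ih =>
      intro x hx h
      have : N ^ t • x ∈ {x : M | N • x = 0 ∧ ∃ y ∈ OrderDual.ofDual (H n), N ^ t • y = x} :=
        ⟨by rw [← mul_smul, ← pow_succ']; exact h, x, hx, rfl⟩
      have h2 := hn i hi t
      rw [← h2] at this
      obtain ⟨-, y, hy, e⟩ := this
      have := ih (x - y) (sub_mem hx (hH _ _ hi hy)) (by rw [smul_sub, e, sub_self])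
      simpa using add_mem this hy
  exact le_antisymm (α := Submodule ℤ M) (fun x hx => by
    obtain ⟨t, ht⟩ := hM x; exact key t x hx ht) (hH _ _ hi)

theorem finite_of_artinian_bounded {M : Type*} [AddCommGroup M] [IsArtinian ℤ M] {n : ℕ}
    (hn : 0 < n) (h : ∀ x : M, n • x = 0) : Finite M := by
  haveI : NeZero n := ⟨hn.ne'⟩
  letI : Module (ZMod n) M := AddCommGroup.zmodModule h
  have h1 : IsArtinian (ZMod n) M := isArtinian_of_tower ℤ inferInstance
  have h2 : IsNoetherian (ZMod n) M :=
    (IsSemiprimaryRing.isNoetherian_iff_isArtinian (R := ZMod n) (M := M)).2 h1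
  have h3 : Module.Finite (ZMod n) M := @Module.IsNoetherian.finite _ _ _ _ _ h2
  exact @Module.finite_of_finite (ZMod n) M _ _ _ _ h3

theorem finite_torsion_of_artinian {M : Type*} [AddCommGroup M] [IsArtinian ℤ M] {n : ℕ}
    (hn : 0 < n) : {x : M | n • x = 0}.Finite := by
  let T : Submodule ℤ M := Submodule.torsionBy ℤ M (n : ℤ)
  have hT : ∀ x : T, n • x = 0 := by
    rintro ⟨x, hx⟩
    ext
    have : (n : ℤ) • x = 0 := by simpa [T] using hx
    simpa using this
  haveI : Finite T := finite_of_artinian_bounded hn hT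
  have : (T : Set M).Finite := Set.toFinite _
  refine this.subset fun x hx => ?_
  simpa [T] using hx

end

noncomputable section
set_option linter.style.haveILetI false

theorem NTors.exists_bottom {M : Type*} [AddCommGroup M] {N : ℕ} {x : M} (hx : x ≠ 0)
    (h : ∃ k : ℕ, N ^ k • x = 0) : ∃ l : ℕ, N ^ l • x ≠ 0 ∧ N • (N ^ l • x) = 0 := by
  classical
  have h1 := Nat.find_spec h
  have h2 : Nat.find h ≠ 0 := by
    intro h0; rw [h0] at h1; simp at h1; exact hx h1
  obtain ⟨l, hl⟩ := Nat.exists_eq_succ_of_ne_zero h2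
  refine ⟨l, Nat.find_min h (by omega), ?_⟩
  rw [← mul_smul, ← pow_succ', ← Nat.succ_eq_add_one, ← hl]; exact h1

def ratInv (p : ℕ) : RatCircle := QuotientAddGroup.mk ((1 : ℚ) / p)

theorem ratInv_tors {p : ℕ} (hp : 0 < p) : p • ratInv p = 0 := by
  have : (p : ℚ) ≠ 0 := by positivity
  rw [ratInv, ← QuotientAddGroup.mk_nsmul]
  rw [QuotientAddGroup.eq_zero_iff]
  refine ⟨1, ?_⟩
  simp [this]

theorem ratInv_gen {p : ℕ} (hp : 0 < p) (x : RatCircle) (hx : p • x = 0) :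
    ∃ j : ℤ, x = j • ratInv p := by
  have hp' : (p : ℚ) ≠ 0 := by positivity
  induction x using QuotientAddGroup.induction_on with
  | H q =>
    rw [← QuotientAddGroup.mk_nsmul, QuotientAddGroup.eq_zero_iff] at hx
    obtain ⟨n, hn⟩ := hx
    refine ⟨n, ?_⟩
    rw [ratInv, ← QuotientAddGroup.mk_zsmul]
    congr 1
    simp at hn ⊢
    field_simp
    rw [mul_comm]; exact hn.symm

theorem ratInv_dvd {p : ℕ} (hp : 0 < p) (j : ℤ) (h : j • ratInv p = 0) : (p : ℤ) ∣ j := by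
  have hp' : (p : ℚ) ≠ 0 := by positivity
  rw [ratInv, ← QuotientAddGroup.mk_zsmul, QuotientAddGroup.eq_zero_iff] at h
  obtain ⟨n, hn⟩ := h
  refine ⟨n, ?_⟩
  simp at hn
  field_simp at hn
  rw [mul_comm]; exact_mod_cast hn.symm

theorem prufer_artinian {p : ℕ} (hp : 0 < p) : IsArtinian ℤ (pruferSubgroup p) := by
  refine artinian_of_ntors (N := p) ?_ ?_
  · rintro ⟨x, n, hn⟩
    exact ⟨n, Subtype.ext hn⟩
  · refine Set.Finite.of_finite_image (f := Subtype.val) ?_ Subtype.val_injective.injOn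
    have : (AddSubgroup.zmultiples (ratInv p) : Set RatCircle).Finite := by
      rw [finite_zmultiples, isOfFinAddOrder_iff_nsmul_eq_zero]
      exact ⟨p, hp, ratInv_tors hp⟩
    refine this.subset ?_
    rintro _ ⟨⟨x, _⟩, hx, rfl⟩
    obtain ⟨j, hj⟩ := ratInv_gen hp x (by simpa using congrArg Subtype.val hx)
    exact ⟨j, hj.symm⟩

theorem isArtinian_of_cernikov {M : Type*} [AddCommGroup M] (h : IsCernikov M) : IsArtinian ℤ M := by
  obtain ⟨S, r, p, hS, hp, ⟨e⟩⟩ := h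
  rw [isArtinian_iff_submodule_quotient (AddSubgroup.toIntSubmodule S)]
  have : ∀ i, IsArtinian ℤ (pruferSubgroup (p i)) := fun i => prufer_artinian (hp i).pos
  constructor
  · exact isArtinian_of_injective (M := S) e.toIntLinearEquiv.toLinearMap e.injective
  · have : Finite (M ⧸ S) := AddSubgroup.index_ne_zero_iff_finite.1 hS
    have : Finite (M ⧸ (AddSubgroup.toIntSubmodule S)) := this
    infer_instance

def IsDiv (D : Type*) [AddCommGroup D] : Prop := ∀ n : ℕ, 0 < n → ∀ x : D, ∃ y, n • y = x

theorem IsDiv.baer {D : Type*} [AddCommGroup D] (h : IsDiv D) : Module.Baer ℤ D := by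
  have h' : ∀ n : ℤ, ∀ x : D, ∃ y, n ≠ 0 → n • y = x := by
    intro n x
    by_cases hn : n = 0
    · exact ⟨0, fun h => (h hn).elim⟩
    obtain ⟨y, hy⟩ := h n.natAbs (Int.natAbs_pos.2 hn) x
    rcases Int.natAbs_eq n with h | h
    · exact ⟨y, fun _ => by rw [h, natCast_zsmul]; exact hy⟩
    · exact ⟨-y, fun _ => by rw [h, neg_smul, smul_neg, neg_neg, natCast_zsmul]; exact hy⟩
  choose y hy using h'
  letI : DivisibleBy D ℤ :=
    { div := fun x n => if n = 0 then 0 else y n x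
      div_zero := by simp
      div_cancel := by
        intro n a hn
        simp [hn, hy n a hn] }
  exact Module.Baer.of_divisible D

theorem prufer_div {p : ℕ} (hp : p.Prime) : IsDiv (pruferSubgroup p) := by
  rintro n hn ⟨x, k, hk⟩
  have key : ∀ x : RatCircle, ∃ y, n • y = x := by
    intro x
    induction x using QuotientAddGroup.induction_on with
    | H q =>
      refine ⟨QuotientAddGroup.mk (q / n), ?_⟩
      rw [← QuotientAddGroup.mk_nsmul]
      congr 1
      have : (n : ℚ) ≠ 0 := by positivity
      simp; field_simp
  obtain ⟨y, hy⟩ := key x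
  obtain ⟨e, m, hm, he⟩ := Nat.exists_eq_pow_mul_and_not_dvd hn.ne' p hp.ne_one
  have hcop : Nat.Coprime (p ^ (e + k)) m := Nat.Coprime.pow_left _ ((Nat.Prime.coprime_iff_not_dvd hp).2 hm)
  -- z = u m y with u m = 1 mod p^k'
  obtain ⟨u, v, huv⟩ : ∃ u v : ℤ, u * (p ^ (e+k) : ℕ) + v * m = 1 := by
    have := (Nat.isCoprime_iff_coprime.2 hcop)
    obtain ⟨a, b, hab⟩ := this
    exact ⟨a, b, hab⟩
  have hz : (p ^ (e + k)) • ((v * m) • y) = 0 := by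
    rw [← hy, he] at hk
    rw [← natCast_zsmul, ← mul_smul]
    have : (((p ^ (e + k) : ℕ) : ℤ) * (v * m)) = v * ((p ^ k * (p ^ e * m) : ℕ) : ℤ) := by
      push_cast; ring
    rw [this, mul_smul, natCast_zsmul, mul_smul, hk, smul_zero]
  refine ⟨⟨(v * m) • y, e + k, hz⟩, ?_⟩
  ext
  simp only [AddSubgroup.coe_nsmul]
  have : (v * m : ℤ) = 1 - u * (p ^ (e+k) : ℕ) := by linarith
  rw [← natCast_zsmul, ← mul_smul, mul_comm (n : ℤ), mul_smul, natCast_zsmul, hy, this, sub_smul, one_smul, mul_smul,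
    natCast_zsmul]
  rw [pow_add, mul_smul, hk, smul_zero, smul_zero, sub_zero]

theorem split_step {D : Type*} [AddCommGroup D] (hdiv : IsDiv D) (htors : ∃ N : ℕ, 0 < N ∧ NTors N D)
    (hne : ∃ x : D, x ≠ 0) : ∃ (p : ℕ) (K : AddSubgroup D), p.Prime ∧ K ≠ ⊤ ∧ IsDiv K ∧
      Nonempty (D ≃+ pruferSubgroup p × K) := by
  obtain ⟨N, hN, ht⟩ := htors
  obtain ⟨x, hx⟩ := hne
  have : ∃ (p : ℕ) (w : D), p.Prime ∧ w ≠ 0 ∧ p • w = 0 := by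
    obtain ⟨k, hk⟩ := ht x
    have hfin : 0 < addOrderOf x := by
      rw [addOrderOf_pos_iff, isOfFinAddOrder_iff_nsmul_eq_zero]
      exact ⟨N ^ k, by positivity, hk⟩
    have h1 : addOrderOf x ≠ 1 := by simpa using hx
    obtain ⟨p, hp, q, hq⟩ := Nat.exists_prime_and_dvd h1
    refine ⟨p, q • x, hp, ?_, ?_⟩
    · intro h0
      have := addOrderOf_dvd_of_nsmul_eq_zero h0
      have hq0 : 0 < q := Nat.pos_of_ne_zero (by rintro rfl; omega)
      have := Nat.le_of_dvd hq0 this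
      rw [hq] at this
      nlinarith [hp.two_le]
    · rw [← mul_smul, ← hq, addOrderOf_nsmul_eq_zero]
  obtain ⟨p, w, hp, hw, hpw⟩ := this
  have hpw' : ∀ j : ℤ, j • w = 0 → (p : ℤ) ∣ j := by
    intro j hj
    by_contra hnd
    obtain ⟨a, b, hab⟩ := ((Prime.coprime_iff_not_dvd (Nat.prime_iff_prime_int.1 hp)).2 hnd)
    apply hw
    rw [← one_smul ℤ w, ← hab, add_smul, mul_smul, mul_smul, hj, natCast_zsmul, hpw]; simp
  let e : pruferSubgroup p := ⟨ratInv p, 1, by simpa using ratInv_tors hp.pos⟩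
  let i1 : ZMod p →+ pruferSubgroup p := ZMod.lift p ⟨zmultiplesHom _ e, by
    ext; simpa [e] using ratInv_tors hp.pos⟩
  let i2 : ZMod p →+ D := ZMod.lift p ⟨zmultiplesHom _ w, by simpa using hpw⟩
  have hi1 : Function.Injective i1 := by
    rw [ZMod.lift_injective]
    intro m hm
    rw [ZMod.intCast_zmod_eq_zero_iff_dvd _ p] 
    exact ratInv_dvd hp.pos m (by simpa [e] using congrArg Subtype.val hm)
  obtain ⟨f, hf⟩ := Module.Baer.extension_property_addMonoidHom hdiv.baer i1 hi1 i2
  have hfe : f e = w := by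
    have h1 : i1 1 = e := by
      have := ZMod.lift_coe p ⟨zmultiplesHom _ e, by ext; simpa [e] using ratInv_tors hp.pos⟩ 1
      simpa [i1] using this
    have h2 : i2 1 = w := by
      have := ZMod.lift_coe p ⟨zmultiplesHom _ w, by simpa using hpw⟩ 1
      simpa [i2] using this
    rw [← h1, ← h2, ← hf]; rfl
  have hfi : Function.Injective f := by
    rw [injective_iff_map_eq_zero]
    intro y hy
    by_contra hy0
    obtain ⟨l, hl0, hl⟩ := NTors.exists_bottom (N := p) hy0
      (by obtain ⟨y, n, hn⟩ := y; exact ⟨n, Subtype.ext hn⟩)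
    obtain ⟨j, hj⟩ := ratInv_gen hp.pos (p ^ l • y : pruferSubgroup p).1
      (by simpa using congrArg Subtype.val hl)
    have hj' : p ^ l • y = j • e := Subtype.ext hj
    have : j • w = 0 := by
      rw [← hfe, ← map_zsmul, ← hj', map_nsmul, hy, smul_zero]
    obtain ⟨c, rfl⟩ := hpw' j this
    apply hl0
    rw [hj', mul_comm, mul_smul]
    have : (p : ℤ) • e = 0 := by ext; simpa [e] using ratInv_tors hp.pos
    rw [this, smul_zero]
  obtain ⟨g, hg⟩ := Module.Baer.extension_property_addMonoidHom (prufer_div hp).baer f hfi (AddMonoidHom.id _)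
  have hg' : ∀ y, g (f y) = y := fun y => DFunLike.congr_fun hg y
  refine ⟨p, g.ker, hp, ?_, ?_, ⟨?_⟩⟩
  · intro htop
    have hwk : w ∈ g.ker := htop ▸ AddSubgroup.mem_top w
    have h1 : g w = 0 := hwk
    rw [← hfe, hg'] at h1
    apply hw; rw [← hfe, h1, map_zero]
  · rintro n hn ⟨z, hz⟩
    obtain ⟨y, hy⟩ := hdiv n hn z
    refine ⟨⟨y - f (g y), ?_⟩, ?_⟩
    · change g _ = 0
      rw [map_sub, hg', sub_self]
    · ext
      have hz' : g z = 0 := hz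
      simp only [AddSubgroup.coe_nsmul]
      rw [smul_sub, ← map_nsmul, ← map_nsmul, hy, hz', map_zero, sub_zero]
  · refine AddEquiv.symm (AddEquiv.mk' (Equiv.mk (fun q => f q.1 + q.2.1) (fun y => (g y, ⟨y - f (g y), ?_⟩)) ?_ ?_) ?_)
    · change g _ = 0
      rw [map_sub, hg', sub_self]
    · rintro ⟨y, z, hz⟩
      have hz' : g z = 0 := hz
      ext <;> simp [hg', hz']
    · intro y; simp
    · rintro ⟨y, z, hz⟩ ⟨y', z', hz'⟩
      simp; abel

theorem div_artinian_struct {D : Type*} [AddCommGroup D] [IsArtinian ℤ D] (N : ℕ) (hN : 0 < N)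
    (hD : NTors N D) (W : Submodule ℤ D) : IsDiv W → ∃ (r : ℕ) (p : Fin r → ℕ), (∀ i, (p i).Prime) ∧
      Nonempty (W ≃+ ((i : Fin r) → pruferSubgroup (p i))) := by
  induction W using WellFoundedLT.induction with
  | ind W ih =>
  intro hdiv
  by_cases hne : ∃ x : W, x ≠ 0
  swap
  · push Not at hne
    haveI : Subsingleton W := ⟨fun a b => by rw [hne a, hne b]⟩
    refine ⟨0, Fin.elim0, fun i => i.elim0, ⟨?_⟩⟩
    haveI : Unique W := Unique.mk' W
    exact AddEquiv.ofUnique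
  obtain ⟨p, K, hp, hK, hKd, ⟨e⟩⟩ := split_step hdiv ⟨N, hN, fun ⟨x, hx⟩ => by
    obtain ⟨k, hk⟩ := hD x; exact ⟨k, Subtype.ext hk⟩⟩ hne
  let K' : Submodule ℤ D := (AddSubgroup.toIntSubmodule K).map W.subtype
  let eK : K ≃+ K' := (Submodule.equivMapOfInjective W.subtype W.injective_subtype (AddSubgroup.toIntSubmodule K)).toAddEquiv
  have hlt : K' < W := by
    refine lt_of_le_of_ne (Submodule.map_subtype_le _ _) ?_
    intro h
    apply hK
    rw [eq_top_iff]
    rintro x -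
    have : (x : D) ∈ K' := by rw [h]; exact x.2
    obtain ⟨y, hy, hyx⟩ := this
    have : y = x := Subtype.ext hyx
    rw [← this]; exact hy
  obtain ⟨r, q, hq, ⟨eq⟩⟩ := ih K' hlt (by
    intro n hn x
    obtain ⟨y, hy⟩ := hKd n hn (eK.symm x)
    exact ⟨eK y, by rw [← map_nsmul, hy]; simp⟩)
  refine ⟨r + 1, Fin.cons p q, ?_, ⟨?_⟩⟩
  · intro i; refine Fin.cases hp hq i
  · have e2 := (Fin.consLinearEquiv ℤ (fun i : Fin (r+1) => pruferSubgroup (Fin.cons (α := fun _ => ℕ) p q i))).toAddEquiv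
    exact (e.trans ((AddEquiv.refl _).prodCongr (eK.trans eq))).trans e2

/-- stable power -/
theorem exists_stable_pow {M : Type*} [AddCommGroup M] [IsArtinian ℤ M] (N : ℕ) :
    ∃ k : ℕ, ∀ x : M, ∃ y : M, N ^ k • x = N ^ (k + 1) • y := by
  obtain ⟨k, hk⟩ := (monotone_stabilizes_iff_artinian (R := ℤ) (M := M)).2 inferInstance
    ⟨fun k => OrderDual.toDual (LinearMap.range (LinearMap.lsmul ℤ M ((N ^ k : ℕ) : ℤ))), by
      refine monotone_nat_of_le_succ fun n => ?_
      rintro _ ⟨x, rfl⟩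
      refine ⟨N • x, ?_⟩
      simp only [LinearMap.lsmul_apply, natCast_zsmul]
      rw [pow_succ, mul_smul]⟩
  refine ⟨k, fun x => ?_⟩
  have h : LinearMap.range (LinearMap.lsmul ℤ M ((N ^ k : ℕ) : ℤ)) =
    LinearMap.range (LinearMap.lsmul ℤ M ((N ^ (k+1) : ℕ) : ℤ)) := hk (k+1) (by omega)
  have : N ^ k • x ∈ LinearMap.range (LinearMap.lsmul ℤ M ((N ^ k : ℕ) : ℤ)) := ⟨x, by simp [LinearMap.lsmul_apply, ← natCast_zsmul]⟩
  rw [h] at this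
  obtain ⟨y, hy⟩ := this
  exact ⟨y, by rw [← hy]; simp [LinearMap.lsmul_apply, ← natCast_zsmul]⟩

theorem nat_split (N : ℕ) : ∀ n : ℕ, 0 < n → ∃ d m j, n = d * m ∧ d ∣ N ^ j ∧ Nat.Coprime m N := by
    intro n
    induction n using Nat.strong_induction_on with
    | _ n ih =>
      intro hn
      by_cases hc : Nat.Coprime n N
      · exact ⟨1, n, 0, by simp, by simp, hc⟩
      · have hg : 1 < Nat.gcd n N := by
          have := Nat.gcd_pos_of_pos_left N hn
          unfold Nat.Coprime at hc; omega
        obtain ⟨q, hq⟩ := Nat.gcd_dvd_left n N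
        have hq0 : 0 < q := Nat.pos_of_ne_zero (by intro h0; rw [h0] at hq; omega)
        obtain ⟨d, m, j, h1, h2, h3⟩ := ih q (by nlinarith) hq0
        refine ⟨Nat.gcd n N * d, m, j + 1, ?_, ?_, h3⟩
        · rw [mul_assoc, ← h1]; exact hq
        · rw [pow_succ', ]; exact Nat.mul_dvd_mul (Nat.gcd_dvd_right _ _) h2

theorem ntors_div {D : Type*} [AddCommGroup D] {N : ℕ} (h : NTors N D) (hd : ∀ x : D, ∃ y, N • y = x) :
    IsDiv D := by
  have hdk : ∀ k : ℕ, ∀ x : D, ∃ y, N ^ k • y = x := by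
    intro k
    induction k with
    | zero => intro x; exact ⟨x, by simp⟩
    | succ k ih =>
      intro x
      obtain ⟨y, hy⟩ := ih x
      obtain ⟨z, hz⟩ := hd y
      exact ⟨z, by rw [pow_succ, mul_smul, hz, hy]⟩
  intro n hn x
  -- n = d * m, d | N^j, m coprime N
  obtain ⟨k, hk⟩ := h x
  obtain ⟨d, m, j, rfl, ⟨c, hc⟩, hm⟩ := nat_split N n hn
  obtain ⟨y, hy⟩ := hdk j x
  obtain ⟨l, hl⟩ := h (c • y)
  obtain ⟨a, b, hab⟩ := Nat.isCoprime_iff_coprime.2 (Nat.Coprime.pow_right l hm)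
  refine ⟨a • c • y, ?_⟩
  have h1 : (a * m : ℤ) • (c • y) = c • y := by
    have : (a * m : ℤ) = 1 - b * (N ^ l : ℕ) := by linarith
    rw [this, sub_smul, one_smul, mul_smul, natCast_zsmul, hl, smul_zero, sub_zero]
  calc (d * m) • a • c • y = d • ((a * m : ℤ) • (c • y)) := by
        rw [mul_smul, mul_comm a, mul_smul, natCast_zsmul]
    _ = x := by rw [h1, ← mul_smul, ← hc, hy]

theorem cernikov_of_artinian {M : Type*} [AddCommGroup M] [IsArtinian ℤ M] {N : ℕ} (hN : 0 < N)
    (h : NTors N M) : IsCernikov M := by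
  obtain ⟨k, hk⟩ := exists_stable_pow (M := M) N
  let f := LinearMap.lsmul ℤ M ((N ^ k : ℕ) : ℤ)
  have hf : ∀ x, f x = N ^ k • x := fun x => by simp [f, LinearMap.lsmul_apply, ← natCast_zsmul]
  let D := LinearMap.range f
  have hD : IsDiv D := by
    refine ntors_div (N := N) ?_ ?_
    · rintro ⟨x, hx⟩; obtain ⟨k, hk⟩ := h x; exact ⟨k, Subtype.ext hk⟩
    · rintro ⟨_, x, rfl⟩
      obtain ⟨y, hy⟩ := hk x
      refine ⟨⟨f y, y, rfl⟩, Subtype.ext ?_⟩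
      simp only [hf, Submodule.coe_smul_of_tower]
      rw [hy, pow_succ', mul_smul]
  obtain ⟨r, p, hp, ⟨e⟩⟩ := div_artinian_struct N hN h D hD
  refine ⟨D.toAddSubgroup, r, p, ?_, hp, ⟨e⟩⟩
  rw [AddSubgroup.index_ne_zero_iff_finite]
  refine (finite_of_artinian_bounded (M := M ⧸ D) (n := N ^ k) (by positivity) ?_ : Finite (M ⧸ D))
  intro x
  obtain ⟨x, rfl⟩ := Submodule.Quotient.mk_surjective _ x
  rw [← Submodule.Quotient.mk_smul, Submodule.Quotient.mk_eq_zero, ← hf]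
  exact ⟨x, rfl⟩


theorem omega_bound {B : Type*} [AddCommGroup B] [IsArtinian ℤ B] {ω : Set ℕ}
    (h : IsOmegaTorsion ω B) : ∃ N : ℕ, 0 < N ∧ (∀ p : ℕ, p.Prime → p ∣ N → p ∈ ω) ∧ NTors N B := by
  let C : ℕ → Submodule ℤ B := fun N =>
    { carrier := {b | ∃ m : ℕ, Nat.Coprime m N ∧ m • b = 0}
      zero_mem' := ⟨1, by simp, by simp⟩
      add_mem' := by
        rintro a b ⟨m, hm, ha⟩ ⟨n, hn, hb⟩
        refine ⟨m * n, Nat.Coprime.mul_left hm hn, ?_⟩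
        rw [smul_add, mul_smul m n b, hb, mul_comm, mul_smul, ha]; simp
      smul_mem' := by
        rintro c a ⟨m, hm, ha⟩
        exact ⟨m, hm, by rw [smul_comm, ha, smul_zero]⟩ }
  obtain ⟨_, ⟨N, ⟨hN, hNω⟩, rfl⟩, hmin⟩ := IsArtinian.set_has_minimal
    (C '' {N : ℕ | 0 < N ∧ ∀ p : ℕ, p.Prime → p ∣ N → p ∈ ω})
    ⟨_, 1, ⟨by norm_num, fun p hp h1 => (hp.one_lt.ne' (Nat.dvd_one.1 h1)).elim⟩, rfl⟩
  have hC : ∀ b ∈ C N, b = 0 := by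
    intro b hb
    obtain ⟨h1, h2⟩ := h b
    have hpos : 0 < addOrderOf b := addOrderOf_pos_iff.2 h1
    have hle : C (N * addOrderOf b) ≤ C N := by
      rintro x ⟨m, hm, hx⟩
      exact ⟨m, Nat.Coprime.coprime_mul_right_right hm, hx⟩
    have := hmin (C (N * addOrderOf b)) ⟨_, ⟨by positivity, fun p hp hd => by
      rcases (hp.dvd_mul).1 hd with hd | hd
      · exact hNω p hp hd
      · exact h2 p hp (by exact_mod_cast hd)⟩, rfl⟩
    have heq : C (N * addOrderOf b) = C N := by
      by_contra hne
      exact this (lt_of_le_of_ne hle hne)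
    rw [← heq] at hb
    obtain ⟨m, hm, hmb⟩ := hb
    have hd := addOrderOf_dvd_of_nsmul_eq_zero hmb
    have h1' : addOrderOf b = 1 := by
      have := Nat.Coprime.eq_one_of_dvd (Nat.Coprime.coprime_mul_left_right hm).symm hd
      exact this
    simpa using h1'
  refine ⟨N, hN, hNω, fun x => ?_⟩
  obtain ⟨h1, h2⟩ := h x
  obtain ⟨d, m, j, he, ⟨c, hc⟩, hm⟩ := nat_split N (addOrderOf x) (addOrderOf_pos_iff.2 h1)
  have : d • x = 0 := hC _ ⟨m, hm, by rw [← mul_smul, mul_comm, ← he, addOrderOf_nsmul_eq_zero]⟩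
  exact ⟨j, by rw [hc, mul_comm, mul_smul, this, smul_zero]⟩

theorem omega_of_ntors {E : Type*} [AddCommGroup E] {ω : Set ℕ} {N : ℕ} (hN : 0 < N)
    (hω : ∀ p : ℕ, p.Prime → p ∣ N → p ∈ ω) (h : NTors N E) : IsOmegaTorsion ω E := by
  intro a
  obtain ⟨k, hk⟩ := h a
  refine ⟨isOfFinAddOrder_iff_nsmul_eq_zero.2 ⟨N ^ k, by positivity, hk⟩, fun p hp hd => ?_⟩
  have hd' : p ∣ addOrderOf a := by exact_mod_cast hd
  exact hω p hp (hp.dvd_of_dvd_pow (hd'.trans (addOrderOf_dvd_of_nsmul_eq_zero hk)))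

end

noncomputable section
set_option linter.style.haveILetI false

def InC (N : ℕ) (E : Type*) [AddCommGroup E] : Prop := IsArtinian ℤ E ∧ NTors N E

theorem NTors.of_injective {N : ℕ} {E F : Type*} [AddCommGroup E] [AddCommGroup F] (f : E →+ F)
    (hf : Function.Injective f) (h : NTors N F) : NTors N E := fun x => by
  obtain ⟨k, hk⟩ := h (f x)
  exact ⟨k, hf (by rw [map_nsmul, hk, map_zero])⟩

theorem NTors.of_surjective {N : ℕ} {E F : Type*} [AddCommGroup E] [AddCommGroup F] (f : E →+ F)
    (hf : Function.Surjective f) (h : NTors N E) : NTors N F := fun x => by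
  obtain ⟨x, rfl⟩ := hf x
  obtain ⟨k, hk⟩ := h x
  exact ⟨k, by rw [← map_nsmul, hk, map_zero]⟩

theorem NTors.of_exact {N : ℕ} {E F G : Type*} [AddCommGroup E] [AddCommGroup F] [AddCommGroup G]
    (f : E →+ F) (g : F →+ G) (hfg : Function.Exact f g) (hE : NTors N E) (hG : NTors N G) :
    NTors N F := fun x => by
  obtain ⟨k, hk⟩ := hG (g x)
  rw [← map_nsmul] at hk
  obtain ⟨y, hy⟩ := (hfg _).1 hk
  obtain ⟨l, hl⟩ := hE y
  exact ⟨l + k, by rw [pow_add, mul_smul, ← hy, ← map_nsmul, hl, map_zero]⟩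

theorem InC.of_injective {N : ℕ} {E F : Type*} [AddCommGroup E] [AddCommGroup F] (f : E →+ F)
    (hf : Function.Injective f) (h : InC N F) : InC N E := by
  haveI := h.1
  exact ⟨isArtinian_of_injective f.toIntLinearMap hf, h.2.of_injective f hf⟩

theorem InC.of_surjective {N : ℕ} {E F : Type*} [AddCommGroup E] [AddCommGroup F] (f : E →+ F)
    (hf : Function.Surjective f) (h : InC N E) : InC N F := by
  haveI := h.1
  exact ⟨isArtinian_of_surjective E f.toIntLinearMap hf, h.2.of_surjective f hf⟩

theorem InC.of_exact {N : ℕ} {E F G : Type*} [AddCommGroup E] [AddCommGroup F] [AddCommGroup G]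
    (f : E →+ F) (g : F →+ G) (hfg : Function.Exact f g) (hE : InC N E) (hG : InC N G) :
    InC N F := by
  haveI := hE.1
  haveI := hG.1
  exact ⟨isArtinian_of_range_eq_ker f.toIntLinearMap g.toIntLinearMap
    (by ext x; exact (hfg x).symm), NTors.of_exact f g hfg hE.2 hG.2⟩

theorem InC.of_subsingleton {N : ℕ} {E : Type*} [AddCommGroup E] [Subsingleton E] : InC N E :=
  ⟨inferInstance, fun x => ⟨0, Subsingleton.elim _ _⟩⟩

theorem InC.pi {N : ℕ} {E : Type*} [AddCommGroup E] (h : InC N E) (r : ℕ) : InC N (Fin r → E) := by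
  haveI := h.1
  refine ⟨inferInstance, fun x => ?_⟩
  choose k hk using fun i => h.2 (x i)
  refine ⟨∑ i, k i, funext fun i => ?_⟩
  obtain ⟨d, hd⟩ : N ^ k i ∣ N ^ (∑ i, k i) :=
    pow_dvd_pow N (Finset.single_le_sum (f := k) (fun _ _ => Nat.zero_le _) (Finset.mem_univ i))
  rw [Pi.smul_apply, hd, mul_comm, mul_smul, hk, smul_zero]; rfl

open Abelian

instance hasExtModule (R : Type) [Ring R] : HasExt.{0} (ModuleCat.{0} R) := inferInstance


section ExtBasics
variable {R : Type} [CommRing R]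

abbrev EX (R : Type) [CommRing R] (A B : Type) [AddCommGroup A] [Module R A] [AddCommGroup B] [Module R B]
    (n : ℕ) : Type := Abelian.Ext (ModuleCat.of R A) (ModuleCat.of R B) n

variable {A B C K : Type} [AddCommGroup A] [Module R A] [AddCommGroup B] [Module R B]
  [AddCommGroup C] [Module R C] [AddCommGroup K] [Module R K]

abbrev sesOf (f : K →ₗ[R] A) (g : A →ₗ[R] C) (h : Function.Exact f g) : ShortComplex (ModuleCat.{0} R) :=
  ShortComplex.mk (ModuleCat.ofHom f) (ModuleCat.ofHom g) (by
    ext x; exact h.apply_apply_eq_zero x)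

theorem sesOf_exact (f : K →ₗ[R] A) (g : A →ₗ[R] C) (h : Function.Exact f g)
    (hf : Function.Injective f) (hg : Function.Surjective g) : (sesOf f g h).ShortExact := by
  haveI : Mono (sesOf f g h).f := (ModuleCat.mono_iff_injective _).2 hf
  haveI : Epi (sesOf f g h).g := (ModuleCat.epi_iff_surjective _).2 hg
  refine ShortComplex.ShortExact.mk ?_
  rw [ShortComplex.ShortExact.moduleCat_exact_iff_function_exact]
  exact h

abbrev exPre (f : K →ₗ[R] A) (B : Type) [AddCommGroup B] [Module R B] (n : ℕ) : EX R A B n →+ EX R K B n :=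
  (Ext.mk₀ (ModuleCat.ofHom f)).precomp (ModuleCat.of R B) (zero_add n)

abbrev exPost (f : B →ₗ[R] C) (A : Type) [AddCommGroup A] [Module R A] (n : ℕ) : EX R A B n →+ EX R A C n :=
  (Ext.mk₀ (ModuleCat.ofHom f)).postcomp (ModuleCat.of R A) (add_zero n)

theorem ex_mid_left (f : K →ₗ[R] A) (g : A →ₗ[R] C) (h : Function.Exact f g)
    (hf : Function.Injective f) (hg : Function.Surjective g) (B : Type) [AddCommGroup B] [Module R B] (n : ℕ) :
    Function.Exact (exPre g B n) (exPre f B n) :=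
  (ShortComplex.ab_exact_iff_function_exact _).1
    (Ext.contravariant_sequence_exact₂' (sesOf_exact f g h hf hg) (ModuleCat.of R B) n)

theorem ex_conn_left (f : K →ₗ[R] A) (g : A →ₗ[R] C) (h : Function.Exact f g)
    (hf : Function.Injective f) (hg : Function.Surjective g) (B : Type) [AddCommGroup B] [Module R B] (n : ℕ) :
    ∃ d : EX R K B n →+ EX R C B (n + 1), Function.Exact (exPre f B n) d ∧ Function.Exact d (exPre g B (n+1)) :=
  ⟨(sesOf_exact f g h hf hg).extClass.precomp (ModuleCat.of R B) (add_comm 1 n),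
  (ShortComplex.ab_exact_iff_function_exact _).1
    (Ext.contravariant_sequence_exact₁' (sesOf_exact f g h hf hg) (ModuleCat.of R B) n (n+1) (add_comm 1 n)),
  (ShortComplex.ab_exact_iff_function_exact _).1
    (Ext.contravariant_sequence_exact₃' (sesOf_exact f g h hf hg) (ModuleCat.of R B) n (n+1) (add_comm 1 n))⟩

theorem ex_mid_right (f : K →ₗ[R] A) (g : A →ₗ[R] C) (h : Function.Exact f g)
    (hf : Function.Injective f) (hg : Function.Surjective g) (B : Type) [AddCommGroup B] [Module R B] (n : ℕ) :
    Function.Exact (exPost f B n) (exPost g B n) :=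
  (ShortComplex.ab_exact_iff_function_exact _).1
    (Ext.covariant_sequence_exact₂' (ModuleCat.of R B) (sesOf_exact f g h hf hg) n)

theorem ex_conn_right (f : K →ₗ[R] A) (g : A →ₗ[R] C) (h : Function.Exact f g)
    (hf : Function.Injective f) (hg : Function.Surjective g) (B : Type) [AddCommGroup B] [Module R B] (n : ℕ) :
    ∃ d : EX R B C n →+ EX R B K (n + 1), Function.Exact (exPost g B n) d ∧ Function.Exact d (exPost f B (n+1)) :=
  ⟨(sesOf_exact f g h hf hg).extClass.postcomp (ModuleCat.of R B) rfl,
  (ShortComplex.ab_exact_iff_function_exact _).1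
    (Ext.covariant_sequence_exact₃' (ModuleCat.of R B) (sesOf_exact f g h hf hg) n (n+1) rfl),
  (ShortComplex.ab_exact_iff_function_exact _).1
    (Ext.covariant_sequence_exact₁' (ModuleCat.of R B) (sesOf_exact f g h hf hg) n (n+1) rfl)⟩

def ex0 (R : Type) [CommRing R] (A B : Type) [AddCommGroup A] [Module R A] [AddCommGroup B] [Module R B] :
    EX R A B 0 ≃+ (A →ₗ[R] B) := Ext.addEquiv₀.trans ModuleCat.homAddEquiv

theorem ex_fg_zero (N : ℕ) [Module.Finite R A] (hB : InC N B) : InC N (EX R A B 0) := by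
  obtain ⟨k, s, hs⟩ := Module.Finite.exists_fin (R := R) (M := A)
  refine (hB.pi k).of_injective (AddMonoidHom.mk' (fun e i => ex0 R A B e (s i)) ?_) ?_
  · intro a b; ext i; simp
  · intro a b hab
    apply (ex0 R A B).injective
    apply LinearMap.ext_on_range hs
    intro i
    exact congrFun hab i

theorem ex_fg [IsNoetherianRing R] (N : ℕ) (hB : InC N B) (n : ℕ) : ∀ (A : Type) [AddCommGroup A] [Module R A]
    [Module.Finite R A], InC N (EX R A B n) := by
  induction n with
  | zero => intro A _ _ _; exact ex_fg_zero N hB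
  | succ n ih =>
    intro A _ _ _
    obtain ⟨k, g, hg⟩ := Module.Finite.exists_fin' R A
    obtain ⟨d, -, hd⟩ := ex_conn_left (LinearMap.ker g).subtype g (LinearMap.exact_subtype_ker_map g)
      (Submodule.injective_subtype _) hg B n
    haveI : Projective (ModuleCat.of R (Fin k → R)) :=
      ModuleCat.projective_of_free (Pi.basisFun R (Fin k))
    haveI : Subsingleton (EX R (Fin k → R) B (n+1)) := Ext.subsingleton_of_projective _ _ _
    exact InC.of_exact _ _ hd (ih _) InC.of_subsingleton

end ExtBasics
end

noncomputable section
set_option linter.style.haveILetI false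
open Abelian

section Inj
variable {R : Type} [CommRing R]

theorem ntors_bounded_of_fg {N : ℕ} {M : Type} [AddCommGroup M] [Module R M] [Module.Finite R M]
    (h : NTors N M) : ∃ k : ℕ, ∀ x : M, N ^ k • x = 0 := by
  obtain ⟨r, s, hs⟩ := Module.Finite.exists_fin (R := R) (M := M)
  choose k hk using fun i => h (s i)
  refine ⟨∑ i, k i, fun x => ?_⟩
  have : (LinearMap.lsmul R M ((N ^ (∑ i, k i) : ℕ) : R)) = 0 := by
    apply LinearMap.ext_on_range hs
    intro i
    obtain ⟨d, hd⟩ : N ^ k i ∣ N ^ (∑ i, k i) :=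
      pow_dvd_pow N (Finset.single_le_sum (f := k) (fun _ _ => Nat.zero_le _) (Finset.mem_univ i))
    rw [LinearMap.lsmul_apply, Nat.cast_smul_eq_nsmul, hd, mul_comm, mul_smul, hk, smul_zero]; rfl
  have h2 := LinearMap.congr_fun this x
  rwa [LinearMap.lsmul_apply, Nat.cast_smul_eq_nsmul] at h2

def torsPart (R : Type) [CommRing R] (N : ℕ) (M : Type*) [AddCommGroup M] [Module R M] : Submodule R M where
  carrier := {x | ∃ k : ℕ, N ^ k • x = 0}
  zero_mem' := ⟨0, by simp⟩
  add_mem' := by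
    rintro a b ⟨m, hm⟩ ⟨n, hn⟩
    exact ⟨m + n, by rw [smul_add, pow_add, mul_smul (N^m) _ b, hn, mul_comm, mul_smul, hm]; simp⟩
  smul_mem' := by
    rintro c a ⟨m, hm⟩
    exact ⟨m, by rw [smul_comm, hm, smul_zero]⟩

theorem torsPart_ntors (N : ℕ) (M : Type*) [AddCommGroup M] [Module R M] : NTors N (torsPart R N M) := by
  rintro ⟨x, k, hk⟩
  exact ⟨k, Subtype.ext hk⟩

theorem torsPart_baer [IsNoetherianRing R] (N : ℕ) (I : Type) [AddCommGroup I] [Module R I] (hI : Module.Baer R I) :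
    Module.Baer R (torsPart R N I) := by
  intro a g
  obtain ⟨k, hk⟩ : ∃ k : ℕ, ∀ x : a, N ^ k • g x = 0 := by
    obtain ⟨k, hk⟩ := ntors_bounded_of_fg (R := R) (M := LinearMap.range g)
      ((torsPart_ntors (R := R) N I).of_injective (LinearMap.range g).subtype.toAddMonoidHom
        (Submodule.injective_subtype _))
    exact ⟨k, fun x => congrArg Subtype.val (hk ⟨g x, x, rfl⟩)⟩
  obtain ⟨k0, hk0⟩ := Ideal.exists_pow_inf_eq_pow_smul (Ideal.span {(N : R)}) (N := (a : Submodule R R))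
  have hAR : ∀ x : a, (x : R) ∈ Ideal.span {(N : R) ^ (k + k0)} → g x = 0 := by
    intro x hx
    have h1 : (x : R) ∈ (Ideal.span {(N : R)} ^ (k + k0) • ⊤ ⊓ a : Submodule R R) := by
      refine ⟨?_, x.2⟩
      rw [Ideal.span_singleton_pow]
      simpa using hx
    rw [hk0 (k + k0) (by omega), Nat.add_sub_cancel, Ideal.span_singleton_pow] at h1
    have h2 : (x : R) ∈ Ideal.span {(N : R) ^ k} • (a : Submodule R R) :=
      smul_mono_right (Ideal.span {(N : R) ^ k}) (inf_le_right : _ ≤ (a : Submodule R R)) h1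
    rw [Submodule.ideal_span_singleton_smul] at h2
    obtain ⟨y, hy, hyx⟩ := h2
    have : x = N ^ k • (⟨y, hy⟩ : a) := by
      ext
      rw [← hyx]; simp
    rw [this, map_nsmul, hk]
  let J : Ideal R := Ideal.span {(N : R) ^ (k + k0)}
  let q : a →ₗ[R] R ⧸ J := J.mkQ ∘ₗ a.subtype
  let g1 : a →ₗ[R] I := (torsPart R N I).subtype ∘ₗ g
  have hker : LinearMap.ker q ≤ LinearMap.ker g1 := by
    intro x hx
    have : (x : R) ∈ J := by
      rw [LinearMap.mem_ker] at hx
      exact (Submodule.Quotient.mk_eq_zero J).1 hx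
    rw [LinearMap.mem_ker]
    simp [g1, hAR x this]
  obtain ⟨h, hh⟩ := Module.Baer.extension_property hI ((LinearMap.ker q).liftQ q le_rfl)
    (LinearMap.ker_eq_bot.1 (Submodule.ker_liftQ_eq_bot _ _ _ le_rfl)) ((LinearMap.ker q).liftQ g1 hker)
  let y : I := h (J.mkQ 1)
  have hy : y ∈ torsPart R N I := by
    refine ⟨k + k0, ?_⟩
    rw [← map_nsmul, ← map_nsmul]
    have : J.mkQ (N ^ (k + k0) • (1 : R)) = 0 := by
      rw [Submodule.mkQ_apply, Submodule.Quotient.mk_eq_zero]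
      simp [J, Ideal.mem_span_singleton_self]
    rw [this, map_zero]
  refine ⟨LinearMap.toSpanSingleton R _ ⟨y, hy⟩, fun x hx => ?_⟩
  ext
  have h1 := LinearMap.congr_fun hh (Submodule.Quotient.mk ⟨x, hx⟩)
  simp only [LinearMap.comp_apply, Submodule.liftQ_apply] at h1
  have h2 : q ⟨x, hx⟩ = x • J.mkQ 1 := by
    rw [← map_smul]; simp [q]
  rw [h2, map_smul] at h1
  exact h1

theorem exists_inj [IsNoetherianRing R] (N : ℕ) (X : Type) [AddCommGroup X] [Module R X] (hX : NTors N X) :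
    ∃ (J : Type) (_ : AddCommGroup J) (_ : Module R J) (i : X →ₗ[R] J), Function.Injective i ∧
      NTors N J ∧ Injective (ModuleCat.of R J) := by
  let I := Injective.under (ModuleCat.of R X)
  haveI : Injective (ModuleCat.of R I) := Injective.injective_under (ModuleCat.of R X)
  have hI : Module.Baer R I := by
    have : Module.Injective R I := (Module.injective_iff_injective_object R I).2 inferInstance
    exact Module.Baer.of_injective this
  let i : X →ₗ[R] I := (Injective.ι (ModuleCat.of R X)).hom
  have hi : Function.Injective i := (ModuleCat.mono_iff_injective _).1 inferInstance
  refine ⟨torsPart R N I, inferInstance, inferInstance, i.codRestrict _ ?_, ?_, torsPart_ntors N I, ?_⟩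
  · intro x
    obtain ⟨k, hk⟩ := hX x
    exact ⟨k, by rw [← map_nsmul, hk, map_zero]⟩
  · intro x y hxy
    exact hi (congrArg Subtype.val hxy)
  · rw [← Module.injective_iff_injective_object]
    exact (torsPart_baer N I hI).injective

theorem ex_coprime_zero [IsNoetherianRing R] {N : ℕ} {T : Type} [AddCommGroup T] [Module R T]
    (hT : ∀ t : T, ∃ m : ℕ, Nat.Coprime m N ∧ m • t = 0) (n : ℕ) :
    ∀ (X : Type) [AddCommGroup X] [Module R X], NTors N X → Subsingleton (EX R T X n) := by
  induction n with
  | zero =>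
    intro X _ _ hX
    refine (ex0 R T X).toEquiv.subsingleton_congr.2 ⟨fun f g => ?_⟩
    have : ∀ f : T →ₗ[R] X, f = 0 := by
      intro f
      ext t
      obtain ⟨m, hm, hmt⟩ := hT t
      obtain ⟨k, hk⟩ := hX (f t)
      obtain ⟨a, b, hab⟩ := Nat.isCoprime_iff_coprime.2 (Nat.Coprime.pow_right k hm)
      have h1 : m • f t = 0 := by rw [← map_nsmul, hmt, map_zero]
      rw [← one_smul ℤ (f t), ← hab, add_smul, mul_smul, mul_smul, natCast_zsmul, natCast_zsmul, h1, hk]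
      simp
    rw [this f, this g]
  | succ n ih =>
    intro X _ _ hX
    obtain ⟨J, _, _, i, hi, hJ, hinj⟩ := exists_inj (R := R) N X hX
    obtain ⟨d, -, hd⟩ := ex_conn_right i (LinearMap.range i).mkQ (LinearMap.exact_map_mkQ_range i) hi
      (Submodule.mkQ_surjective _) T n
    haveI : Subsingleton (EX R T J (n+1)) := Ext.subsingleton_of_injective _ _ _
    haveI := ih (J ⧸ LinearMap.range i)
      (hJ.of_surjective (LinearMap.range i).mkQ.toAddMonoidHom (Submodule.mkQ_surjective _))
    refine ⟨fun a b => ?_⟩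
    obtain ⟨a', rfl⟩ := (hd a).1 (Subsingleton.elim _ _)
    obtain ⟨b', rfl⟩ := (hd b).1 (Subsingleton.elim _ _)
    rw [Subsingleton.elim a' b']

end Inj
end

noncomputable section
set_option linter.style.haveILetI false
open Abelian

def NRing (R : Type) [CommRing R] (N : ℕ) : Subring (ℕ → R) where
  carrier := {a | ∀ k, ((N : R) ^ k) ∣ a (k + 1) - a k}
  zero_mem' := by intro k; simp
  one_mem' := by intro k; simp
  add_mem' := by
    intro a b ha hb k
    have := dvd_add (ha k) (hb k)
    simpa [sub_add_sub_comm] using this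
  neg_mem' := by
    intro a ha k
    have := (dvd_neg (a := (N : R) ^ k)).2 (ha k)
    simp only [Pi.neg_apply]
    convert this using 1; ring
  mul_mem' := by
    intro a b ha hb k
    have := dvd_add ((ha k).mul_right (b (k+1))) ((hb k).mul_left (a k))
    simp only [Pi.mul_apply]
    convert this using 1; ring

section Act
variable {R : Type} [CommRing R] {N : ℕ}

theorem NRing.dvd (a : NRing R N) (j k : ℕ) (h : j ≤ k) : ((N : R) ^ j) ∣ a.1 k - a.1 j := by
  induction k, h using Nat.le_induction with
  | base => simp
  | succ k hk ih =>
    have h1 := (pow_dvd_pow (N : R) hk).trans (a.2 k)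
    have := dvd_add h1 ih
    convert this using 1; ring

theorem pow_kill {X : Type} [AddCommGroup X] [Module R X] {j : ℕ} {r : R} {x : X} (hr : ((N : R) ^ j) ∣ r)
    (hx : N ^ j • x = 0) : r • x = 0 := by
  obtain ⟨c, rfl⟩ := hr
  rw [mul_comm, mul_smul, ← Nat.cast_pow, Nat.cast_smul_eq_nsmul, hx, smul_zero]

theorem NRing.smul_eq (a : NRing R N) {X : Type} [AddCommGroup X] [Module R X] {x : X} {j k : ℕ}
    (hj : N ^ j • x = 0) (hk : N ^ k • x = 0) : a.1 j • x = a.1 k • x := by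
  wlog h : j ≤ k generalizing j k
  · exact (this hk hj (le_of_not_ge h)).symm
  have := pow_kill (NRing.dvd a j k h) hj
  rw [sub_smul, sub_eq_zero] at this
  exact this.symm

theorem npow_mono {X : Type} [AddCommGroup X] {x : X} {j k : ℕ} (h : N ^ j • x = 0) (hjk : j ≤ k) :
    N ^ k • x = 0 := by
  obtain ⟨d, rfl⟩ := Nat.exists_eq_add_of_le hjk
  rw [pow_add, mul_comm, mul_smul, h, smul_zero]

def nact {X : Type} [AddCommGroup X] [Module R X] (hX : NTors N X) (a : NRing R N) : X →ₗ[R] X where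
  toFun x := a.1 (hX x).choose • x
  map_add' x y := by
    have hx := npow_mono (hX x).choose_spec (le_max_left _ (hX y).choose)
    have hy := npow_mono (hX y).choose_spec (le_max_right (hX x).choose _)
    rw [NRing.smul_eq a (hX x).choose_spec hx, NRing.smul_eq a (hX y).choose_spec hy, ← smul_add]
    exact NRing.smul_eq a (hX (x + y)).choose_spec (by rw [smul_add, hx, hy, add_zero])
  map_smul' r x := by
    have hx := (hX x).choose_spec
    rw [NRing.smul_eq a (hX (r • x)).choose_spec (by rw [smul_comm, hx, smul_zero]), smul_comm]
    rfl

theorem nact_eq {X : Type} [AddCommGroup X] [Module R X] (hX : NTors N X) (a : NRing R N) {x : X} {j : ℕ}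
    (h : N ^ j • x = 0) : nact hX a x = a.1 j • x := NRing.smul_eq a (hX x).choose_spec h

theorem nact_nat {X Y : Type} [AddCommGroup X] [Module R X] [AddCommGroup Y] [Module R Y] (hX : NTors N X)
    (hY : NTors N Y) (a : NRing R N) (f : X →ₗ[R] Y) : f ∘ₗ nact hX a = nact hY a ∘ₗ f := by
  ext x
  obtain ⟨k, hk⟩ := hX x
  simp only [LinearMap.comp_apply]
  rw [nact_eq hX a hk, nact_eq hY a (j := k) (by rw [← map_nsmul, hk, map_zero]), map_smul]

theorem nact_ext [IsNoetherianRing R] {X : Type} [AddCommGroup X] [Module R X] (hX : NTors N X)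
    (a : NRing R N) (n : ℕ) :
    ∀ (Y : Type) [AddCommGroup Y] [Module R Y] (hY : NTors N Y) (e : EX R X Y n),
      exPre (nact hX a) Y n e = exPost (nact hY a) X n e := by
  induction n with
  | zero =>
    intro Y _ _ hY e
    rw [← Ext.mk₀_homEquiv₀_apply e]
    change (Ext.mk₀ _).comp (Ext.mk₀ _) (zero_add 0) = (Ext.mk₀ _).comp (Ext.mk₀ _) (add_zero 0)
    rw [Ext.mk₀_comp_mk₀, Ext.mk₀_comp_mk₀]
    congr 1
    have := nact_nat hX hY a (Ext.homEquiv₀ e).hom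
    ext x
    exact LinearMap.congr_fun this x
  | succ n ih =>
    intro Y _ _ hY e
    obtain ⟨J, _, _, i, hi, hJ, hinj⟩ := exists_inj (R := R) N Y hY
    have hC : NTors N (J ⧸ LinearMap.range i) :=
      hJ.of_surjective (LinearMap.range i).mkQ.toAddMonoidHom (Submodule.mkQ_surjective _)
    have hS := sesOf_exact i (LinearMap.range i).mkQ (LinearMap.exact_map_mkQ_range i) hi
      (Submodule.mkQ_surjective _)
    haveI : Subsingleton (EX R X J (n+1)) := Ext.subsingleton_of_injective _ _ _
    obtain ⟨e', he'⟩ := Ext.covariant_sequence_exact₁ (ModuleCat.of R X) hS e (Subsingleton.elim (α := EX R X J (n+1)) _ _)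
      (n₀ := n) rfl
    have h1 := ih (J ⧸ LinearMap.range i) hC e'
    let φ : sesOf i (LinearMap.range i).mkQ (LinearMap.exact_map_mkQ_range i) ⟶
        sesOf i (LinearMap.range i).mkQ (LinearMap.exact_map_mkQ_range i) :=
      { τ₁ := ModuleCat.ofHom (nact hY a)
        τ₂ := ModuleCat.ofHom (nact hJ a)
        τ₃ := ModuleCat.ofHom (nact hC a)
        comm₁₂ := by
          ext x; exact (LinearMap.congr_fun (nact_nat hY hJ a i) x)
        comm₂₃ := by
          ext x; exact (LinearMap.congr_fun (nact_nat hJ hC a (LinearMap.range i).mkQ) x) }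
    have h2 := ShortComplex.ShortExact.extClass_naturality hS hS φ
    change (Ext.mk₀ _).comp e (zero_add _) = e.comp (Ext.mk₀ _) (add_zero _)
    change (Ext.mk₀ _).comp e' (zero_add _) = e'.comp (Ext.mk₀ _) (add_zero _) at h1
    rw [← he', ← Ext.comp_assoc _ _ _ (zero_add n) _ (by omega), h1,
      Ext.comp_assoc_of_second_deg_zero, Ext.comp_assoc _ _ _ _ (add_zero 1) (by omega)]
    congr 1
    exact h2.symm

theorem kill_ext [IsNoetherianRing R] {X Y : Type} [AddCommGroup X] [Module R X] (hX : NTors N X)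
    [AddCommGroup Y] [Module R Y] (hY : NTors N Y) (a : NRing R N) (m : ℕ)
    (h1 : ∀ x, nact hX a x = 0) (h2 : ∀ y, nact hY a y = m • y) (n : ℕ) (e : EX R X Y n) : m • e = 0 := by
  have h := nact_ext hX a n Y hY e
  have e1 : nact hX a = 0 := LinearMap.ext h1
  have e2 : nact hY a = m • LinearMap.id := LinearMap.ext h2
  rw [e1, e2] at h
  have h3 : exPre (0 : X →ₗ[R] X) Y n e = 0 := by
    change (Ext.mk₀ _).comp e (zero_add _) = 0
    rw [ModuleCat.ofHom_zero, Ext.mk₀_zero, Ext.zero_comp]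
  have h4 : exPost (m • LinearMap.id : Y →ₗ[R] Y) X n e = m • e := by
    change e.comp (Ext.mk₀ _) (add_zero _) = m • e
    have : Ext.mk₀ (ModuleCat.ofHom (m • LinearMap.id : Y →ₗ[R] Y)) = m • Ext.mk₀ (𝟙 (ModuleCat.of R Y)) := by
      have := map_nsmul (Ext.addEquiv₀ (X := ModuleCat.of R Y) (Y := ModuleCat.of R Y)).symm m (𝟙 (ModuleCat.of R Y))
      exact this
    rw [this]
    have := map_nsmul (e.precomp (ModuleCat.of R Y) (add_zero n)) m (Ext.mk₀ (𝟙 (ModuleCat.of R Y)))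
    refine this.trans ?_
    congr 1
    exact Ext.comp_mk₀_id e
  rw [← h4, ← h, h3]

end Act
end

noncomputable section
set_option linter.style.haveILetI false

section Core
variable {Λ : Type} [CommRing Λ] (ν : Λ)

theorem core1 {V : Type} [AddCommGroup V] [Module Λ V] (T : Submodule Λ V) [Module.Finite Λ T]
    (hinj : ∀ v : V, ν • v = 0 → v = 0) (hsurj : ∀ v : V, ∃ w, ν • w = v)
    (hex : ∀ v : V, ∃ j : ℕ, ν ^ j • v ∈ T) (m : Ideal (Localization (Submonoid.powers ν))) [hm : m.IsMaximal]
    (h : ∀ a : Λ, (∀ t ∈ T, a • t = 0) → algebraMap Λ (Localization (Submonoid.powers ν)) a ∈ m) :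
    ∃ f : V →ₗ[Λ] (Localization (Submonoid.powers ν) ⧸ m), Function.Surjective f := by
  let S := Localization (Submonoid.powers ν)
  have hinjk : ∀ (k : ℕ) (v : V), ν ^ k • v = 0 → v = 0 := by
    intro k
    induction k with
    | zero => intro v hv; simpa using hv
    | succ k ih => intro v hv; rw [pow_succ', mul_smul] at hv; exact ih v (hinj _ hv)
  have hsurjk : ∀ (k : ℕ) (v : V), ∃ w, ν ^ k • w = v := by
    intro k
    induction k with
    | zero => intro v; exact ⟨v, by simp⟩
    | succ k ih => 
      intro v
      obtain ⟨w, hw⟩ := ih v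
      obtain ⟨u, hu⟩ := hsurj w
      exact ⟨u, by rw [pow_succ, mul_smul, hu, hw]⟩
  haveI hloc : IsLocalizedModule (Submonoid.powers ν) T.subtype := by
    refine ⟨?_, ?_, ?_⟩
    · rintro ⟨_, k, rfl⟩
      rw [Module.End.isUnit_iff]
      constructor
      · rw [injective_iff_map_eq_zero]
        intro v hv
        exact hinjk k v hv
      · intro v
        exact hsurjk k v
    · intro v
      obtain ⟨j, hj⟩ := hex v
      exact ⟨(⟨_, hj⟩, ⟨ν ^ j, j, rfl⟩), rfl⟩
    · intro x y hxy
      exact ⟨1, by rw [Subtype.ext hxy]⟩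
  let LT := LocalizedModule (Submonoid.powers ν) T
  haveI : Module.Finite S LT := Module.Finite.of_isLocalizedModule (Submonoid.powers ν) (Rₚ := S) (LocalizedModule.mkLinearMap (Submonoid.powers ν) T)
  have hne : (m • ⊤ : Submodule S LT) ≠ ⊤ := by
    intro htop
    obtain ⟨r, hr, hr0⟩ := Submodule.exists_sub_one_mem_and_smul_eq_zero_of_fg_of_le_smul m (⊤ : Submodule S LT)
      Module.Finite.fg_top (by rw [htop])
    obtain ⟨⟨a, s⟩, hs⟩ := IsLocalization.surj (Submonoid.powers ν) r
    simp only at hs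
    have ha : ∀ t ∈ T, a • t = 0 := by
      intro t ht
      have h1 : (algebraMap Λ S a) • (LocalizedModule.mkLinearMap (Submonoid.powers ν) T ⟨t, ht⟩) = 0 := by
        rw [← hs, mul_comm, mul_smul, hr0 _ trivial, smul_zero]
      rw [algebraMap_smul, ← map_smul] at h1
      rw [IsLocalizedModule.eq_zero_iff (Submonoid.powers ν)] at h1
      obtain ⟨⟨_, k, rfl⟩, hk⟩ := h1
      exact hinjk k _ (congrArg Subtype.val hk)
    have h2 := h a ha
    rw [← hs] at h2
    have hu : IsUnit (algebraMap Λ S s) := IsLocalization.map_units S s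
    have hrm : r ∈ m := by
      obtain ⟨u, hu⟩ := hu
      have := m.mul_mem_right (↑u⁻¹) h2
      rwa [← hu, mul_assoc, Units.mul_inv, mul_one] at this
    apply hm.ne_top
    rw [Ideal.eq_top_iff_one]
    have := m.sub_mem hrm hr
    simpa using this
  letI : Field (S ⧸ m) := Ideal.Quotient.field m
  obtain ⟨w, hw⟩ : ∃ w : LT ⧸ (m • ⊤ : Submodule S LT), w ≠ 0 := by
    haveI : Nontrivial (LT ⧸ (m • ⊤ : Submodule S LT)) := Submodule.Quotient.nontrivial_iff.2 hne
    exact exists_ne 0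
  obtain ⟨φ, hφ⟩ : ∃ φ : Module.Dual (S ⧸ m) (LT ⧸ (m • ⊤ : Submodule S LT)), φ w ≠ 0 := by
    by_contra hcon
    push Not at hcon
    exact hw ((Module.forall_dual_apply_eq_zero_iff (S ⧸ m) w).1 hcon)
  let φ1 : LT →ₗ[S] (S ⧸ m) := (φ.restrictScalars S) ∘ₗ (m • ⊤ : Submodule S LT).mkQ
  have hφ1 : Function.Surjective φ1 := by
    obtain ⟨w, rfl⟩ := Submodule.mkQ_surjective _ w
    intro y
    obtain ⟨s, hs⟩ := Ideal.Quotient.mk_surjective (y * (φ1 w)⁻¹)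
    refine ⟨s • w, ?_⟩
    rw [map_smul]
    have : s • φ1 w = Ideal.Quotient.mk m s * φ1 w := rfl
    have hφ' : φ1 w ≠ 0 := hφ
    rw [this, hs, mul_assoc, inv_mul_cancel₀ hφ', mul_one]
  refine ⟨(φ1.restrictScalars Λ) ∘ₗ (IsLocalizedModule.iso (Submonoid.powers ν) T.subtype).symm.toLinearMap, ?_⟩
  exact hφ1.comp (LinearEquiv.surjective _)

theorem core2 {V W : Type} [AddCommGroup V] [Module Λ V] (T : Submodule Λ V) [Module.Finite Λ T]
    (hinj : ∀ v : V, ν • v = 0 → v = 0) (hsurj : ∀ v : V, ∃ w, ν • w = v)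
    (hex : ∀ v : V, ∃ j : ℕ, ν ^ j • v ∈ T)
    [AddCommGroup W] [Module Λ W] (U : Submodule Λ W) [Module.Finite Λ U]
    (hinj' : ∀ v : W, ν • v = 0 → v = 0) (hsurj' : ∀ v : W, ∃ w, ν • w = v)
    (hex' : ∀ v : W, ∃ j : ℕ, ν ^ j • v ∈ U)
    (hno : ¬ ∃ (m : ℕ) (α β : Λ), ν ^ m = α + β ∧ (∀ t ∈ T, α • t = 0) ∧ (∀ u ∈ U, β • u = 0)) :
    ∃ (K : Type) (_ : AddCommGroup K) (_ : Module Λ K) (f : V →ₗ[Λ] K) (g : W →ₗ[Λ] K),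
      Function.Surjective f ∧ Function.Surjective g ∧ Nontrivial K ∧
      (∀ a : Λ, (∀ t ∈ T, a • t = 0) → ∀ x : K, a • x = 0) := by
  let S := Localization (Submonoid.powers ν)
  let I : Ideal Λ := Module.annihilator Λ T ⊔ Module.annihilator Λ U
  have hI : I.map (algebraMap Λ S) ≠ ⊤ := by
    rw [IsLocalization.map_algebraMap_ne_top_iff_disjoint (Submonoid.powers ν)]
    rw [Set.disjoint_left]
    rintro _ ⟨k, rfl⟩ hk
    obtain ⟨α, hα, β, hβ, hab⟩ := Submodule.mem_sup.1 hk
    refine hno ⟨k, α, β, hab.symm, ?_, ?_⟩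
    · intro t ht; exact congrArg Subtype.val (Module.mem_annihilator.1 hα ⟨t, ht⟩)
    · intro t ht; exact congrArg Subtype.val (Module.mem_annihilator.1 hβ ⟨t, ht⟩)
  obtain ⟨m, hm, hIm⟩ := Ideal.exists_le_maximal _ hI
  have hT : ∀ a : Λ, (∀ t ∈ T, a • t = 0) → algebraMap Λ S a ∈ m := by
    intro a ha
    refine hIm (Ideal.mem_map_of_mem _ (Submodule.mem_sup_left ?_))
    rw [Module.mem_annihilator]
    rintro ⟨t, ht⟩; exact Subtype.ext (ha t ht)
  have hU : ∀ a : Λ, (∀ t ∈ U, a • t = 0) → algebraMap Λ S a ∈ m := by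
    intro a ha
    refine hIm (Ideal.mem_map_of_mem _ (Submodule.mem_sup_right ?_))
    rw [Module.mem_annihilator]
    rintro ⟨t, ht⟩; exact Subtype.ext (ha t ht)
  obtain ⟨f, hf⟩ := core1 ν T hinj hsurj hex m hT
  obtain ⟨g, hg⟩ := core1 ν U hinj' hsurj' hex' m hU
  refine ⟨S ⧸ m, inferInstance, inferInstance, f, g, hf, hg, Ideal.Quotient.nontrivial_iff.2 hm.ne_top, ?_⟩
  intro a ha x
  obtain ⟨x, rfl⟩ := Ideal.Quotient.mk_surjective x
  have : a • Ideal.Quotient.mk m x = Ideal.Quotient.mk m (algebraMap Λ S a * x) := by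
    rw [← Algebra.smul_def]; rfl
  rw [this, Ideal.Quotient.eq_zero_iff_mem]
  exact m.mul_mem_right _ (hT a ha)

theorem fg_bounded {K : Type} [AddCommGroup K] [Module Λ K] (P : Submodule Λ K) {T : Type} [AddCommGroup T]
    [Module Λ T] [Module.Finite Λ T] (f : T →ₗ[Λ] K) (h : ∀ x : K, ∃ j : ℕ, ν ^ j • x ∈ P) :
    ∃ m : ℕ, ∀ t : T, ν ^ m • f t ∈ P := by
  obtain ⟨r, s, hs⟩ := Module.Finite.exists_fin (R := Λ) (M := T)
  choose k hk using fun i => h (f (s i))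
  refine ⟨∑ i, k i, fun t => ?_⟩
  have : Submodule.span Λ (Set.range s) ≤ Submodule.comap (ν ^ (∑ i, k i) • f) P := by
    rw [Submodule.span_le]
    rintro _ ⟨i, rfl⟩
    obtain ⟨d, hd⟩ : ν ^ k i ∣ ν ^ (∑ i, k i) :=
      pow_dvd_pow ν (Finset.single_le_sum (f := k) (fun _ _ => Nat.zero_le _) (Finset.mem_univ i))
    change ν ^ (∑ i, k i) • f (s i) ∈ P
    rw [hd, mul_comm, mul_smul]
    exact P.smul_mem _ (hk i)
  rw [hs] at this
  exact this trivial

theorem lift_surj {V D C : Type} [AddCommGroup V] [Module Λ V] [AddCommGroup D] [Module Λ D]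
    [AddCommGroup C] [Module Λ C] (e : V →ₗ[Λ] D) (he : Function.Surjective e) (f : V →ₗ[Λ] C)
    (hf : Function.Surjective f) (h : ∀ v, e v = 0 → f v = 0) :
    ∃ g : D →ₗ[Λ] C, Function.Surjective g := by
  let E := e.quotKerEquivOfSurjective he
  refine ⟨((LinearMap.ker e).liftQ f (fun v hv => h v hv)) ∘ₗ E.symm.toLinearMap, ?_⟩
  intro c
  obtain ⟨v, rfl⟩ := hf c
  refine ⟨E (Submodule.Quotient.mk v), ?_⟩
  rw [LinearMap.comp_apply, LinearEquiv.coe_coe, E.symm_apply_apply]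
  rfl

theorem core3 {V W D B : Type} [AddCommGroup V] [Module Λ V] [AddCommGroup D] [Module Λ D]
    [AddCommGroup B] [Module Λ B] [AddCommGroup W] [Module Λ W]
    (e : V →ₗ[Λ] D) (he : Function.Surjective e) (e' : W →ₗ[Λ] B) (he' : Function.Surjective e')
    [Module.Finite Λ (LinearMap.ker e)]
    (hinj : ∀ v : V, ν • v = 0 → v = 0) (hsurj : ∀ v : V, ∃ w, ν • w = v)
    (hex : ∀ v : V, ∃ j : ℕ, ν ^ j • v ∈ LinearMap.ker e)
    [Module.Finite Λ (LinearMap.ker e')]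
    (hinj' : ∀ v : W, ν • v = 0 → v = 0) (hsurj' : ∀ v : W, ∃ w, ν • w = v)
    (hex' : ∀ v : W, ∃ j : ℕ, ν ^ j • v ∈ LinearMap.ker e')
    (hJ : ∀ r : Λ, ∃ s μ : Λ, (1 - ν * r) * s = 1 - μ ∧ ∀ t ∈ LinearMap.ker e, μ • t = 0)
    (hno : ¬ ∃ (m : ℕ) (α β : Λ), ν ^ m = α + β ∧ (∀ t ∈ LinearMap.ker e, α • t = 0) ∧
      (∀ u ∈ LinearMap.ker e', β • u = 0)) :
    ∃ (C : Type) (_ : AddCommGroup C) (_ : Module Λ C) (f : D →ₗ[Λ] C) (g : B →ₗ[Λ] C),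
      Function.Surjective f ∧ Function.Surjective g ∧ Infinite C := by
  obtain ⟨K, _, _, f, g, hf, hg, hK, hann⟩ := core2 ν (LinearMap.ker e) hinj hsurj hex
    (LinearMap.ker e') hinj' hsurj' hex' hno
  let P : Submodule Λ K := (LinearMap.ker e').map g
  have hP : ∀ x : K, ∃ j : ℕ, ν ^ j • x ∈ P := by
    intro x
    obtain ⟨w, rfl⟩ := hg x
    obtain ⟨j, hj⟩ := hex' w
    exact ⟨j, ν ^ j • w, hj, by simp⟩
  have hKs : ∀ x : K, ∃ y, ν • y = x := by
    intro x
    obtain ⟨w, rfl⟩ := hg x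
    obtain ⟨y, rfl⟩ := hsurj' w
    exact ⟨g y, by simp⟩
  obtain ⟨m, hm⟩ := fg_bounded ν P (f ∘ₗ (LinearMap.ker e).subtype) hP
  have hKsk : ∀ (k : ℕ) (v : K), ∃ w, ν ^ k • w = v := by
    intro k
    induction k with
    | zero => intro v; exact ⟨v, by simp⟩
    | succ k ih => 
      intro v
      obtain ⟨w, hw⟩ := ih v
      obtain ⟨u, hu⟩ := hKs w
      exact ⟨u, by rw [pow_succ, mul_smul, hu, hw]⟩
  obtain ⟨f', hf'⟩ := lift_surj e he (P.mkQ ∘ₗ (ν ^ m • f)) (by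
      refine (Submodule.mkQ_surjective P).comp ?_
      intro x
      obtain ⟨y, rfl⟩ := hKsk m x
      obtain ⟨v, rfl⟩ := hf y
      exact ⟨v, rfl⟩) (by
      intro v hv
      have := hm ⟨v, hv⟩
      simp only [LinearMap.comp_apply, Submodule.mkQ_apply]
      exact (Submodule.Quotient.mk_eq_zero P).2 this)
  obtain ⟨g', hg'⟩ := lift_surj e' he' (P.mkQ ∘ₗ g) ((Submodule.mkQ_surjective P).comp hg) (by
      intro v hv
      exact (Submodule.Quotient.mk_eq_zero P).2 ⟨v, hv, rfl⟩)
  refine ⟨K ⧸ P, inferInstance, inferInstance, f', g', hf', hg', ?_⟩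
  have hPtop : P ≠ ⊤ := by
    intro htop
    have hfg : (⊤ : Submodule Λ K).FG := by
      rw [← htop]
      exact (Module.Finite.iff_fg.1 inferInstance : (LinearMap.ker e').FG).map g
    obtain ⟨r, hr, hr0⟩ := Submodule.exists_sub_one_mem_and_smul_eq_zero_of_fg_of_le_smul
      (Ideal.span {ν}) (⊤ : Submodule Λ K) hfg (by
        intro x _
        obtain ⟨y, rfl⟩ := hKs x
        exact Submodule.smul_mem_smul (Ideal.mem_span_singleton_self ν) trivial)
    obtain ⟨c, hc⟩ := Ideal.mem_span_singleton'.1 hr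
    obtain ⟨s, μ, hs, hμ⟩ := hJ (-c)
    obtain ⟨x, hx⟩ := exists_ne (0 : K)
    apply hx
    have h1 : r = 1 - ν * (-c) := by linear_combination -hc
    have h2 : (1 - μ) • x = 0 := by
      rw [← hs, ← h1, mul_comm, mul_smul, hr0 x trivial, smul_zero]
    rw [sub_smul, one_smul, hann μ hμ x, sub_zero] at h2
    exact h2
  rw [← not_finite_iff_infinite]
  intro hfin
  have hs : Function.Surjective (LinearMap.lsmul Λ (K ⧸ P) ν) := by
    intro x
    obtain ⟨x, rfl⟩ := Submodule.mkQ_surjective P x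
    obtain ⟨y, rfl⟩ := hKs x
    exact ⟨P.mkQ y, by simp⟩
  have hi : Function.Injective (LinearMap.lsmul Λ (K ⧸ P) ν) := Finite.injective_iff_surjective.2 hs
  apply hPtop
  rw [eq_top_iff]
  rintro x -
  obtain ⟨j, hj⟩ := hP x
  have key : ∀ (j : ℕ) (y : K ⧸ P), ν ^ j • y = 0 → y = 0 := by
    intro j
    induction j with
    | zero => intro y hy; simpa using hy
    | succ j ih =>
      intro y hy
      rw [pow_succ', mul_smul] at hy
      exact ih y (hi (by rw [map_zero]; exact hy))
  have := key j (Submodule.Quotient.mk x) (by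
    rw [← Submodule.Quotient.mk_smul]; exact (Submodule.Quotient.mk_eq_zero P).2 hj)
  exact (Submodule.Quotient.mk_eq_zero P).1 this

end Core
end

noncomputable section
set_option linter.style.haveILetI false

section Tower
variable {R : Type} [CommRing R] {N : ℕ}

abbrev nMod {X : Type} [AddCommGroup X] [Module R X] (hX : NTors N X) : Module (NRing R N) X where
  smul a x := nact hX a x
  one_smul x := by
    obtain ⟨k, hk⟩ := hX x
    change nact hX 1 x = x
    rw [nact_eq hX 1 hk]; simp
  mul_smul a b x := by
    obtain ⟨k, hk⟩ := hX x
    change nact hX (a * b) x = nact hX a (nact hX b x)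
    rw [nact_eq hX (a * b) hk, nact_eq hX b hk, nact_eq hX a (j := k) (by rw [smul_comm, hk, smul_zero])]
    rw [← mul_smul]; rfl
  smul_zero a := map_zero _
  smul_add a := map_add _
  add_smul a b x := by
    obtain ⟨k, hk⟩ := hX x
    change nact hX (a + b) x = nact hX a x + nact hX b x
    rw [nact_eq hX (a + b) hk, nact_eq hX b hk, nact_eq hX a hk, ← add_smul]; rfl
  zero_smul x := by
    obtain ⟨k, hk⟩ := hX x
    change nact hX 0 x = 0
    rw [nact_eq hX 0 hk]; simp

def tow (Λ : Type) [CommRing Λ] (N : ℕ) (X : Type) [AddCommGroup X] [Module Λ X] : Submodule Λ (ℕ → X) where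
  carrier := {x | ∀ k, N • x (k + 1) = x k}
  zero_mem' := by intro k; simp
  add_mem' := by
    intro a b ha hb k
    simp only [Pi.add_apply, smul_add]
    rw [ha, hb]
  smul_mem' := by
    intro c a ha k
    simp only [Pi.smul_apply]
    rw [smul_comm, ha]

section gen
variable {Λ : Type} [CommRing Λ] {X : Type} [AddCommGroup X] [Module Λ X]

def tow0 (Λ : Type) [CommRing Λ] (N : ℕ) (X : Type) [AddCommGroup X] [Module Λ X] : tow Λ N X →ₗ[Λ] X :=
  (LinearMap.proj 0) ∘ₗ (tow Λ N X).subtype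

theorem tow_pow (x : tow Λ N X) (k l : ℕ) : N ^ k • x.1 (k + l) = x.1 l := by
  induction k generalizing l with
  | zero => simp
  | succ k ih =>
    rw [pow_succ, mul_smul]
    have : k + 1 + l = k + l + 1 := by omega
    rw [this, x.2 (k + l), ih]

def towShift (x : tow Λ N X) : tow Λ N X := ⟨fun k => x.1 (k + 1), fun k => x.2 (k + 1)⟩

theorem tow_shift (x : tow Λ N X) : N • towShift x = x := by
  ext k
  exact x.2 k

theorem tow0_surj (hd : ∀ x : X, ∃ y, N • y = x) : Function.Surjective (tow0 Λ N X) := by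
  choose y hy using hd
  intro x
  exact ⟨⟨fun k => Nat.rec x (fun _ z => y z) k, fun k => hy _⟩, rfl⟩

theorem tow_inj (v : tow Λ N X) (h : N • v = 0) : v = 0 := by
  ext k
  have := congrFun (congrArg Subtype.val h) (k + 1)
  change N • v.1 (k + 1) = 0 at this
  rw [v.2 k] at this
  exact this

theorem tow_ex (hX : NTors N X) (v : tow Λ N X) : ∃ j : ℕ, (N : Λ) ^ j • v ∈ LinearMap.ker (tow0 Λ N X) := by
  obtain ⟨j, hj⟩ := hX (tow0 Λ N X v)
  refine ⟨j, ?_⟩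
  rw [LinearMap.mem_ker, map_smul, ← Nat.cast_pow, Nat.cast_smul_eq_nsmul, hj]

theorem tow_ann (hX : NTors N X) (hd : ∀ x : X, ∃ y, N • y = x) (a : Λ)
    (ha : ∀ t ∈ LinearMap.ker (tow0 Λ N X), a • t = 0) (x : X) : a • x = 0 := by
  obtain ⟨v, rfl⟩ := tow0_surj (Λ := Λ) hd x
  obtain ⟨j, hj⟩ := tow_ex hX v
  have := congrFun (congrArg Subtype.val (ha _ hj)) j
  rw [← Nat.cast_pow, Nat.cast_smul_eq_nsmul] at this
  change a • (N ^ j • v.1 j) = 0 at this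
  have h2 := tow_pow v j 0
  rw [add_zero] at h2
  rw [h2] at this
  exact this

end gen

theorem tow_fin {X : Type} [AddCommGroup X] [Module R X] (hX : NTors N X)
    (hf : {x : X | N • x = 0}.Finite) :
    letI := nMod (R := R) hX
    Module.Finite (NRing R N) (LinearMap.ker (tow0 (NRing R N) N X)) := by
  letI := nMod (R := R) hX
  let T := LinearMap.ker (tow0 (NRing R N) N X)
  have hT0 : ∀ t : T, t.1.1 0 = 0 := fun t => t.2
  have hsm : ∀ (a : NRing R N) (x : X) (k : ℕ), N ^ k • x = 0 → a • x = a.1 k • x := fun a x k h => nact_eq hX a h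
  let F : Set X := Set.range (fun t : T => t.1.1 1)
  have hF : F.Finite := hf.subset (by
    rintro _ ⟨t, rfl⟩
    change N • t.1.1 1 = 0
    rw [t.1.2 0, hT0])
  haveI : Fintype F := hF.fintype
  choose s hs using fun x : F => x.2
  simp only at hs
  let idx : T → F := fun t => ⟨t.1.1 1, t, rfl⟩
  have step : ∀ t : T, ∃ t' : T, t = s (idx t) + N • t' := by
    intro t
    refine ⟨⟨towShift (t - s (idx t)).1, ?_⟩, ?_⟩
    · change t.1.1 1 - (s (idx t)).1.1 1 = 0
      rw [hs, sub_self]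
    · have : N • (⟨towShift (t - s (idx t)).1, by
        change t.1.1 1 - (s (idx t)).1.1 1 = 0
        rw [hs, sub_self]⟩ : T) = t - s (idx t) := Subtype.ext (tow_shift _)
      rw [this]; abel
  choose nx hnx using step
  classical
  refine ⟨⟨Finset.univ.image s, ?_⟩⟩
  rw [eq_top_iff]
  rintro t -
  let ts : ℕ → T := fun k => nx^[k] t
  have hts : ∀ k, ts k = s (idx (ts k)) + N • ts (k + 1) := by
    intro k
    have : ts (k + 1) = nx (ts k) := Function.iterate_succ_apply' nx k t
    rw [this]; exact hnx _
  let a : F → NRing R N := fun i => ⟨fun k => ∑ j ∈ Finset.range k, if idx (ts j) = i then (N : R) ^ j else 0, by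
    intro k
    simp only
    rw [Finset.sum_range_succ, add_sub_cancel_left]
    split_ifs <;> simp⟩
  have key : ∀ k l : ℕ, t.1.1 l = ∑ i, (a i).1 k • (s i).1.1 l + N ^ k • (ts k).1.1 l := by
    intro k l
    induction k with
    | zero => simp [a, ts]
    | succ k ih =>
      have h1 : ∀ i, (a i).1 (k+1) = (a i).1 k + if idx (ts k) = i then (N : R) ^ k else 0 :=
        fun i => Finset.sum_range_succ _ _
      have h2 : (ts k).1.1 l = (s (idx (ts k))).1.1 l + N • (ts (k+1)).1.1 l :=
        congrArg (fun t : T => t.1.1 l) (hts k)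
      rw [ih, h2]
      simp only [h1, add_smul, Finset.sum_add_distrib, ite_smul, zero_smul, Finset.sum_ite_eq, Finset.mem_univ,
        if_true, smul_add]
      rw [pow_succ, mul_smul, ← Nat.cast_pow, Nat.cast_smul_eq_nsmul]
      abel
  have hsum : t = ∑ i, a i • s i := by
    ext k
    have h0 : ∀ (u : T), N ^ k • u.1.1 k = 0 := by
      intro u
      have := tow_pow u.1 k 0
      rw [add_zero, hT0] at this
      exact this
    rw [key k k, h0, add_zero]
    have : ((∑ i, a i • s i : T).1.1) k = ∑ i, a i • (s i).1.1 k := by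
      simp [Finset.sum_apply]
    rw [this]
    exact Finset.sum_congr rfl fun i _ => (hsm _ _ _ (h0 _)).symm
  rw [hsum]
  exact Submodule.sum_mem _ fun i _ => Submodule.smul_mem _ _ (Submodule.subset_span (by simp))

theorem nring_jac (r : NRing R N) : ∃ s μ : NRing R N, (1 - (N : NRing R N) * r) * s = 1 - μ ∧
    ∀ k, (N : R) ^ k ∣ μ.1 k := by
  let s : NRing R N := ⟨fun k => ∑ i ∈ Finset.range k, ((N : R) * r.1 k) ^ i, by
    intro k
    simp only
    rw [Finset.sum_range_succ, add_sub_right_comm, ← Finset.sum_sub_distrib]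
    refine dvd_add (Finset.dvd_sum fun i _ => ?_) ?_
    · refine dvd_trans ?_ (sub_dvd_pow_sub_pow _ _ i)
      rw [← mul_sub]
      exact (r.2 k).mul_left _
    · rw [mul_pow]; exact dvd_mul_right _ _⟩
  refine ⟨s, 1 - (1 - (N : NRing R N) * r) * s, by ring, fun k => ?_⟩
  have : (1 - (1 - (N : NRing R N) * r) * s).1 k = ((N : R) * r.1 k) ^ k := by
    change 1 - (1 - (N : R) * r.1 k) * (∑ i ∈ Finset.range k, ((N : R) * r.1 k) ^ i) = _
    rw [mul_neg_geom_sum]; ring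
  rw [this, mul_pow]
  exact dvd_mul_right _ _

def constHom (R : Type) [CommRing R] (N : ℕ) : R →+* NRing R N :=
  (Pi.constRingHom ℕ R).codRestrict _ (by intro r k; simp)

/-- common infinite quotient -/
def NoQuot (R : Type) [CommRing R] (D B : Type) [AddCommGroup D] [Module R D] [AddCommGroup B] [Module R B] : Prop :=
  ¬ ∃ (C : Type) (_ : AddCommGroup C) (_ : Module R C) (f : D →ₗ[R] C) (g : B →ₗ[R] C),
      Function.Surjective f ∧ Function.Surjective g ∧ Infinite C

theorem step5 {D B : Type} [AddCommGroup D] [Module R D] [AddCommGroup B] [Module R B]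
    (hD : NTors N D) (hB : NTors N B) (hDf : {x : D | N • x = 0}.Finite) (hBf : {x : B | N • x = 0}.Finite)
    (hDd : ∀ x : D, ∃ y, N • y = x) (hBd : ∀ x : B, ∃ y, N • y = x) (hQ : NoQuot R D B) :
    ∃ (a : NRing R N) (m : ℕ), (∀ d, nact hD a d = 0) ∧ ∀ b, nact hB a b = N ^ m • b := by
  letI := nMod (R := R) hD
  letI := nMod (R := R) hB
  haveI := tow_fin (R := R) hD hDf
  haveI := tow_fin (R := R) hB hBf
  by_cases hno : ∃ (m : ℕ) (α β : NRing R N), (N : NRing R N) ^ m = α + β ∧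
      (∀ t ∈ LinearMap.ker (tow0 (NRing R N) N D), α • t = 0) ∧
      (∀ u ∈ LinearMap.ker (tow0 (NRing R N) N B), β • u = 0)
  · obtain ⟨m, α, β, h, hα, hβ⟩ := hno
    have hα' := tow_ann hD hDd α hα
    have hβ' := tow_ann hB hBd β hβ
    refine ⟨α, m, hα', fun b => ?_⟩
    change α • b = _
    rw [eq_sub_of_add_eq h.symm, sub_smul, hβ', sub_zero, ← Nat.cast_pow, Nat.cast_smul_eq_nsmul]
  · exfalso
    apply hQ
    have hN : ∀ {X : Type} [AddCommGroup X] [Module (NRing R N) X] (x : X), (N : NRing R N) • x = N • x :=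
      fun x => Nat.cast_smul_eq_nsmul _ _ _
    obtain ⟨C, _, _, f, g, hf, hg, hC⟩ := core3 (N : NRing R N) (tow0 (NRing R N) N D) (tow0_surj hDd)
      (tow0 (NRing R N) N B) (tow0_surj hBd) (fun v hv => tow_inj v (by rw [← hN]; exact hv))
      (fun v => ⟨towShift v, by rw [hN, tow_shift]⟩) (tow_ex hD)
      (fun v hv => tow_inj v (by rw [← hN]; exact hv))
      (fun v => ⟨towShift v, by rw [hN, tow_shift]⟩) (tow_ex hB) (by
        intro r
        obtain ⟨s, μ, h1, h2⟩ := nring_jac r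
        refine ⟨s, μ, h1, fun t _ => ?_⟩
        ext k
        obtain ⟨j, hj⟩ := hD (t.1 k)
        change nact hD μ (t.1 k) = 0
        rw [nact_eq hD μ hj]
        exact pow_kill (h2 j) hj) hno
    letI : Module R C := Module.compHom C (constHom R N)
    refine ⟨C, inferInstance, inferInstance, { f with map_smul' := ?_ }, { g with map_smul' := ?_ }, hf, hg, hC⟩
    · intro r x
      obtain ⟨j, hj⟩ := hD x
      have : r • x = (constHom R N r) • x := (nact_eq hD (constHom R N r) hj).symm
      simp only [AddHom.toFun_eq_coe, LinearMap.coe_toAddHom, RingHom.id_apply]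
      rw [this, map_smul]; rfl
    · intro r x
      obtain ⟨j, hj⟩ := hB x
      have : r • x = (constHom R N r) • x := (nact_eq hB (constHom R N r) hj).symm
      simp only [AddHom.toFun_eq_coe, LinearMap.coe_toAddHom, RingHom.id_apply]
      rw [this, map_smul]; rfl

end Tower
end

noncomputable section
set_option linter.style.haveILetI false
open Abelian
section Final
variable {R : Type} [CommRing R] {N : ℕ}

theorem exPre_nsmul {X Y : Type} [AddCommGroup X] [Module R X] [AddCommGroup Y] [Module R Y] (m n : ℕ)
    (e : EX R X Y n) : exPre (m • LinearMap.id : X →ₗ[R] X) Y n e = m • e := by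
  change (Ext.mk₀ _).comp e (zero_add _) = m • e
  have : Ext.mk₀ (ModuleCat.ofHom (m • LinearMap.id : X →ₗ[R] X)) = m • Ext.mk₀ (𝟙 (ModuleCat.of R X)) := by
    have := map_nsmul (Ext.addEquiv₀ (X := ModuleCat.of R X) (Y := ModuleCat.of R X)).symm m (𝟙 (ModuleCat.of R X))
    exact this
  rw [this]
  have := map_nsmul (e.postcomp (ModuleCat.of R X) (zero_add n)) m (Ext.mk₀ (𝟙 (ModuleCat.of R X)))
  refine this.trans ?_
  congr 1
  exact Ext.mk₀_id_comp e

theorem exPost_nsmul {X Y : Type} [AddCommGroup X] [Module R X] [AddCommGroup Y] [Module R Y] (m n : ℕ)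
    (e : EX R X Y n) : exPost (m • LinearMap.id : Y →ₗ[R] Y) X n e = m • e := by
  change e.comp (Ext.mk₀ _) (add_zero _) = m • e
  have : Ext.mk₀ (ModuleCat.ofHom (m • LinearMap.id : Y →ₗ[R] Y)) = m • Ext.mk₀ (𝟙 (ModuleCat.of R Y)) := by
    have := map_nsmul (Ext.addEquiv₀ (X := ModuleCat.of R Y) (Y := ModuleCat.of R Y)).symm m (𝟙 (ModuleCat.of R Y))
    exact this
  rw [this]
  have := map_nsmul (e.precomp (ModuleCat.of R Y) (add_zero n)) m (Ext.mk₀ (𝟙 (ModuleCat.of R Y)))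
  refine this.trans ?_
  congr 1
  exact Ext.comp_mk₀_id e

theorem exPost_kill {X Y : Type} [AddCommGroup X] [Module R X] [AddCommGroup Y] [Module R Y] (m n : ℕ)
    (hm : ∀ y : Y, m • y = 0) (e : EX R X Y n) : m • e = 0 := by
  rw [← exPost_nsmul]
  have : (m • LinearMap.id : Y →ₗ[R] Y) = 0 := LinearMap.ext hm
  rw [this]
  change e.comp (Ext.mk₀ _) (add_zero _) = 0
  rw [ModuleCat.ofHom_zero, Ext.mk₀_zero, Ext.comp_zero]

theorem step6 [IsNoetherianRing R] (hN : 0 < N) {D Y : Type} [AddCommGroup D] [Module R D] [AddCommGroup Y] [Module R Y]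
    (hD : InC N D) (hY : InC N Y) (hd : ∀ x : D, ∃ y, N • y = x) (m n : ℕ)
    (h : ∀ e : EX R D Y n, N ^ m • e = 0) : InC N (EX R D Y n) := by
  haveI := hD.1
  let g : D →ₗ[R] D := N ^ m • LinearMap.id
  have hg : Function.Surjective g := by
    change ∀ x : D, ∃ y : D, N ^ m • y = x
    clear h
    clear g
    induction m with
    | zero => intro x; exact ⟨x, by simp⟩
    | succ m ih =>
      intro x
      obtain ⟨y, rfl⟩ := ih x
      obtain ⟨z, rfl⟩ := hd y
      exact ⟨z, by rw [pow_succ, mul_smul]⟩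
  have hx := ex_mid_left (LinearMap.ker g).subtype g (LinearMap.exact_subtype_ker_map g)
      (Submodule.injective_subtype _) hg Y n
  haveI : Finite (LinearMap.ker g) := (finite_torsion_of_artinian (M := D) (Nat.pow_pos (n := m) hN)).to_subtype
  refine (ex_fg (R := R) N hY n (LinearMap.ker g)).of_injective (exPre (LinearMap.ker g).subtype Y n)
    ((injective_iff_map_eq_zero (exPre (LinearMap.ker g).subtype Y n)).2 ?_)
  · intro e he
    obtain ⟨e', rfl⟩ := (hx e).1 he
    rw [← h e']
    exact exPre_nsmul _ _ _

theorem NoQuot.of_surj {D B D' B' : Type} [AddCommGroup D] [Module R D] [AddCommGroup B] [Module R B]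
    [AddCommGroup D'] [Module R D'] [AddCommGroup B'] [Module R B'] (h : NoQuot R D B)
    (p : D →ₗ[R] D') (hp : Function.Surjective p) (q : B →ₗ[R] B') (hq : Function.Surjective q) :
    NoQuot R D' B' := by
  rintro ⟨C, _, _, f, g, hf, hg, hC⟩
  exact h ⟨C, _, _, f ∘ₗ p, g ∘ₗ q, hf.comp hp, hg.comp hq, hC⟩

theorem exists_divPart {T : Type} [AddCommGroup T] [Module R T] (hT : InC N T) :
    ∃ (k : ℕ) (D : Submodule R T) (p : T →ₗ[R] D), Function.Surjective p ∧ InC N D ∧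
      (∀ x : D, ∃ y, N • y = x) ∧ InC N (T ⧸ D) ∧ ∀ x : T ⧸ D, N ^ k • x = 0 := by
  haveI := hT.1
  obtain ⟨k, hk⟩ := exists_stable_pow (M := T) N
  let g : T →ₗ[R] T := N ^ k • LinearMap.id
  refine ⟨k, LinearMap.range g, g.rangeRestrict, g.surjective_rangeRestrict,
    hT.of_injective (LinearMap.range g).subtype.toAddMonoidHom (Submodule.injective_subtype _), ?_,
    hT.of_surjective (LinearMap.range g).mkQ.toAddMonoidHom (Submodule.mkQ_surjective _), ?_⟩
  · rintro ⟨_, x, rfl⟩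
    obtain ⟨y, hy⟩ := hk x
    refine ⟨⟨g y, y, rfl⟩, Subtype.ext ?_⟩
    change N • N ^ k • y = N ^ k • x
    rw [hy, pow_succ', mul_smul]
  · intro x
    obtain ⟨x, rfl⟩ := Submodule.mkQ_surjective _ x
    rw [← map_nsmul]
    exact (Submodule.Quotient.mk_eq_zero _).2 ⟨x, rfl⟩

theorem step7 [IsNoetherianRing R] (hN : 0 < N) {T B : Type} [AddCommGroup T] [Module R T] [AddCommGroup B] [Module R B]
    (hT : InC N T) (hB : InC N B) (hQ : NoQuot R T B) (n : ℕ) : InC N (EX R T B n) := by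
  obtain ⟨k, D, p, hp, hD, hDd, hTD, hTk⟩ := exists_divPart (R := R) hT
  obtain ⟨l, E, q, hq, hE, hEd, hBE, hBl⟩ := exists_divPart (R := R) hB
  haveI := hD.1
  haveI := hE.1
  haveI := hTD.1
  haveI := finite_of_artinian_bounded (Nat.pow_pos (n := k) hN) hTk
  have h1 : InC N (EX R (T ⧸ D) B n) := ex_fg N hB n _
  have h2 : InC N (EX R D (B ⧸ E) n) := step6 hN hD hBE hDd l n (exPost_kill _ _ hBl)
  have h3 : InC N (EX R D E n) := by
    obtain ⟨a, m, ha, hb⟩ := step5 (R := R) hD.2 hE.2 (finite_torsion_of_artinian hN) (finite_torsion_of_artinian hN)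
      hDd hEd (hQ.of_surj p hp q hq)
    exact step6 hN hD hE hDd m n (kill_ext hD.2 hE.2 a _ ha hb n)
  have h4 : InC N (EX R D B n) := InC.of_exact _ _
    (ex_mid_right E.subtype E.mkQ (LinearMap.exact_subtype_mkQ E) (Submodule.injective_subtype _)
      (Submodule.mkQ_surjective _) D n) h3 h2
  exact InC.of_exact _ _
    (ex_mid_left D.subtype D.mkQ (LinearMap.exact_subtype_mkQ D) (Submodule.injective_subtype _)
      (Submodule.mkQ_surjective _) B n) h1 h4
end Final
end

noncomputable section
set_option linter.style.haveILetI false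
open Abelian
section Final2

theorem preim_fin {A B : Type} [AddCommGroup A] [AddCommGroup B] (f : A →+ B) (hf : {a | f a = 0}.Finite) {S : Set B}
    (hS : S.Finite) : (f ⁻¹' S).Finite := by
  refine hS.preimage' fun b _ => ?_
  by_cases h : ∃ a, f a = b
  · obtain ⟨a, rfl⟩ := h
    refine (hf.image (fun t => t + a)).subset ?_
    intro x hx
    exact ⟨x - a, by simp [sub_eq_zero]; exact hx, by simp⟩
  · convert Set.finite_empty
    ext x; simp; rintro rfl; exact h ⟨x, rfl⟩

theorem tors_fin {A : Type} [AddCommGroup A] (hA : FiniteRankAbelian A) (n : ℕ) :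
    0 < n → {a : A | n • a = 0}.Finite := by
  induction n using Nat.recOnMul with
  | zero => intro h; omega
  | one => intro _; simp
  | prime p hp => intro _; exact hA.2 p hp
  | mul a b ha hb =>
    intro h
    have := preim_fin (nsmulAddMonoidHom a : A →+ A) (ha (Nat.pos_of_mul_pos_right h)) (hb (Nat.pos_of_mul_pos_left h))
    refine this.subset fun x hx => ?_
    change b • a • x = 0
    rw [← mul_smul, mul_comm]; exact hx

theorem exists_maxindep {A : Type} [AddCommGroup A] (hA : FiniteRankAbelian A) :
    ∃ (k : ℕ) (v : Fin k → A), ∀ a : A, ∃ n : ℕ, 0 < n ∧ n • a ∈ Submodule.span ℤ (Set.range v) := by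
  classical
  obtain ⟨b, hb⟩ := hA.1
  have hb' : ∀ k, (∃ v : Fin k → A, LinearIndependent ℤ v) → k ≤ b := by
    rintro k ⟨v, hv⟩
    exact hb k ⟨(Finsupp.linearCombination ℤ v).toAddMonoidHom, hv⟩
  have h0 : ∃ v : Fin 0 → A, LinearIndependent ℤ v := ⟨Fin.elim0, linearIndependent_empty_type⟩
  obtain ⟨v, hv⟩ := Nat.findGreatest_spec (P := fun k => ∃ v : Fin k → A, LinearIndependent ℤ v) (Nat.zero_le b) h0
  refine ⟨_, v, fun a => ?_⟩
  by_contra! hcon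
  have := hv.finCons' a v (by
    intro c y hy hc
    by_contra hc0
    refine hcon c.natAbs (Int.natAbs_pos.2 hc0) ?_
    have h1 : c • a ∈ Submodule.span ℤ (Set.range v) := by
      rw [eq_neg_of_add_eq_zero_left hc]; exact neg_mem hy
    rcases Int.natAbs_eq c with h | h
    · rw [h, natCast_zsmul] at h1; exact h1
    · rw [h, neg_smul, natCast_zsmul] at h1; exact (neg_mem_iff).1 h1)
  have h2 := Nat.le_findGreatest (P := fun k => ∃ v : Fin k → A, LinearIndependent ℤ v) (hb' _ ⟨_, this⟩) ⟨_, this⟩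
  omega

theorem quot_tors_fin {A : Type} [AddCommGroup A] {N : ℕ} (hN : 0 < N) (hA : {a : A | N • a = 0}.Finite) (F : Submodule ℤ A)
    (hF : F.FG) : {u : A ⧸ F | N • u = 0}.Finite := by
  haveI : Module.Finite ℤ F := Module.Finite.iff_fg.2 hF
  let P : Submodule ℤ F := LinearMap.range (N • LinearMap.id : F →ₗ[ℤ] F)
  haveI : Finite (F ⧸ P) := by
    refine Module.finite_of_fg_torsion _ ?_
    intro x
    refine ⟨⟨(N : ℤ), by simp; omega⟩, ?_⟩
    obtain ⟨x, rfl⟩ := Submodule.mkQ_surjective _ x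
    change (N : ℤ) • P.mkQ x = 0
    rw [natCast_zsmul, ← map_nsmul]
    exact (Submodule.Quotient.mk_eq_zero _).2 ⟨x, rfl⟩
  let S : Set (A ⧸ F) := {u | N • u = 0}
  choose r hr using Submodule.mkQ_surjective F
  have hm : ∀ u : S, N • r u ∈ F := by
    intro u
    rw [← Submodule.Quotient.mk_eq_zero, ← Submodule.mkQ_apply, map_nsmul, hr]
    exact u.2
  let φ : S → F ⧸ P := fun u => P.mkQ ⟨N • r u, hm u⟩
  have hfib : ∀ c : F ⧸ P, (φ ⁻¹' {c}).Finite := by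
    intro c
    by_cases h : ∃ u, φ u = c
    · obtain ⟨u, rfl⟩ := h
      refine Set.Finite.of_finite_image (f := Subtype.val) ?_ Subtype.val_injective.injOn
      refine (hA.image (fun t => F.mkQ t + u.1)).subset ?_
      rintro _ ⟨w, hw, rfl⟩
      have hw' : P.mkQ ⟨N • r w, hm w⟩ = P.mkQ ⟨N • r u, hm u⟩ := hw
      rw [← sub_eq_zero, ← map_sub] at hw'
      obtain ⟨z, hz⟩ := (Submodule.Quotient.mk_eq_zero _).1 hw'
      have hz' : N • (z : A) = N • r w - N • r u := congrArg Subtype.val hz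
      refine ⟨r w - r u - z, ?_, ?_⟩
      · change N • (r w - r u - z) = 0
        rw [smul_sub, smul_sub, hz', sub_self]
      · simp only [map_sub, hr]
        rw [Submodule.mkQ_apply, (Submodule.Quotient.mk_eq_zero F).2 z.2]
        abel
    · convert Set.finite_empty
      ext x; simp; rintro rfl; exact h ⟨x, rfl⟩
  have : (φ ⁻¹' Set.univ).Finite := Set.finite_univ.preimage' fun c _ => hfib c
  rw [Set.preimage_univ] at this
  exact Set.finite_coe_iff.1 (Set.finite_univ_iff.1 this)

variable {R : Type} [CommRing R] {N : ℕ}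

def copSub (N : ℕ) {A : Type} [AddCommGroup A] [Module R A] (A0 : Submodule R A) : Submodule R A where
  carrier := {a | ∃ m : ℕ, Nat.Coprime m N ∧ m • a ∈ A0}
  zero_mem' := ⟨1, by simp, by simp⟩
  add_mem' := by
    rintro a b ⟨m, hm, ha⟩ ⟨n, hn, hb⟩
    refine ⟨m * n, Nat.Coprime.mul_left hm hn, ?_⟩
    rw [smul_add]
    refine add_mem ?_ ?_
    · rw [mul_comm, mul_smul]; exact A0.smul_of_tower_mem n ha
    · rw [mul_smul]; exact A0.smul_of_tower_mem m hb
  smul_mem' := by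
    rintro c a ⟨m, hm, ha⟩
    exact ⟨m, hm, by rw [smul_comm]; exact A0.smul_mem c ha⟩

theorem quot_inC (hN : 0 < N) {A : Type} [AddCommGroup A] [Module R A] (hA : FiniteRankAbelian A)
    {k : ℕ} (v : Fin k → A) (hv : ∀ a : A, ∃ n : ℕ, 0 < n ∧ n • a ∈ Submodule.span ℤ (Set.range v)) :
    InC N (A ⧸ copSub N (Submodule.span R (Set.range v))) := by
  let F := Submodule.span ℤ (Set.range v)
  let A0 := Submodule.span R (Set.range v)
  let A1 := copSub N A0
  have hF0 : ∀ a ∈ F, a ∈ A0 := by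
    intro a ha
    have : F ≤ A0.restrictScalars ℤ := Submodule.span_le.2 Submodule.subset_span
    exact this ha
  have hF1 : F ≤ A1.restrictScalars ℤ := fun a ha => ⟨1, by simp, by simpa using hF0 a ha⟩
  let U := torsPart ℤ N (A ⧸ F)
  have hU : InC N U := by
    refine ⟨artinian_of_ntors (torsPart_ntors N _) ?_, torsPart_ntors N _⟩
    refine Set.Finite.of_finite_image (f := Subtype.val) ?_ Subtype.val_injective.injOn
    refine (quot_tors_fin hN (tors_fin hA N hN) F (Submodule.fg_span (Set.finite_range v))).subset ?_
    rintro _ ⟨u, hu, rfl⟩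
    exact congrArg Subtype.val hu
  let q : (A ⧸ F) →ₗ[ℤ] (A ⧸ A1) := F.liftQ (A1.mkQ.restrictScalars ℤ) (by
    intro a ha
    exact (Submodule.Quotient.mk_eq_zero _).2 (hF1 ha))
  refine hU.of_surjective (q ∘ₗ U.subtype).toAddMonoidHom ?_
  intro x
  obtain ⟨a, rfl⟩ := Submodule.mkQ_surjective _ x
  obtain ⟨n, hn, hna⟩ := hv a
  obtain ⟨d, m, j, rfl, hd, hm⟩ := nat_split N n hn
  obtain ⟨d', hd'⟩ := hd
  have hF : N ^ j • m • a ∈ F := by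
    rw [hd', mul_comm d, mul_smul, ← mul_smul d m a]
    exact F.smul_of_tower_mem d' hna
  have hA1 : N ^ j • a ∈ A1 := ⟨m, hm, by rw [smul_comm]; exact hF0 _ hF⟩
  obtain ⟨s, w, hsw⟩ := Nat.isCoprime_iff_coprime.2 (Nat.Coprime.pow_right j hm)
  refine ⟨⟨F.mkQ (s • m • a), j, ?_⟩, ?_⟩
  · rw [← map_nsmul, smul_comm]
    exact (Submodule.Quotient.mk_eq_zero _).2 (F.smul_mem s hF)
  · change A1.mkQ (s • m • a) = A1.mkQ a
    rw [← sub_eq_zero, ← map_sub]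
    refine (Submodule.Quotient.mk_eq_zero _).2 ?_
    have : s • m • a - a = -(w • (N ^ j • a)) := by
      have h1 : a = (s * (m : ℤ) + w * ((N ^ j : ℕ) : ℤ)) • a := by rw [hsw, one_smul]
      rw [add_smul, mul_smul, mul_smul, natCast_zsmul, natCast_zsmul] at h1
      nth_rewrite 2 [h1]
      abel
    rw [this]
    exact neg_mem (A1.smul_of_tower_mem w hA1)

theorem main_mod [IsNoetherianRing R] (hN : 0 < N) {A B : Type} [AddCommGroup A] [Module R A] [AddCommGroup B] [Module R B]
    (hA : FiniteRankAbelian A) (hB : InC N B) (hQ : NoQuot R A B) (n : ℕ) : InC N (EX R A B n) := by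
  obtain ⟨k, v, hv⟩ := exists_maxindep hA
  let A0 := Submodule.span R (Set.range v)
  let A1 := copSub N A0
  have h01 : A0 ≤ A1 := fun a ha => ⟨1, by simp, by simpa using ha⟩
  have hq : InC N (A ⧸ A1) := quot_inC hN hA v hv
  have h1 : InC N (EX R (A ⧸ A1) B n) :=
    step7 hN hq hB (hQ.of_surj A1.mkQ (Submodule.mkQ_surjective _) LinearMap.id Function.surjective_id) n
  haveI : Module.Finite R A0 := Module.Finite.iff_fg.2 (Submodule.fg_span (Set.finite_range v))
  let P := A0.submoduleOf A1
  haveI : Module.Finite R P := Module.Finite.equiv (Submodule.submoduleOfEquivOfLe h01).symm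
  have h2 : InC N (EX R P B n) := ex_fg N hB n _
  haveI : Subsingleton (EX R (A1 ⧸ P) B n) := ex_coprime_zero (N := N) (by
    intro x
    obtain ⟨⟨a, m, hm, ha⟩, rfl⟩ := Submodule.mkQ_surjective _ x
    refine ⟨m, hm, ?_⟩
    rw [← map_nsmul]
    exact (Submodule.Quotient.mk_eq_zero _).2 ha) n B hB.2
  have h3 : InC N (EX R A1 B n) := InC.of_exact _ _
    (ex_mid_left P.subtype P.mkQ (LinearMap.exact_subtype_mkQ P) (Submodule.injective_subtype _)
      (Submodule.mkQ_surjective _) B n) InC.of_subsingleton h2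
  exact InC.of_exact _ _
    (ex_mid_left A1.subtype A1.mkQ (LinearMap.exact_subtype_mkQ A1) (Submodule.injective_subtype _)
      (Submodule.mkQ_surjective _) B n) h1 h3

end Final2
end

noncomputable section
set_option linter.style.haveILetI false

section Transfer
open Abelian CochainComplex.HomComplex
universe w
variable {C : Type 1} [Category.{0} C] [CategoryTheory.Abelian C] [HasExt.{w} C]

theorem extMk_zero_iff' {X Y : C} (P : ProjectiveResolution X) (f : P.complex.X 0 ⟶ Y)
    (hf : P.complex.d 1 0 ≫ f = 0) : P.extMk f 1 rfl hf = 0 ↔ f = 0 := by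
  simp only [← P.extEquivCohomologyClass.apply_eq_iff_eq,
    ProjectiveResolution.extEquivCohomologyClass_extMk, ProjectiveResolution.extEquivCohomologyClass_zero,
    CohomologyClass.mk_eq_zero_iff]
  rw [Cocycle.toSingleMk_mem_coboundaries_iff _ _ _ _ _ 1 (by simp)]
  constructor
  · rintro ⟨g, hg⟩
    have hz : Limits.IsZero (P.cochainComplex.X 1) := CochainComplex.isZero_of_isStrictlyLE _ 0 1 (by omega)
    rw [hz.eq_of_src g 0, Limits.comp_zero] at hg
    rw [← cancel_epi (P.cochainComplexXIso (-(0:ℕ)) 0 rfl).hom, ← hg, Limits.comp_zero]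
  · rintro rfl
    exact ⟨0, by simp⟩

variable {k : Type} [CommRing k] [Linear k C]

theorem old_inj [EnoughProjectives C] (X Y : C) (n : ℕ) :
    ∃ φ : (((_root_.Ext k C n).obj (Opposite.op X)).obj Y : ModuleCat k) →+ Abelian.Ext.{w} X Y n, Function.Injective φ := by
  let P := projectiveResolution X
  let K := P.complex.linearYonedaObj k Y
  let p := (ComplexShape.up ℕ).prev n
  let S := K.sc' p n (n + 1)
  let i : ((_root_.Ext k C n).obj (Opposite.op X)).obj Y ≅ S.moduleCatLeftHomologyData.H :=
    P.isoExt n Y ≪≫ ShortComplex.homologyMapIso (K.isoSc' p n (n+1) rfl (by simp)) ≪≫ S.moduleCatHomologyIso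
  let ψ : LinearMap.ker S.g.hom →+ Abelian.Ext.{w} X Y n :=
    AddMonoidHom.mk' (fun x => P.extMk (x.1 : P.complex.X n ⟶ Y) (n+1) rfl x.2) (fun a b => (P.add_extMk _ _ _ _ _ _).symm)
  have hψ : ∀ x, ψ x = 0 ↔ x ∈ LinearMap.range S.moduleCatToCycles := by
    intro x
    have h1 : x ∈ LinearMap.range S.moduleCatToCycles ↔ ∃ g : P.complex.X p ⟶ Y, P.complex.d n p ≫ g = x.1 := by
      constructor
      · rintro ⟨g, hg⟩
        exact ⟨g, congrArg Subtype.val hg⟩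
      · rintro ⟨g, hg⟩
        exact ⟨g, Subtype.ext hg⟩
    rw [h1]
    change P.extMk (x.1 : P.complex.X n ⟶ Y) (n+1) rfl x.2 = 0 ↔ _
    rcases n with _ | n
    · refine (extMk_zero_iff' P x.1 x.2).trans ?_
      have hd : P.complex.d 0 p = 0 := P.complex.shape _ _ (by simp [p])
      rw [hd]
      simp only [Limits.zero_comp, exists_const]
      exact eq_comm
    · exact P.extMk_eq_zero_iff _ _ _ _ p (by simp [p])
  let χ : S.moduleCatLeftHomologyData.H →+ Abelian.Ext.{w} X Y n :=
    QuotientAddGroup.lift (LinearMap.range S.moduleCatToCycles).toAddSubgroup ψ (by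
      intro x hx; exact (hψ x).2 hx)
  have hχ : Function.Injective χ := by
    rw [injective_iff_map_eq_zero]
    intro x hx
    obtain ⟨x, rfl⟩ := Submodule.mkQ_surjective (LinearMap.range S.moduleCatToCycles) x
    exact (Submodule.Quotient.mk_eq_zero _).2 ((hψ x).1 hx)
  exact ⟨χ.comp i.hom.hom.toAddMonoidHom, hχ.comp i.toLinearEquiv.injective⟩

theorem rep_noeth (k : Type) [CommRing k] [IsNoetherianRing k] (G : Type) [CommGroup G] (h : Group.FG G) :
    IsNoetherianRing (MonoidAlgebra k G) := by
  haveI := h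
  exact Algebra.FiniteType.isNoetherianRing k _

theorem rep_hasExt (k : Type) [CommRing k] (G : Type) [CommGroup G] : HasExt.{0} (Rep.{0} k G) := hasExt_of_enoughProjectives _

theorem rep_add (k : Type) [CommRing k] (G : Type) [CommGroup G] : (Rep.toModuleMonoidAlgebra.{0} (k := k) (G := G)).Additive :=
  ⟨fun {X Y f g} => by rfl⟩

abbrev toM {k : Type} [CommRing k] {G : Type} [CommGroup G] (A : Rep.{0} k G) : Type :=
  (Rep.toModuleMonoidAlgebra.obj A : ModuleCat.{0} (MonoidAlgebra k G))

theorem rep_inj (k : Type) [CommRing k] (G : Type) [CommGroup G] (l : Type) [CommRing l] [Linear l (Rep.{0} k G)]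
    (A B : Rep.{0} k G) (n : ℕ) :
    ∃ φ : ((_root_.Ext l (Rep k G) n).obj (Opposite.op A)).obj B →+ EX (MonoidAlgebra k G) (toM A) (toM B) n,
      Function.Injective φ := by
  haveI := rep_hasExt k G
  haveI := rep_add k G
  obtain ⟨φ, hφ⟩ := old_inj (k := l) A B n
  exact ⟨((Rep.toModuleMonoidAlgebra.{0} (k := k) (G := G)).mapExtAddHom A B n).comp φ,
    ((Rep.toModuleMonoidAlgebra.{0} (k := k) (G := G)).mapExt_bijective_of_preservesProjectiveObjects A B n).1.comp hφ⟩

theorem rep_noquot (k : Type) [CommRing k] (G : Type) [CommGroup G] (A B : Rep.{0} k G)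
    (hquot : ¬ ∃ (C : Rep k G) (f : A ⟶ C) (g : B ⟶ C),
      Function.Surjective f.hom ∧ Function.Surjective g.hom ∧
        Infinite (C : Type)) : NoQuot (MonoidAlgebra k G) (toM A) (toM B) := by
  rintro ⟨C, _, _, f, g, hf, hg, hC⟩
  apply hquot
  let C' : Rep k G := Rep.ofModuleMonoidAlgebra.obj (ModuleCat.of _ C)
  refine ⟨C', (Rep.unitIso A).hom ≫ Rep.ofModuleMonoidAlgebra.map (ModuleCat.ofHom f),
    (Rep.unitIso B).hom ≫ Rep.ofModuleMonoidAlgebra.map (ModuleCat.ofHom g), ?_, ?_, hC⟩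
  · intro c
    obtain ⟨a, rfl⟩ := hf c
    exact ⟨a, rfl⟩
  · intro c
    obtain ⟨a, rfl⟩ := hg c
    exact ⟨a, rfl⟩

theorem final_aux (k : Type) [CommRing k] [IsNoetherianRing k] (G : Type) [CommGroup G] (hfg : Group.FG G) (ω : Set ℕ)
    (l : Type) [CommRing l] [Linear l (Rep.{0} k G)]
    (A B : Rep.{0} k G) (hA : FiniteRankAbelian A) (hB : IsCernikovOmega ω B)
    (hquot : ¬ ∃ (C : Rep k G) (f : A ⟶ C) (g : B ⟶ C),
      Function.Surjective f.hom ∧ Function.Surjective g.hom ∧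
        Infinite (C : Type)) (n : ℕ) :
    IsCernikovOmega ω (((_root_.Ext l (Rep k G) n).obj (Opposite.op A)).obj B) := by
  haveI := rep_noeth k G hfg
  haveI hart := isArtinian_of_cernikov hB.1
  obtain ⟨N, hN, hω, hBN⟩ := omega_bound hB.2
  have hB' : InC N (toM B) := ⟨hart, hBN⟩
  have hA' : FiniteRankAbelian (toM A) := hA
  have hm := main_mod (R := MonoidAlgebra k G) (A := toM A) (B := toM B) hN hA' hB' (rep_noquot k G A B hquot) n
  obtain ⟨φ, hφ⟩ := rep_inj k G l A B n
  have h := hm.of_injective φ hφ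
  haveI := h.1
  exact ⟨cernikov_of_artinian hN h.2, omega_of_ntors hN hω h.2⟩
end Transfer

end

/-- **Proposition A.**  Let `G` be a finitely generated abelian group and `ω` a
set of primes.  Let `A` be a `ℤG`-module whose underlying abelian group has
finite rank, and let `B` be a `ℤG`-module whose underlying additive group is a
Černikov `ω`-group.  If `A` has no infinite `ℤG`-module quotient that is
isomorphic as a `ℤG`-module to a quotient of `B`, then `Ext^n_{ℤG}(A, B)` is a
Černikov `ω`-group for all `n ≥ 0`. -/
theorem propositionA (G : Type) [CommGroup G] (hfg : Group.FG G) (ω : Set ℕ)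
    (A B : Rep ℤ G) (hA : FiniteRankAbelian A) (hB : IsCernikovOmega ω B)
    (hquot : ¬ ∃ (C : Rep ℤ G) (f : A ⟶ C) (g : B ⟶ C),
      Function.Surjective f.hom ∧ Function.Surjective g.hom ∧
        Infinite (C : Type)) (n : ℕ) :
    IsCernikovOmega ω (((Ext ℤ (Rep ℤ G) n).obj (Opposite.op A)).obj B) := by
  exact final_aux ℤ G hfg ω ℤ A B hA hB hquot n

end
end

section
/- Let R be a principal ideal domain such that the quotient ring R/Ra is finite for every nonzero element a of R, and let G be an abelian group. Let A and B be RG-modules that, as R-modules, are torsion-free of finite R-rank, and suppose that A contains no nontrivial RG-submodule isomorphic as an RG-module to an RG-submodule of B. Then Ext^n_{RG}(A,B) and Tor_n^{RG}(A,B) are bounded R-modules for all n ≥ 0. -/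
/-!
Statement 6: Proposition 2.1 (Kropholler–Lorensen–Robinson) on `Ext` and `Tor`
over the group ring `RG` of an abelian group `G` over a principal ideal domain
`R` with finite quotients.  `RG`-modules are objects of
`ModuleCat (MonoidAlgebra R G)`, and `Ext` and `Tor` are taken in this category.
-/

open CategoryTheory

noncomputable section

/-- An `RG`-module (for `S = RG` an `R`-algebra) is torsion-free as an
`R`-module. -/
def RTorsionFree (R S : Type*) [CommRing R] [Ring S] [Algebra R S]
    (A : Type*) [AddCommGroup A] [Module S A] : Prop :=
  ∀ (r : R) (a : A), r ≠ 0 → a ≠ 0 → algebraMap R S r • a ≠ 0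

/-- An `RG`-module (for `S = RG` an `R`-algebra) has finite `R`-rank: finite
torsion-free rank, and finite `p`-rank for every prime `p` of `R`. -/
def FiniteRankOver (R S : Type*) [CommRing R] [Ring S] [Algebra R S]
    (A : Type*) [AddCommGroup A] [Module S A] : Prop :=
  (∃ n : ℕ, ∀ k : ℕ,
      (∃ f : (Fin k →₀ R) →+ A, Function.Injective f ∧
        ∀ (r : R) (v : Fin k →₀ R), f (r • v) = algebraMap R S r • f v) → k ≤ n) ∧
  ∀ p : R, Prime p → ∃ n : ℕ, ∀ k : ℕ,
      (∃ f : (Fin k →₀ R) →+ A,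
        (∀ (r : R) (v : Fin k →₀ R), f (r • v) = algebraMap R S r • f v) ∧
        (∀ v, algebraMap R S p • f v = 0) ∧
        ∀ v, f v = 0 → ∃ w, v = p • w) → k ≤ n

/-- An `R`-bounded module: some nonzero `r ∈ R` annihilates it. -/
def RBounded (R S : Type*) [CommRing R] [Ring S] [Algebra R S]
    (A : Type*) [AddCommGroup A] [Module S A] : Prop :=
  ∃ r : R, r ≠ 0 ∧ ∀ a : A, algebraMap R S r • a = 0

section Aux


lemma aux_homology {S : Type} [CommRing S] {ι : Type} {c : ComplexShape ι}
    (K : HomologicalComplex (ModuleCat.{0} S) c) (s : S)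
    (h : Homotopy (s • 𝟙 K) 0) (n : ι) (x : K.homology n) : s • x = 0 := by
  have h1 := h.homologyMap_eq n
  have h2 : HomologicalComplex.homologyMap (s • 𝟙 K) n = s • 𝟙 _ := by
    have := ShortComplex.homologyMap_smul (φ := (HomologicalComplex.shortComplexFunctor _ c n).map (𝟙 K)) s
    rw [← HomologicalComplex.homologyMap_id]
    exact this
  rw [h2, HomologicalComplex.homologyMap_zero] at h1
  exact congrArg (fun f => f.hom x) h1

lemma aux_iso {S : Type} [CommRing S] {X Y : ModuleCat.{0} S} (e : X ≅ Y) (s : S)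
    (h : ∀ y : Y, s • y = 0) (x : X) : s • x = 0 := by
  have := h (e.hom.hom x)
  rw [← map_smul] at this
  have h3 := congrArg e.inv.hom this
  rw [map_zero] at h3
  rw [← h3]
  exact (e.hom_inv_id_apply (s • x)).symm

lemma aux_resolution {S : Type} [CommRing S] (A : ModuleCat.{0} S)
    (P : ProjectiveResolution A) (s : S) (h : ∀ a : A, s • a = 0) :
    Nonempty (Homotopy (s • 𝟙 P.complex) 0) := by
  refine ⟨ProjectiveResolution.liftHomotopyZero (P := P) (Q := P) _ ?_⟩
  rw [Linear.smul_comp, Category.id_comp]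
  ext x
  exact h _

lemma tor_left {S : Type} [CommRing S] (A B : ModuleCat.{0} S) (s : S) (h : ∀ a : A, s • a = 0)
    (n : ℕ) (x : ((Tor (ModuleCat.{0} S) n).obj A).obj B) : s • x = 0 := by
  let P := projectiveResolution B
  refine aux_iso (P.isoLeftDerivedObj _ n) s (fun y => aux_homology _ s (.ofEq ?_) n y) x
  have hA : s • 𝟙 A = 0 := by ext a; exact h a
  ext1 i
  have : s • (MonoidalCategory.whiskerRight (𝟙 A) (P.complex.X i)) = 0 := by
    rw [← MonoidalLinear.smul_whiskerRight, hA, MonoidalPreadditive.zero_whiskerRight]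
  rw [MonoidalCategory.id_whiskerRight] at this
  exact this

lemma tor_right {S : Type} [CommRing S] (A B : ModuleCat.{0} S) (s : S) (h : ∀ a : B, s • a = 0)
    (n : ℕ) (x : ((Tor (ModuleCat.{0} S) n).obj A).obj B) : s • x = 0 := by
  let P := projectiveResolution B
  obtain ⟨H⟩ := aux_resolution B P s h
  let F := (MonoidalCategory.tensoringLeft (ModuleCat.{0} S)).obj A
  refine aux_iso (P.isoLeftDerivedObj F n) s
    (fun y => aux_homology _ s (((Homotopy.ofEq ?_).trans (F.mapHomotopy H)).trans (.ofEq ?_)) n y) x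
  · ext1 i
    have : MonoidalCategory.whiskerLeft A (s • 𝟙 (P.complex.X i)) = s • 𝟙 _ := by
      rw [MonoidalLinear.whiskerLeft_smul, MonoidalCategory.whiskerLeft_id]
    exact this.symm
  · simp

lemma ext_right {S : Type} [CommRing S] (A B : ModuleCat.{0} S) (s : S) (h : ∀ a : B, s • a = 0)
    (n : ℕ) (x : ((Ext S (ModuleCat.{0} S) n).obj (Opposite.op A)).obj B) : s • x = 0 := by
  let P := projectiveResolution A
  refine aux_iso (P.isoExt n B) s (fun y => aux_homology _ s (.ofEq ?_) n y) x
  ext i f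
  have : ∀ f : P.complex.X i ⟶ B, s • f = 0 := by
    intro f
    ext a
    exact h _
  exact this f

lemma ext_left {S : Type} [CommRing S] (A B : ModuleCat.{0} S) (s : S) (h : ∀ a : A, s • a = 0)
    (n : ℕ) (x : ((Ext S (ModuleCat.{0} S) n).obj (Opposite.op A)).obj B) : s • x = 0 := by
  let P := projectiveResolution A
  obtain ⟨H⟩ := aux_resolution A P s h
  let F := ((linearYoneda S (ModuleCat.{0} S)).obj B).rightOp
  refine aux_iso (P.isoExt n B) s (fun y => aux_homology _ s
    (((Homotopy.ofEq ?_).trans (F.mapHomotopy H).unop).trans (.ofEq ?_)) n y) x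
  · ext i f
    have : ∀ f : P.complex.X i ⟶ B, s • f = (s • 𝟙 _) ≫ f := by
      intro f
      simp
    exact this f
  · ext i f
    have : ∀ f : P.complex.X i ⟶ B, (0 : P.complex.X i ⟶ P.complex.X i) ≫ f = 0 := by
      intro f
      simp
    exact this f

open scoped nonZeroDivisors TensorProduct


lemma rank_fin {R A : Type} [CommRing R] [IsDomain R] [AddCommGroup A] [Module R A]
    (n : ℕ) (hn : ∀ k : ℕ, (∃ f : (Fin k →₀ R) →ₗ[R] A, Function.Injective f) → k ≤ n) :
    Module.Finite (FractionRing R) (FractionRing R ⊗[R] A) := by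
  have h : Module.rank R A ≤ n := rank_le fun s hs => by
    apply hn
    have e := s.equivFin
    have h2 := hs.comp e.symm e.symm.injective
    exact ⟨_, h2⟩
  rw [← Module.rank_lt_aleph0_iff, IsLocalization.rank_eq (FractionRing R) R⁰ le_rfl,
    IsLocalizedModule.rank_eq R⁰ le_rfl (TensorProduct.mk R (FractionRing R) A 1)]
  exact h.trans_lt (Cardinal.natCast_lt_aleph0)

open scoped IsMulCommutative in
lemma art {F V : Type} [Field F] [AddCommGroup V] [Module F V] [Module.Finite F V]
    (T : Subalgebra F (Module.End F V)) [IsMulCommutative T] (J : Ideal T) (hJ : J ≠ ⊤) :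
    ∃ v : V, v ≠ 0 ∧ ∀ t : T, t ∈ J → (t : Module.End F V) v = 0 := by
  obtain ⟨m, hm, hJm⟩ := Ideal.exists_le_maximal J hJ
  have : Module.Finite F T := Module.Finite.of_injective T.val.toLinearMap Subtype.val_injective
  have : IsArtinianRing T := IsArtinianRing.of_finite F T
  have : Module.Finite T V := Module.Finite.of_restrictScalars_finite F T V
  have hann : Module.annihilator T V = ⊥ := by
    rw [eq_bot_iff]
    intro t ht
    rw [Module.mem_annihilator] at ht
    ext v
    exact ht v
  have hmin : m ∈ (Module.annihilator T V).minimalPrimes := by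
    rw [hann]
    refine ⟨⟨hm.isPrime, bot_le⟩, fun q hq hqm => ?_⟩
    have := hq.1
    exact ((IsArtinianRing.isMaximal_of_isPrime q).eq_of_le hm.ne_top hqm).ge
  have hass := Module.associatedPrimes.minimalPrimes_annihilator_subset_associatedPrimes T V hmin
  obtain ⟨v, hv⟩ := (isAssociatedPrime_iff.1 hass).2
  refine ⟨v, ?_, ?_⟩
  · rintro rfl
    exact hm.ne_top (by rw [hv]; ext; simp)
  · intro t ht
    have := hJm ht
    rw [hv, Submodule.mem_colon_singleton] at this
    exact this

open scoped IsMulCommutative in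
lemma key {R S A : Type} [CommRing R] [IsDomain R] [CommRing S] [Algebra R S]
    [AddCommGroup A] [Module R A] [Module S A] [IsScalarTower R S A]
    (htf : ∀ (r : R) (a : A), r ≠ 0 → a ≠ 0 → r • a ≠ 0)
    (hfin : Module.Finite (FractionRing R) (FractionRing R ⊗[R] A))
    (P : Ideal S) (hP : Module.annihilator S A ≤ P)
    (hdisj : ∀ r : R, r ≠ 0 → algebraMap R S r ∉ P) :
    ∃ a : A, a ≠ 0 ∧ ∀ p ∈ P, p • a = 0 := by
  let F := FractionRing R
  let V := F ⊗[R] A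
  let ι : A →ₗ[R] V := TensorProduct.mk R F A 1
  have hloc : IsLocalizedModule R⁰ ι := inferInstance
  have hι : ∀ a, ι a = 0 → a = 0 := by
    intro a ha
    obtain ⟨c, hc⟩ := (IsLocalizedModule.eq_zero_iff R⁰ ι).1 ha
    by_contra h
    exact htf c a (nonZeroDivisors.coe_ne_zero c) h hc
  let φ : S →ₐ[R] Module.End F V :=
    (Module.End.baseChangeHom R F A).comp (Algebra.lsmul R R A)
  have hφ : ∀ s a, φ s (ι a) = ι (s • a) := fun s a => rfl
  let T := Algebra.adjoin F (Set.range φ)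
  have hT : IsMulCommutative T := Algebra.isMulCommutative_adjoin F (by
    rintro _ ⟨x, rfl⟩ _ ⟨y, rfl⟩
    rw [← map_mul, ← map_mul, mul_comm])
  have hden : ∀ t ∈ T, ∃ r : R, r ≠ 0 ∧ ∃ s : S, r • t = φ s := by
    intro t ht
    induction ht using Algebra.adjoin_induction with
    | mem x hx =>
      obtain ⟨s, rfl⟩ := hx
      exact ⟨1, one_ne_zero, s, one_smul _ _⟩
    | algebraMap f =>
      obtain ⟨⟨a, b⟩, h⟩ := IsLocalization.surj R⁰ f
      refine ⟨b, nonZeroDivisors.coe_ne_zero b, algebraMap R S a, ?_⟩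
      rw [AlgHom.commutes, IsScalarTower.algebraMap_apply R F, ← h, Algebra.smul_def,
        IsScalarTower.algebraMap_apply R F, ← map_mul, mul_comm]
    | add x y _ _ hx hy =>
      obtain ⟨r, hr, s, hs⟩ := hx
      obtain ⟨r', hr', s', hs'⟩ := hy
      refine ⟨r * r', mul_ne_zero hr hr', r' • s + r • s', ?_⟩
      rw [map_add, map_smul, map_smul, ← hs, ← hs', smul_add, smul_smul, smul_smul, mul_comm]
    | mul x y _ _ hx hy =>
      obtain ⟨r, hr, s, hs⟩ := hx
      obtain ⟨r', hr', s', hs'⟩ := hy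
      refine ⟨r * r', mul_ne_zero hr hr', s * s', ?_⟩
      rw [map_mul, ← hs, ← hs', smul_mul_smul_comm]
  let J : Ideal T :=
    { carrier := {t | ∃ r : R, r ≠ 0 ∧ ∃ p ∈ P, r • (t : Module.End F V) = φ p}
      add_mem' := by
        rintro x y ⟨r, hr, s, hsP, hs⟩ ⟨r', hr', s', hsP', hs'⟩
        refine ⟨r * r', mul_ne_zero hr hr', r' • s + r • s', ?_, ?_⟩
        · rw [Algebra.smul_def, Algebra.smul_def]
          exact P.add_mem (P.mul_mem_left _ hsP) (P.mul_mem_left _ hsP')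
        · rw [map_add, map_smul, map_smul, ← hs, ← hs', Subalgebra.coe_add, smul_add, smul_smul,
            smul_smul, mul_comm]
      zero_mem' := ⟨1, one_ne_zero, 0, P.zero_mem, by simp⟩
      smul_mem' := by
        rintro c x ⟨r', hr', s', hsP', hs'⟩
        obtain ⟨r, hr, s, hs⟩ := hden c c.2
        refine ⟨r * r', mul_ne_zero hr hr', s * s', P.mul_mem_left _ hsP', ?_⟩
        rw [map_mul, ← hs, ← hs', smul_mul_smul_comm]
        rfl }
  have hJ : J ≠ ⊤ := by
    rw [Ne, Ideal.eq_top_iff_one]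
    rintro ⟨r, hr, p, hp, h⟩
    have : algebraMap R S r - p ∈ P := by
      apply hP
      rw [Module.mem_annihilator]
      intro a
      apply hι
      rw [← hφ, map_sub, ← h, AlgHom.commutes, Algebra.smul_def]
      simp
    exact hdisj r hr (by simpa using P.add_mem this hp)
  obtain ⟨m, hm, hJm⟩ := Ideal.exists_le_maximal J hJ
  obtain ⟨v, hv0, hv⟩ := art T J hJ
  obtain ⟨⟨a, c⟩, hac⟩ := IsLocalizedModule.surj R⁰ ι v
  have hc0 : algebraMap R F (c : R) ≠ 0 := by
    simp
  have hac' : algebraMap R F (c : R) • v = ι a := by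
    rw [algebraMap_smul]; exact hac
  refine ⟨a, ?_, ?_⟩
  · rintro rfl
    rw [map_zero] at hac'
    exact hv0 ((smul_eq_zero_iff_right hc0).1 hac')
  · intro p hp
    apply hι
    have h1 : φ p v = 0 := hv ⟨φ p, Algebra.subset_adjoin ⟨p, rfl⟩⟩
      ⟨1, one_ne_zero, p, hp, one_smul _ _⟩
    rw [← hφ, ← hac', map_smul, h1, smul_zero]

lemma coprime_ann {R S A B : Type} [CommRing R] [IsDomain R] [CommRing S] [Algebra R S]
    [AddCommGroup A] [Module R A] [Module S A] [IsScalarTower R S A]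
    [AddCommGroup B] [Module R B] [Module S B] [IsScalarTower R S B]
    (htfA : ∀ (r : R) (a : A), r ≠ 0 → a ≠ 0 → r • a ≠ 0)
    (htfB : ∀ (r : R) (a : B), r ≠ 0 → a ≠ 0 → r • a ≠ 0)
    (hfinA : Module.Finite (FractionRing R) (FractionRing R ⊗[R] A))
    (hfinB : Module.Finite (FractionRing R) (FractionRing R ⊗[R] B))
    (hsub : ¬ ∃ (P : Submodule S A) (Q : Submodule S B),
        P ≠ ⊥ ∧ Nonempty (P ≃ₗ[S] Q)) :
    ∃ r : R, r ≠ 0 ∧ ∃ x ∈ Module.annihilator S A, ∃ y ∈ Module.annihilator S B,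
      x + y = algebraMap R S r := by
  by_contra hcon
  apply hsub
  let M : Submonoid S := Submonoid.map (algebraMap R S) R⁰
  have hM : Disjoint ((Module.annihilator S A ⊔ Module.annihilator S B : Ideal S) : Set S) (M : Set S) := by
    rw [Set.disjoint_left]
    rintro _ hx ⟨r, hr, rfl⟩
    obtain ⟨x, hx, y, hy, h⟩ := Submodule.mem_sup.1 hx
    exact hcon ⟨r, nonZeroDivisors.ne_zero hr, x, hx, y, hy, h⟩
  obtain ⟨P, hle, hPm⟩ := zorn_le_nonempty₀ {p : Ideal S | Disjoint (p : Set S) M}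
    (fun c hc hc' x hx => ⟨sSup c, by
      have hne : c.Nonempty := ⟨x, hx⟩
      rw [Set.mem_setOf_eq, Set.disjoint_left]
      intro z hz hzM
      obtain ⟨q, hq, hzq⟩ := (Submodule.mem_sSup_of_directed hne hc'.directedOn).1 hz
      exact Set.disjoint_left.1 (hc hq) hzq hzM, fun _ => le_sSup⟩) _ hM
  have hdisj : Disjoint (P : Set S) M := hPm.1
  have hd : ∀ r : R, r ≠ 0 → algebraMap R S r ∉ P := fun r hr h =>
    Set.disjoint_left.1 hdisj h ⟨r, mem_nonZeroDivisors_of_ne_zero hr, rfl⟩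
  obtain ⟨a, ha, haP⟩ := key htfA hfinA P (le_sup_left.trans hle) hd
  obtain ⟨b, hb, hbP⟩ := key htfB hfinB P (le_sup_right.trans hle) hd
  have eA : P = Ideal.torsionOf S A a := by
    refine hPm.eq_of_le ?_ (fun p hp => (Ideal.mem_torsionOf_iff _ _).2 (haP p hp))
    rw [Set.mem_setOf_eq, Set.disjoint_left]
    rintro _ hz ⟨r, hr, rfl⟩
    have hz' := (Ideal.mem_torsionOf_iff _ _).1 hz
    rw [algebraMap_smul] at hz'
    exact htfA r a (nonZeroDivisors.ne_zero hr) ha hz'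
  have eB : P = Ideal.torsionOf S B b := by
    refine hPm.eq_of_le ?_ (fun p hp => (Ideal.mem_torsionOf_iff _ _).2 (hbP p hp))
    rw [Set.mem_setOf_eq, Set.disjoint_left]
    rintro _ hz ⟨r, hr, rfl⟩
    have hz' := (Ideal.mem_torsionOf_iff _ _).1 hz
    rw [algebraMap_smul] at hz'
    exact htfB r b (nonZeroDivisors.ne_zero hr) hb hz'
  refine ⟨S ∙ a, S ∙ b, ?_, ⟨(Ideal.quotTorsionOfEquivSpanSingleton S A a).symm ≪≫ₗ
    Submodule.quotEquivOfEq _ _ (eA.symm.trans eB) ≪≫ₗ Ideal.quotTorsionOfEquivSpanSingleton S B b⟩⟩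
  simpa using ha

end Aux

/-- **Proposition 2.1.**  Let `R` be a principal ideal domain such that `R/Ra` is
finite for every nonzero `a : R`, and let `G` be an abelian group.  Let `A` and
`B` be `RG`-modules that are `R`-torsion-free of finite `R`-rank, and suppose
`A` contains no nontrivial `RG`-submodule isomorphic to an `RG`-submodule of
`B`.  Then `Ext^n_{RG}(A, B)` and `Tor_n^{RG}(A, B)` are bounded `R`-modules for
all `n ≥ 0`. -/
theorem ext_tor_bounded_over_abelian_group_ring
    (R : Type) [CommRing R] [IsDomain R] [IsPrincipalIdealRing R]
    (hRfin : ∀ a : R, a ≠ 0 → Finite (R ⧸ Ideal.span ({a} : Set R)))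
    (G : Type) [CommGroup G]
    (A B : ModuleCat (MonoidAlgebra R G))
    (hAtf : RTorsionFree R (MonoidAlgebra R G) A)
    (hBtf : RTorsionFree R (MonoidAlgebra R G) B)
    (hAfr : FiniteRankOver R (MonoidAlgebra R G) A)
    (hBfr : FiniteRankOver R (MonoidAlgebra R G) B)
    (hsub : ¬ ∃ (P : Submodule (MonoidAlgebra R G) A)
        (Q : Submodule (MonoidAlgebra R G) B),
        P ≠ ⊥ ∧ Nonempty (P ≃ₗ[MonoidAlgebra R G] Q))
    (n : ℕ) :
    RBounded R (MonoidAlgebra R G)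
      (((Ext (MonoidAlgebra R G) (ModuleCat (MonoidAlgebra R G)) n).obj
        (Opposite.op A)).obj B) ∧
    RBounded R (MonoidAlgebra R G)
      (((Tor (ModuleCat (MonoidAlgebra R G)) n).obj A).obj B) := by
  letI : Module R A := Module.compHom A (algebraMap R (MonoidAlgebra R G))
  letI : Module R B := Module.compHom B (algebraMap R (MonoidAlgebra R G))
  haveI : IsScalarTower R (MonoidAlgebra R G) A := IsScalarTower.of_algebraMap_smul fun _ _ => rfl
  haveI : IsScalarTower R (MonoidAlgebra R G) B := IsScalarTower.of_algebraMap_smul fun _ _ => rfl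
  obtain ⟨nA, hnA⟩ := hAfr.1
  obtain ⟨nB, hnB⟩ := hBfr.1
  obtain ⟨r, hr, x, hx, y, hy, hxy⟩ := coprime_ann (R := R) (S := MonoidAlgebra R G) (A := A)
    (B := B) hAtf hBtf
    (rank_fin nA fun k ⟨f, hf⟩ => hnA k ⟨f.toAddMonoidHom, hf, fun r v => f.map_smul r v⟩)
    (rank_fin nB fun k ⟨f, hf⟩ => hnB k ⟨f.toAddMonoidHom, hf, fun r v => f.map_smul r v⟩) hsub
  rw [Module.mem_annihilator] at hx hy
  refine ⟨⟨r, hr, fun e => ?_⟩, ⟨r, hr, fun e => ?_⟩⟩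
  · rw [← hxy, add_smul]
    erw [ext_left A B x hx n e, ext_right A B y hy n e]
    exact add_zero _
  · rw [← hxy, add_smul]
    erw [tor_left A B x hx n e, tor_right A B y hy n e]
    exact add_zero _

end
end

section
/- Let G be a group and D a ℤG-module whose underlying abelian group is a divisible Černikov group. If E is a ℤG-module containing a ℤG-submodule isomorphic to D such that the quotient E/D is finite, then E contains a finite ℤG-submodule F such that E/F is isomorphic as a ℤG-module to a quotient of D. -/
/-!
Statement 8: a `ℤG`-module extension of a finite module by a divisible Černikov
module can be rewritten as an extension of a finite module by a quotient of the
divisible module.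
-/

open CategoryTheory

noncomputable section




theorem exists_rep_hom {k G : Type} [CommRing k] [Group G] (A B : Rep.{0} k G)
    (f : A.V → B.V) (hadd : ∀ x y, f (x + y) = f x + f y)
    (hsm : ∀ (z : k) x, f (z • x) = z • f x)
    (hg : ∀ (g : G) x, f (A.ρ g x) = B.ρ g (f x)) :
    ∃ e : A ⟶ B, ∀ x, e.hom x = f x :=
  ⟨Rep.ofHom
    { toFun := f
      map_add' := hadd
      map_smul' := hsm
      isIntertwining' := fun g => LinearMap.ext (hg g) }, fun _ => rfl⟩

theorem torsion_finite_of_finite_index {A : Type*} [AddCommGroup A] (H : AddSubgroup A)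
    (hH : Finite (A ⧸ H)) (n : ℕ) (h : {a : A | a ∈ H ∧ n • a = 0}.Finite) :
    {a : A | n • a = 0}.Finite := by
  refine Set.Finite.of_finite_fibers (fun a : A => (a : A ⧸ H)) (Set.toFinite _) ?_
  rintro _ ⟨b, hb, rfl⟩
  refine (h.image (fun a => b + a)).subset ?_
  rintro c ⟨hc, hcb⟩
  refine ⟨-b + c, ⟨?_, ?_⟩, by simp⟩
  · exact QuotientAddGroup.eq.1 (Eq.symm hcb)
  · have hb' : n • b = 0 := hb
    have hc' : n • c = 0 := hc
    rw [smul_add, smul_neg, hb', hc']; simp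

theorem ratCircle_torsion_finite (n : ℕ) (hn : 0 < n) :
    {x : RatCircle | n • x = 0}.Finite := by
  refine AddCircle.finite_torsion_of_isSMulRegular (1 : ℚ) n ?_
  intro a b hab
  have : (n : ℚ) ≠ 0 := by positivity
  simpa [this, hn.ne'] using hab

theorem cernikov_torsion_finite {A : Type*} [AddCommGroup A] (hA : IsCernikov A)
    (n : ℕ) (hn : 0 < n) : {a : A | n • a = 0}.Finite := by
  obtain ⟨S, r, p, hS, -, ⟨φ⟩⟩ := hA
  refine torsion_finite_of_finite_index S 
    (haveI : S.FiniteIndex := ⟨hS⟩; AddSubgroup.finite_quotient_of_finiteIndex) n ?_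
  have h1 : {f : Fin r → RatCircle | ∀ j, n • f j = 0}.Finite := by
    have := Set.Finite.pi' (fun _ : Fin r => ratCircle_torsion_finite n hn)
    exact this
  have h2 : {s : S | n • s = 0}.Finite := by
    refine Set.Finite.of_finite_image (f := fun s : S => fun j => (φ s j : RatCircle))
      (h1.subset ?_) ?_
    · rintro _ ⟨s, hs, rfl⟩ j
      have hs' : n • s = 0 := hs
      have : n • φ s = 0 := by rw [← map_nsmul, hs', map_zero]
      have h3 := congrArg (fun y => ((y j : pruferSubgroup (p j)) : RatCircle)) this
      simpa using h3
    · intro s _ t _ hst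
      apply φ.injective
      funext j
      exact Subtype.ext (congrFun hst j)
  refine (h2.image (Subtype.val)).subset ?_
  rintro a ⟨ha, hna⟩
  exact ⟨⟨a, ha⟩, Subtype.ext hna, rfl⟩

/-- Let `G` be a group and `D` a `ℤG`-module whose underlying abelian group is a
divisible Černikov group.  If `E` is a `ℤG`-module containing a `ℤG`-submodule
isomorphic to `D` (realized by an injective morphism `i : D ⟶ E`) such that the
quotient `E/D` is finite, then `E` has a finite `ℤG`-submodule `F` (realized as
the kernel of a morphism `e : E ⟶ C` onto a quotient `C` of `D`) such that `E/F`
is isomorphic as a `ℤG`-module to a quotient of `D`. -/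
theorem extension_of_divisible_cernikov_by_finite (G : Type) [Group G]
    (D E : Rep ℤ G)
    (hdiv : ∀ (d : (D : Type)) (m : ℕ), 0 < m → ∃ d' : (D : Type), m • d' = d)
    (hcern : IsCernikov D)
    (i : D ⟶ E) (hinj : Function.Injective i.hom)
    (hfin : Finite ((E : Type) ⧸ (AddMonoidHom.mk' (fun d => i.hom d)
      (fun a b => by exact map_add i.hom a b)).range)) :
    ∃ (C : Rep ℤ G) (q : D ⟶ C) (e : E ⟶ C),
      Function.Surjective q.hom ∧ Function.Surjective e.hom ∧
      {x : (E : Type) | e.hom x = 0}.Finite := by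
  classical
  set R := (AddMonoidHom.mk' (fun d => i.hom d)
      (fun a b => by exact map_add i.hom a b)).range with hR
  have hmem : ∀ x : (E : Type), x ∈ R ↔ ∃ d : (D : Type), i.hom d = x := fun x => Iff.rfl
  set n := Nat.card ((E : Type) ⧸ R) with hn
  have hn0 : 0 < n := Nat.card_pos
  have hnE : ∀ x : (E : Type), ∃ d : (D : Type), i.hom d = n • x := by
    intro x
    rw [← hmem, ← QuotientAddGroup.eq_zero_iff, QuotientAddGroup.mk_nsmul]
    exact card_nsmul_eq_zero'
  choose f hf using hnE
  have hsm : ∀ (z : ℤ) (x : (E : Type)), f (E.hV2.smul z x) = D.hV2.smul z (f x) := by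
    intro z x
    apply hinj
    have h1 : E.hV2.smul z x = z • x := int_smul_eq_zsmul E.hV2 z x
    have h2 : D.hV2.smul z (f x) = z • f x := int_smul_eq_zsmul D.hV2 z (f x)
    rw [h1, h2, map_zsmul, hf, hf, smul_comm]
  obtain ⟨e, he⟩ := exists_rep_hom E D f
    (fun x y => hinj (by rw [map_add, hf, hf, hf, smul_add])) hsm (by
      intro g v
      apply hinj
      rw [Rep.hom_comm_apply, hf, hf, map_nsmul])
  refine ⟨D, 𝟙 D, e, fun d => ⟨d, rfl⟩, ?_, ?_⟩
  · intro d
    obtain ⟨d', hd'⟩ := hdiv d n hn0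
    refine ⟨i.hom d', ?_⟩
    rw [he]
    apply hinj
    rw [hf, ← hd', map_nsmul]
  · have hfinal : {x : (E : Type) | n • x = 0}.Finite := by
      refine torsion_finite_of_finite_index R hfin n ?_
      refine ((cernikov_torsion_finite hcern n hn0).image i.hom).subset ?_
      rintro x ⟨⟨d, rfl⟩, hx⟩
      refine ⟨d, hinj ?_, rfl⟩
      rw [map_nsmul, map_zero]
      exact hx
    refine hfinal.subset ?_
    intro x hx
    have hx' : f x = 0 := (he x).symm.trans hx
    change n • x = 0
    rw [← hf, hx', map_zero]

end
end

section
/- Let p be a prime and G a group. Let A and B be ℤG-modules whose underlying additive groups are abelian p-groups of finite rank, and suppose that the underlying abelian group of B is divisible. Then for all n ≥ 0 there is an isomorphism of abelian groups Ext^n_{ℤG}(A,B) ≅ Ext^n_{ℤ_pG}(B*, A*), where ℤ_p denotes the ring of p-adic integers and B*, A* are the Pontryagin duals with the contragredient G-action. -/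
/-!
Statement 12: Lemma 2.9 of the paper (Pontryagin duality for Ext groups).
The quasicyclic group `ℤ(p^∞)` is realized as `ℚ_p/ℤ_p`, which carries its
natural module structure over the ring `ℤ_p` of `p`-adic integers; the
Pontryagin dual of a `ℤG`-module `X` is `Hom_ℤ(X, ℤ(p^∞))` with the
contragredient `G`-action, a `ℤ_pG`-module.  `Ext` groups over `ℤG` and `ℤ_pG`
are the `Ext` groups of the abelian categories `Rep ℤ G` and `Rep ℤ_p G`.
-/

open CategoryTheory

noncomputable section




variable (p : ℕ) [Fact p.Prime]

/-- The quasicyclic group `ℤ(p^∞)`, realized as `ℚ_p/ℤ_p`, a `ℤ_p`-module. -/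
abbrev ZpQuasicyclic : Type := ℚ_[p] ⧸ (Submodule.span ℤ_[p] {(1 : ℚ_[p])})

/-- The Pontryagin dual `Hom_ℤ(X, ℤ(p^∞))` of an abelian group `X`, as a
`ℤ_p`-module. -/
abbrev PontryaginDual' (X : Type) [AddCommGroup X] : Type :=
  X →ₗ[ℤ] ZpQuasicyclic p

variable {G : Type} [Group G]

/-- The contragredient representation on the Pontryagin dual of (the underlying
abelian group of) a representation, `(g • φ) x = φ (g⁻¹ • x)`. -/
def dualRep (A : Rep ℤ G) : Representation ℤ_[p] G (PontryaginDual' p (A : Type)) where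
  toFun g :=
    { toFun := fun φ => φ ∘ₗ (A.ρ g⁻¹)
      map_add' := fun φ ψ => LinearMap.add_comp _ _ _
      map_smul' := fun z φ => LinearMap.smul_comp _ _ _ }
  map_one' := by
    ext φ x
    simp
  map_mul' g h := by
    ext φ x
    simp [mul_inv_rev]

/-- The Pontryagin dual of a `ℤG`-module, as an object of `Rep ℤ_p G`. -/
def pontryaginDualRep (A : Rep ℤ G) : Rep ℤ_[p] G := Rep.of (dualRep p A)

universe w v u v' u'


theorem aux_extMk_zero_iff {C : Type u} [Category.{v} C] [Abelian C] [HasExt.{w} C] {X Y : C}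
    (P : ProjectiveResolution X) (f : P.complex.X 0 ⟶ Y) 
    (hf : P.complex.d 1 0 ≫ f = 0) : P.extMk f 1 rfl hf = 0 ↔ f = 0 := by
  refine ⟨fun h => ?_, fun h => by subst h; simp⟩
  simp only [← P.extEquivCohomologyClass.apply_eq_iff_eq,
    ProjectiveResolution.extEquivCohomologyClass_extMk, ProjectiveResolution.extEquivCohomologyClass_zero,
    CochainComplex.HomComplex.CohomologyClass.mk_eq_zero_iff] at h
  rw [CochainComplex.HomComplex.Cocycle.toSingleMk_mem_coboundaries_iff _ _ _ _ _ 1 (by lia)] at h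
  obtain ⟨g, hg⟩ := h
  have hz : P.cochainComplex.d (-(0:ℕ)) 1 = 0 := by
    apply Limits.IsZero.eq_of_tgt
    exact P.cochainComplex.isZero_of_isStrictlyLE 0 1 (by lia)
  rw [hz, Limits.zero_comp] at hg
  rw [← cancel_epi (P.cochainComplexXIso (-(0:ℕ)) 0 rfl).hom]
  simpa using hg.symm

theorem aux_ext_compare (R : Type u') [Ring R] {C : Type u} [Category.{v} C] [Abelian C] [Linear R C]
    [EnoughProjectives C] [HasExt.{w} C] (X Y : C) (n : ℕ) :
    Nonempty (((Ext R C n).obj (Opposite.op X)).obj Y ≃+ Abelian.Ext X Y n) := by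
  have P : ProjectiveResolution X := projectiveResolution X
  let K := P.complex.linearYonedaObj R Y
  have hd : ∀ (i j : ℕ) (x : P.complex.X i ⟶ Y), (K.d i j : K.X i ⟶ K.X j) x = P.complex.d j i ≫ x := by
    intro i j x
    rfl
  let ι : K.cycles n →+ (P.complex.X n ⟶ Y) := (K.iCycles n).hom.toAddMonoidHom
  have hcyc : ∀ c : K.cycles n, P.complex.d (n+1) n ≫ ι c = 0 := fun c =>
    (hd n (n+1) (ι c)).symm.trans congr($(K.iCycles_d n (n+1)) c)
  let φ : K.cycles n →+ Abelian.Ext X Y n := 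
    { toFun := fun c => P.extMk (ι c) (n+1) rfl (hcyc c)
      map_zero' := by
        simp only [map_zero]; simp
      map_add' := by
        intro a b
        rw [P.add_extMk]
        congr 1
        exact map_add ι a b }
  have hφ : Function.Surjective φ := by
    intro α
    obtain ⟨f, hf, rfl⟩ := P.extMk_surjective α (n+1) rfl
    have hex : (ShortComplex.mk _ _ (K.iCycles_d n (n+1))).Exact := 
      ShortComplex.exact_of_f_is_kernel _ (K.cyclesIsKernel n (n+1) (by simp))
    rw [ShortComplex.moduleCat_exact_iff] at hex
    obtain ⟨c, hc⟩ := hex f hf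
    replace hc : ι c = f := hc
    subst hc
    exact ⟨c, rfl⟩
  let ψ : K.cycles n →+ K.homology n := (K.homologyπ n).hom.toAddMonoidHom
  have hψ : Function.Surjective ψ := (ModuleCat.epi_iff_surjective (K.homologyπ n)).1 inferInstance
  have hinj : Function.Injective (K.iCycles n) := (ModuleCat.mono_iff_injective (K.iCycles n)).1 inferInstance
  have hker : ψ.ker = φ.ker := by
    ext c
    rw [AddMonoidHom.mem_ker, AddMonoidHom.mem_ker]
    have hex : ∀ i (hi : (ComplexShape.up ℕ).prev n = i), ψ c = 0 ↔ ∃ z : K.X i, K.toCycles i n z = c := by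
      intro i hi
      have hex : (ShortComplex.mk _ _ (K.toCycles_comp_homologyπ i n)).Exact := 
        ShortComplex.exact_of_g_is_cokernel _ (K.homologyIsCokernel i n hi)
      rw [ShortComplex.moduleCat_exact_iff] at hex
      refine ⟨fun h => hex c h, ?_⟩
      rintro ⟨z, rfl⟩
      exact congr($(K.toCycles_comp_homologyπ i n) z)
    cases n with
    | zero =>
      rw [hex 0 (by simp)]
      change _ ↔ P.extMk (ι c) _ rfl (hcyc c) = 0
      rw [aux_extMk_zero_iff]
      constructor
      · rintro ⟨z, rfl⟩
        have h1 := congr($(K.toCycles_i 0 0) z)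
        rw [K.shape _ _ (by simp)] at h1
        exact h1
      · intro h
        refine ⟨0, hinj ?_⟩
        rw [map_zero, map_zero]
        exact h.symm
    | succ m =>
      rw [hex m (by simp)]
      change _ ↔ P.extMk (ι c) _ rfl (hcyc c) = 0
      rw [P.extMk_eq_zero_iff _ _ _ _ m rfl]
      constructor
      · rintro ⟨z, rfl⟩
        exact ⟨z, congr($(K.toCycles_i m (m+1)) z).symm⟩
      · rintro ⟨g, hg⟩
        refine ⟨g, hinj ?_⟩
        exact (congr($(K.toCycles_i m (m+1)) g)).trans hg
  let e : ((Ext R C n).obj (Opposite.op X)).obj Y ≃+ K.homology n := (P.isoExt n Y).toLinearEquiv.toAddEquiv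
  exact ⟨e.trans ((QuotientAddGroup.quotientKerEquivOfSurjective ψ hψ).symm.trans 
    ((QuotientAddGroup.quotientAddEquivOfEq hker).trans (QuotientAddGroup.quotientKerEquivOfSurjective φ hφ)))⟩


theorem aux_equiv_of_surj {A B A' B' : Type*} [AddCommGroup A] [AddCommGroup B] [AddCommGroup A']
    [AddCommGroup B'] (φ : A →+ B) (ψ : A' →+ B') (hφ : Function.Surjective φ)
    (hψ : Function.Surjective ψ) (e : A ≃+ A') (h : ∀ a, φ a = 0 ↔ ψ (e a) = 0) :
    Nonempty (B ≃+ B') := by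
  have hψ' : Function.Surjective (ψ.comp e.toAddMonoidHom) := hψ.comp e.surjective
  have hker : φ.ker = (ψ.comp e.toAddMonoidHom).ker := by
    ext a
    exact h a
  exact ⟨(QuotientAddGroup.quotientKerEquivOfSurjective φ hφ).symm.trans 
    ((QuotientAddGroup.quotientAddEquivOfEq hker).trans
      (QuotientAddGroup.quotientKerEquivOfSurjective _ hψ'))⟩

theorem aux_step {C : Type u} [Category.{v} C] [Abelian C]
    [HasExt.{w} C] {E : Type u'} [Category.{v'} E] [Abelian E] [HasExt.{w} E]
    {S : ShortComplex C} (hS : S.ShortExact) {T : ShortComplex E} (hT : T.ShortExact)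
    [Projective S.X₂] [Injective T.X₂] (B : C) (M : E) (n : ℕ)
    (e : Abelian.Ext S.X₁ B n ≃+ Abelian.Ext M T.X₃ n)
    (h : ∀ x, (∃ y : Abelian.Ext S.X₂ B n, (Abelian.Ext.mk₀ S.f).comp y (zero_add n) = x) ↔
      (∃ y : Abelian.Ext M T.X₂ n, y.comp (Abelian.Ext.mk₀ T.g) (add_zero n) = e x)) :
    Nonempty (Abelian.Ext S.X₃ B (n+1) ≃+ Abelian.Ext M T.X₁ (n+1)) := by
  let φ : Abelian.Ext S.X₁ B n →+ Abelian.Ext S.X₃ B (n+1) :=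
    hS.extClass.precomp B (add_comm 1 n)
  let ψ : Abelian.Ext M T.X₃ n →+ Abelian.Ext M T.X₁ (n+1) := hT.extClass.postcomp M rfl
  have hφ : Function.Surjective φ := fun x =>
    Abelian.Ext.contravariant_sequence_exact₃ hS B x 
      (Abelian.Ext.eq_zero_of_projective _) (add_comm 1 n)
  have hψ : Function.Surjective ψ := fun x =>
    Abelian.Ext.covariant_sequence_exact₁ _ hT x 
      (Abelian.Ext.eq_zero_of_injective (I := T.X₂) _) rfl
  have hφ0 : ∀ x, φ x = 0 ↔ ∃ y : Abelian.Ext S.X₂ B n, (Abelian.Ext.mk₀ S.f).comp y (zero_add n) = x := by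
    intro x
    refine ⟨fun h => Abelian.Ext.contravariant_sequence_exact₁ hS B x (add_comm 1 n) h, ?_⟩
    rintro ⟨y, rfl⟩
    change hS.extClass.comp _ (add_comm 1 n) = 0
    simp
  have hψ0 : ∀ x, ψ x = 0 ↔ ∃ y : Abelian.Ext M T.X₂ n, 
      y.comp (Abelian.Ext.mk₀ T.g) (add_zero n) = x := by
    intro x
    refine ⟨fun h => Abelian.Ext.covariant_sequence_exact₃ _ hT x rfl h, ?_⟩
    rintro ⟨y, rfl⟩
    change Abelian.Ext.comp _ hT.extClass rfl = 0
    simp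
  exact aux_equiv_of_surj φ ψ hφ hψ e (fun x => by rw [hφ0, hψ0, h])

theorem aux_step_zero {C : Type u} [Category.{v} C] [Abelian C]
    [HasExt.{w} C] {E : Type u'} [Category.{v'} E] [Abelian E] [HasExt.{w} E]
    {S : ShortComplex C} (hS : S.ShortExact) {T : ShortComplex E} (hT : T.ShortExact)
    [Projective S.X₂] [Injective T.X₂] (B : C) (M : E)
    (e₁ : (S.X₁ ⟶ B) ≃+ (M ⟶ T.X₃)) (e₂ : (S.X₂ ⟶ B) ≃+ (M ⟶ T.X₂))
    (h : ∀ g, e₁ (S.f ≫ g) = e₂ g ≫ T.g) :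
    Nonempty (Abelian.Ext S.X₃ B (0+1) ≃+ Abelian.Ext M T.X₁ (0+1)) := by
  refine aux_step hS hT B M 0 
    (Abelian.Ext.addEquiv₀.trans (e₁.trans Abelian.Ext.addEquiv₀.symm)) ?_
  intro x
  obtain ⟨f, rfl⟩ := Abelian.Ext.addEquiv₀.symm.surjective x
  simp only [AddEquiv.trans_apply, AddEquiv.apply_symm_apply]
  constructor
  · rintro ⟨y, hy⟩
    obtain ⟨g, rfl⟩ := Abelian.Ext.addEquiv₀.symm.surjective y
    simp only [Abelian.Ext.addEquiv₀_symm_apply, Abelian.Ext.mk₀_comp_mk₀] at hy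
    have h1 : S.f ≫ g = f := (Abelian.Ext.mk₀_bijective _ _).1 hy
    refine ⟨Abelian.Ext.mk₀ (e₂ g), ?_⟩
    subst h1
    simp only [Abelian.Ext.addEquiv₀_symm_apply, Abelian.Ext.mk₀_comp_mk₀, h]
  · rintro ⟨y, hy⟩
    obtain ⟨g, rfl⟩ := Abelian.Ext.addEquiv₀.symm.surjective y
    obtain ⟨g, rfl⟩ := e₂.surjective g
    refine ⟨Abelian.Ext.mk₀ g, ?_⟩
    simp only [Abelian.Ext.addEquiv₀_symm_apply, Abelian.Ext.mk₀_comp_mk₀] at hy ⊢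
    have h2 := (Abelian.Ext.mk₀_bijective _ _).1 hy
    congr 1
    apply e₁.injective
    rw [← h2, h]

theorem aux_step_succ {C : Type u} [Category.{v} C] [Abelian C]
    [HasExt.{w} C] {E : Type u'} [Category.{v'} E] [Abelian E] [HasExt.{w} E]
    {S : ShortComplex C} (hS : S.ShortExact) {T : ShortComplex E} (hT : T.ShortExact)
    [Projective S.X₂] [Injective T.X₂] (B : C) (M : E) (n : ℕ)
    (e : Abelian.Ext S.X₁ B (n+1) ≃+ Abelian.Ext M T.X₃ (n+1)) :
    Nonempty (Abelian.Ext S.X₃ B (n+1+1) ≃+ Abelian.Ext M T.X₁ (n+1+1)) := by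
  refine aux_step hS hT B M (n+1) e ?_
  intro x
  constructor
  · rintro ⟨y, rfl⟩
    rw [Abelian.Ext.eq_zero_of_projective y]
    exact ⟨0, by simp⟩
  · rintro ⟨y, hy⟩
    rw [Abelian.Ext.eq_zero_of_injective y] at hy
    refine ⟨0, e.injective ?_⟩
    rw [← hy]
    simp

theorem aux_dim_shift {C : Type u} [Category.{v} C] [Abelian C] [EnoughProjectives C] 
    [HasExt.{w} C] {E : Type u'} [Category.{v'} E] [Abelian E] [HasExt.{w} E]
    (F : Cᵒᵖ ⥤ E) [F.Additive] 
    (hF : ∀ S : ShortComplex C, S.ShortExact → (S.op.map F).ShortExact)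
    (hinj : ∀ P : C, Projective P → Injective (F.obj (Opposite.op P)))
    (B : C) 
    (hB : ∀ X : C, Function.Bijective (fun f : X ⟶ B => F.map f.op))
    (n : ℕ) : ∀ A : C,
    Nonempty (Abelian.Ext A B n ≃+ Abelian.Ext (F.obj (Opposite.op B)) (F.obj (Opposite.op A)) n) := by
  let e0 : ∀ X : C, (X ⟶ B) ≃+ (F.obj (Opposite.op B) ⟶ F.obj (Opposite.op X)) := fun X =>
    { Equiv.ofBijective _ (hB X) with
      map_add' := fun f g => by
        change F.map (f + g).op = F.map f.op + F.map g.op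
        rw [op_add, F.map_add] }
  have he0 : ∀ X f, e0 X f = F.map f.op := fun X f => rfl
  induction n with
  | zero =>
    intro A
    exact ⟨Abelian.Ext.addEquiv₀.trans ((e0 A).trans Abelian.Ext.addEquiv₀.symm)⟩
  | succ n ih =>
    intro A
    let S : ShortComplex C := ShortComplex.mk (Limits.kernel.ι (Projective.π A)) (Projective.π A) (by simp)
    have hS : S.ShortExact := 
      { exact := ShortComplex.exact_of_f_is_kernel _ (Limits.kernelIsKernel _)
        mono_f := by dsimp [S]; infer_instance
        epi_g := by dsimp [S]; infer_instance }
    have hT := hF S hS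
    let T := S.op.map F
    have : Projective S.X₂ := by dsimp [S]; infer_instance
    have : Injective T.X₂ := hinj S.X₂ inferInstance
    cases n with
    | zero =>
      exact aux_step_zero hS hT B (F.obj (Opposite.op B)) (e0 S.X₁) (e0 S.X₂)
        (fun g => F.map_comp g.op S.f.op)
    | succ m =>
      obtain ⟨e⟩ := ih S.X₁
      exact aux_step_succ hS hT B (F.obj (Opposite.op B)) m e


theorem aux_mk_zero (q : ℚ_[p]) :
    (Submodule.Quotient.mk q : ZpQuasicyclic p) = 0 ↔ ∃ z : ℤ_[p], (z : ℚ_[p]) = q := by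
  rw [Submodule.Quotient.mk_eq_zero, Submodule.mem_span_singleton]
  refine exists_congr fun z => ?_
  rw [Algebra.smul_def, mul_one]
  rfl

theorem aux_div (a : ℤ_[p]) (ha : a ≠ 0) (x : ZpQuasicyclic p) : ∃ y : ZpQuasicyclic p, a • y = x := by
  obtain ⟨q, rfl⟩ := Submodule.Quotient.mk_surjective _ x
  have ha' : (a : ℚ_[p]) ≠ 0 := by simpa using ha
  refine ⟨Submodule.Quotient.mk ((a : ℚ_[p])⁻¹ * q), ?_⟩
  rw [← Submodule.Quotient.mk_smul]
  congr 1
  rw [Algebra.smul_def]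
  change (a : ℚ_[p]) * _ = _
  rw [mul_inv_cancel_left₀ ha']

theorem aux_baer_zp : Module.Baer ℤ_[p] (ZpQuasicyclic p) := by
  intro J g
  obtain ⟨a, rfl⟩ := (IsPrincipalIdealRing.principal J).principal
  by_cases ha : a = 0
  · refine ⟨0, fun x hx => ?_⟩
    have : (⟨x, hx⟩ : Submodule.span ℤ_[p] {a}) = 0 := by
      subst ha
      simpa using hx
    rw [this, map_zero, LinearMap.zero_apply]
  · obtain ⟨y, hy⟩ := aux_div p a ha (g ⟨a, Submodule.mem_span_singleton_self a⟩)
    refine ⟨LinearMap.toSpanSingleton _ _ y, fun x hx => ?_⟩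
    obtain ⟨c, rfl⟩ := Submodule.mem_span_singleton.1 hx
    have : (⟨c • a, hx⟩ : Submodule.span ℤ_[p] {a}) = c • ⟨a, Submodule.mem_span_singleton_self a⟩ := rfl
    rw [this, LinearMap.map_smul g, ← hy, LinearMap.toSpanSingleton_apply, smul_assoc]

theorem aux_baer_int : Module.Baer ℤ (ZpQuasicyclic p) := by
  have : DivisibleBy (ZpQuasicyclic p) ℤ := divisibleByOfSMulRightSurj _ _ (by
    intro n hn x
    obtain ⟨y, hy⟩ := aux_div p (n : ℤ_[p]) (by exact_mod_cast hn) x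
    exact ⟨y, by rw [← hy, Int.cast_smul_eq_zsmul]⟩)
  exact Module.Baer.of_divisible _

/-- The class of `1/p^k`. -/
def auxU (k : ℕ) : ZpQuasicyclic p := Submodule.Quotient.mk (((p : ℚ_[p]) ^ k)⁻¹)

theorem aux_pne : (p : ℚ_[p]) ≠ 0 := by exact_mod_cast (Fact.out : p.Prime).ne_zero

theorem aux_smul_u (z : ℤ_[p]) (k : ℕ) : z • auxU p k = Submodule.Quotient.mk ((z : ℚ_[p]) * ((p : ℚ_[p]) ^ k)⁻¹) := rfl

theorem aux_smul_u_zero (z : ℤ_[p]) (k : ℕ) : z • auxU p k = 0 ↔ (p : ℤ_[p]) ^ k ∣ z := by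
  rw [aux_smul_u, aux_mk_zero]
  have hp := pow_ne_zero k (aux_pne p)
  constructor
  · rintro ⟨c, hc⟩
    refine ⟨c, ?_⟩
    apply Subtype.coe_injective
    push_cast
    rw [hc]
    field_simp
  · rintro ⟨c, rfl⟩
    refine ⟨c, ?_⟩
    push_cast
    field_simp

theorem aux_exists_u (x : ZpQuasicyclic p) (k : ℕ) (h : (p ^ k : ℕ) • x = 0) :
    ∃ z : ℤ_[p], x = z • auxU p k := by
  obtain ⟨q, rfl⟩ := Submodule.Quotient.mk_surjective _ x
  rw [← Submodule.Quotient.mk_smul, aux_mk_zero] at h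
  obtain ⟨z, hz⟩ := h
  refine ⟨z, ?_⟩
  have hp := pow_ne_zero k (aux_pne p)
  rw [aux_smul_u, hz]
  congr 1
  simp
  field_simp

theorem aux_torsion (x : ZpQuasicyclic p) : ∃ k : ℕ, (p ^ k : ℕ) • x = 0 := by
  obtain ⟨q, rfl⟩ := Submodule.Quotient.mk_surjective _ x
  obtain ⟨k, hk⟩ : ∃ k : ℕ, ‖(p : ℚ_[p]) ^ k * q‖ ≤ 1 := by
    have hlt : ‖(p : ℚ_[p])‖ < 1 := Padic.norm_p_lt_one
    have ht : Filter.Tendsto (fun k : ℕ => ‖(p : ℚ_[p])‖ ^ k * ‖q‖) Filter.atTop (nhds (0 * ‖q‖)) :=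
      (tendsto_pow_atTop_nhds_zero_of_lt_one (norm_nonneg _) hlt).mul_const _
    rw [zero_mul] at ht
    obtain ⟨k, hk⟩ := (ht.eventually (gt_mem_nhds (zero_lt_one' ℝ))).exists
    exact ⟨k, by rw [norm_mul, norm_pow]; exact hk.le⟩
  refine ⟨k, ?_⟩
  rw [← Submodule.Quotient.mk_smul, aux_mk_zero]
  exact ⟨⟨_, hk⟩, by simp⟩

theorem aux_exists_nat (x : ZpQuasicyclic p) : ∃ (k n : ℕ), x = n • auxU p k := by
  obtain ⟨k, hk⟩ := aux_torsion p x
  obtain ⟨z, rfl⟩ := aux_exists_u p x k hk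
  refine ⟨k, z.appr k, ?_⟩
  rw [← Nat.cast_smul_eq_nsmul ℤ_[p], ← sub_eq_zero, ← sub_smul, aux_smul_u_zero]
  exact Ideal.mem_span_singleton.1 (z.appr_spec k)

theorem aux_p_u (k : ℕ) : p • auxU p (k+1) = auxU p k := by
  rw [← Nat.cast_smul_eq_nsmul ℤ_[p], aux_smul_u]
  unfold auxU
  congr 1
  have hp := (aux_pne p)
  push_cast
  field_simp
  ring

theorem aux_end (f : ZpQuasicyclic p →ₗ[ℤ] ZpQuasicyclic p) : ∃ c : ℤ_[p], ∀ x, f x = c • x := by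
  have h0 : ∀ k, ∃ z : ℤ_[p], f (auxU p k) = z • auxU p k := by
    intro k
    apply aux_exists_u
    rw [← map_nsmul]
    rw [← Nat.cast_smul_eq_nsmul ℤ_[p], (aux_smul_u_zero p _ k).2 (by push_cast; exact dvd_rfl), map_zero]
  choose a ha using h0
  have h1 : ∀ k, (p : ℤ_[p]) ^ k ∣ a k - a (k+1) := by
    intro k
    rw [← aux_smul_u_zero, sub_smul, ← ha, sub_eq_zero]
    nth_rewrite 1 [← aux_p_u]
    rw [map_nsmul, ha, smul_comm, aux_p_u]
  have h2 : ∀ m d, (p : ℤ_[p]) ^ m ∣ a m - a (m+d) := by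
    intro m d
    induction d with
    | zero => simp
    | succ d ih =>
      have := dvd_add ih ((pow_dvd_pow _ (Nat.le_add_right m d)).trans (h1 (m+d)))
      simpa [add_assoc] using this
  obtain ⟨L, hL⟩ := IsPrecomplete.prec (I := IsLocalRing.maximalIdeal ℤ_[p]) (M := ℤ_[p])
    inferInstance (f := a) (by
      intro m n hmn
      obtain ⟨d, rfl⟩ := Nat.exists_eq_add_of_le hmn
      rw [SModEq.sub_mem, PadicInt.maximalIdeal_eq_span_p, Ideal.span_singleton_pow, smul_eq_mul,
        Ideal.mul_top, Ideal.mem_span_singleton]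
      exact h2 m d)
  have hL' : ∀ k, (p : ℤ_[p]) ^ k ∣ a k - L := by
    intro k
    have := hL k
    rwa [SModEq.sub_mem, PadicInt.maximalIdeal_eq_span_p, Ideal.span_singleton_pow, smul_eq_mul,
        Ideal.mul_top, Ideal.mem_span_singleton] at this
  refine ⟨L, fun x => ?_⟩
  obtain ⟨k, n, rfl⟩ := aux_exists_nat p x
  rw [map_nsmul, ha, smul_comm L n]
  congr 1
  rw [← sub_eq_zero, ← sub_smul, aux_smul_u_zero]
  exact hL' k

theorem aux_sep {V : Type} [AddCommGroup V] (hV : ∀ v : V, ∃ k : ℕ, (p ^ k : ℕ) • v = 0)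
    (v : V) (hv : v ≠ 0) : ∃ φ : V →ₗ[ℤ] ZpQuasicyclic p, φ v ≠ 0 := by
  classical
  let k := Nat.find (hV v)
  have hk : (p ^ k : ℕ) • v = 0 := Nat.find_spec (hV v)
  have hk0 : k ≠ 0 := by
    intro h
    rw [h] at hk
    simp at hk
    exact hv hk
  obtain ⟨m, hm⟩ := Nat.exists_eq_succ_of_ne_zero hk0
  have hm' : (p ^ m : ℕ) • v ≠ 0 := Nat.find_min (hV v) (by change m < k; omega)
  set w := (p ^ m : ℕ) • v with hw
  have hpw : (p : ℤ) • w = 0 := by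
    rw [hm, pow_succ', mul_smul, ← hw] at hk
    rw [natCast_zsmul, hk]
  suffices ∃ φ : V →ₗ[ℤ] ZpQuasicyclic p, φ w ≠ 0 by
    obtain ⟨φ, hφ⟩ := this
    refine ⟨φ, fun h => hφ ?_⟩
    rw [hw, map_nsmul, h, smul_zero]
  let s := LinearMap.toSpanSingleton ℤ V w
  let t := LinearMap.toSpanSingleton ℤ (ZpQuasicyclic p) (auxU p 1)
  have hst : LinearMap.ker s ≤ LinearMap.ker t := by
    intro n hn
    rw [LinearMap.mem_ker, LinearMap.toSpanSingleton_apply] at hn ⊢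
    have hdvd : (p : ℤ) ∣ n := by
      by_contra hnd
      have hcop : IsCoprime (p : ℤ) n := 
        ((Nat.prime_iff_prime_int.1 (Fact.out : p.Prime)).coprime_iff_not_dvd).2 hnd
      obtain ⟨a, b, hab⟩ := hcop
      apply hm'
      rw [← one_smul ℤ w, ← hab, add_smul, mul_smul, mul_smul, hn, hpw, smul_zero, smul_zero, add_zero]
    obtain ⟨c, rfl⟩ := hdvd
    rw [← Int.cast_smul_eq_zsmul ℤ_[p], aux_smul_u_zero]
    push_cast
    simp
  have hinj : Function.Injective ((LinearMap.ker s).liftQ s le_rfl) := by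
    rw [← LinearMap.ker_eq_bot, Submodule.ker_liftQ_eq_bot _ _ _ le_rfl]
  obtain ⟨φ, hφ⟩ := (aux_baer_int p).extension_property _ hinj ((LinearMap.ker s).liftQ t hst)
  refine ⟨φ, fun h => ?_⟩
  have h1 : φ (s 1) = t 1 := congr($hφ (Submodule.Quotient.mk 1))
  have h2 : s 1 = w := by simp [s]
  have h3 : t 1 = auxU p 1 := by simp [t]
  rw [h2, h3, h] at h1
  have h4 := (aux_smul_u_zero p 1 1).1 (by rw [one_smul, ← h1])
  rw [pow_one] at h4
  exact PadicInt.prime_p.not_isUnit (isUnit_of_dvd_one h4)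

theorem aux_reflexive {B : Type} [AddCommGroup B] (hB : ∀ v : B, ∃ k : ℕ, (p ^ k : ℕ) • v = 0)
    (hfin : {a : B | p • a = 0}.Finite) (θ : PontryaginDual' p B →ₗ[ℤ_[p]] ZpQuasicyclic p) :
    ∃ b : B, ∀ φ, θ φ = φ b := by
  classical
  have : Finite {a : B | p • a = 0} := hfin
  let ι := {a : B | p • a = 0}
  have hch : ∀ i : ι, ∃ φ : B →ₗ[ℤ] ZpQuasicyclic p, (i : B) ≠ 0 → φ i ≠ 0 := by
    intro i
    by_cases hi : (i : B) = 0
    · exact ⟨0, fun h => (h hi).elim⟩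
    · obtain ⟨φ, hφ⟩ := aux_sep p hB i hi
      exact ⟨φ, fun _ => hφ⟩
  choose χ hχ using hch
  have := Fintype.ofFinite ι
  let Φ : B →ₗ[ℤ] (ι → ZpQuasicyclic p) := LinearMap.pi χ
  have hΦ : Function.Injective Φ := by
    rw [injective_iff_map_eq_zero]
    intro b hb
    by_contra hb0
    let k := Nat.find (hB b)
    have hk : (p ^ k : ℕ) • b = 0 := Nat.find_spec (hB b)
    have hk0 : k ≠ 0 := by
      intro h
      rw [h] at hk
      simp at hk
      exact hb0 hk
    obtain ⟨m, hm⟩ := Nat.exists_eq_succ_of_ne_zero hk0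
    have hm' : (p ^ m : ℕ) • b ≠ 0 := Nat.find_min (hB b) (by change m < k; omega)
    have hpw : p • ((p ^ m : ℕ) • b) = 0 := by
      rwa [hm, pow_succ', mul_smul] at hk
    apply hχ ⟨_, hpw⟩ hm'
    have := congrFun hb ⟨_, hpw⟩
    rw [map_nsmul]
    change _ • (Φ b) ⟨_, hpw⟩ = 0
    rw [this]
    simp
  let x : ι → ZpQuasicyclic p := fun i => θ (χ i)
  have key : ∀ ψ : (ι → ZpQuasicyclic p) →ₗ[ℤ] ZpQuasicyclic p, θ (ψ ∘ₗ Φ) = ψ x := by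
    intro ψ
    have hc : ∀ i, ∃ c : ℤ_[p], ∀ y, (ψ ∘ₗ LinearMap.single ℤ (fun _ => ZpQuasicyclic p) i) y = c • y :=
      fun i => aux_end p _
    choose c hc using hc
    have hψ : ∀ y, ψ y = ∑ i, c i • y i := by
      intro y
      have hy : y = ∑ i, Pi.single i (y i) := (Finset.univ_sum_single y).symm
      conv_lhs => rw [hy]
      rw [map_sum]
      exact Finset.sum_congr rfl fun i _ => hc i (y i)
    have : ψ ∘ₗ Φ = ∑ i, c i • χ i := by
      ext b
      rw [LinearMap.comp_apply, hψ, LinearMap.sum_apply]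
      rfl
    rw [this, map_sum, hψ]
    exact Finset.sum_congr rfl fun i _ => map_smul _ _ _
  have hx : x ∈ LinearMap.range Φ := by
    by_contra hx
    obtain ⟨φ, hφ⟩ := aux_sep p (V := (ι → ZpQuasicyclic p) ⧸ LinearMap.range Φ) (by
      intro v
      obtain ⟨y, rfl⟩ := Submodule.Quotient.mk_surjective _ v
      choose k hk using fun i => aux_torsion p (y i)
      refine ⟨∑ i, k i, ?_⟩
      rw [← Submodule.Quotient.mk_smul]
      suffices (p ^ (∑ i, k i)) • y = 0 by rw [this]; rfl
      ext i
      have hle : k i ≤ ∑ i, k i := Finset.single_le_sum (fun _ _ => Nat.zero_le _) (Finset.mem_univ i)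
      obtain ⟨d, hd⟩ := Nat.exists_eq_add_of_le' hle
      rw [Pi.smul_apply, hd, pow_add, mul_smul, hk, smul_zero]
      rfl) (Submodule.Quotient.mk x) (by simpa [Submodule.Quotient.mk_eq_zero] using hx)
    apply hφ
    have h1 := key (φ ∘ₗ (LinearMap.range Φ).mkQ)
    have h2 : (φ ∘ₗ (LinearMap.range Φ).mkQ) ∘ₗ Φ = 0 := by
      rw [LinearMap.comp_assoc, LinearMap.range_mkQ_comp, LinearMap.comp_zero]
    rw [h2, map_zero] at h1
    exact h1.symm
  obtain ⟨b, hb⟩ := hx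
  refine ⟨b, fun φ => ?_⟩
  obtain ⟨ψ, hψ⟩ := (aux_baer_int p).extension_property Φ hΦ φ
  rw [← hψ, key, ← hb]
  rfl


theorem auxF_rho (A : Rep ℤ G) (g : G) (φ : PontryaginDual' p (A : Type)) (x : A) :
    dualRep p A g φ x = φ (A.ρ g⁻¹ x) := rfl

def auxPre {X Y : Type} [AddCommGroup X] [AddCommGroup Y] (f : X →+ Y) :
    PontryaginDual' p Y →ₗ[ℤ_[p]] PontryaginDual' p X where
  toFun φ := φ ∘ₗ f.toIntLinearMap
  map_add' _ _ := rfl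
  map_smul' _ _ := rfl

def auxHomAdd {k : Type} [Ring k] {A B : Rep k G} (f : A ⟶ B) : A.V →+ B.V :=
  f.hom.toLinearMap.toAddMonoidHom

theorem auxHomAdd_apply {k : Type} [Ring k] {A B : Rep k G} (f : A ⟶ B) (x : A) :
    auxHomAdd f x = f.hom x := rfl

def auxFmap {A B : Rep ℤ G} (f : A ⟶ B) : pontryaginDualRep p B ⟶ pontryaginDualRep p A :=
  Rep.ofHom ⟨auxPre p (auxHomAdd f), by
    intro g
    refine LinearMap.ext fun φ => LinearMap.ext fun x => ?_
    change φ (B.ρ g⁻¹ (f.hom x)) = φ (f.hom (A.ρ g⁻¹ x))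
    rw [Rep.hom_comm_apply]⟩

theorem aux_rep_ext {k : Type} [Ring k] {A B : Rep k G} {f g : A ⟶ B}
    (h : ∀ x, f.hom x = g.hom x) : f = g := by
  apply Rep.hom_ext
  exact DFunLike.ext _ _ h

def auxF : (Rep ℤ G)ᵒᵖ ⥤ Rep ℤ_[p] G where
  obj A := pontryaginDualRep p A.unop
  map f := auxFmap p f.unop
  map_id _ := aux_rep_ext fun _ => LinearMap.ext fun _ => rfl
  map_comp _ _ := aux_rep_ext fun _ => LinearMap.ext fun _ => rfl

instance auxF_additive : (auxF p (G := G)).Additive where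
  map_add {A B f g} := by
    refine aux_rep_ext fun φ => LinearMap.ext fun x => ?_
    have key : ∀ (ψ : PontryaginDual' p A.unop.V) (u v), ψ (u + v) = ψ u + ψ v :=
      fun ψ u v => map_add ψ u v
    exact key φ (f.unop.hom x) (g.unop.hom x)

theorem aux_rep_exact {k : Type} [Ring k] (S : ShortComplex (Rep k G)) :
    S.Exact ↔ ∀ x : S.X₂, S.g.hom x = 0 → ∃ y : S.X₁, S.f.hom y = x := by
  rw [← ShortComplex.exact_map_iff_of_faithful S (forget₂ (Rep k G) (ModuleCat k)),
    ShortComplex.moduleCat_exact_iff]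
  rfl

theorem aux_F_exact (S : ShortComplex (Rep ℤ G)) (hS : S.ShortExact) :
    (S.op.map (auxF p)).ShortExact := by
  have hi : Function.Injective S.f.hom := (Rep.mono_iff_injective S.f).1 hS.mono_f
  have hs : Function.Surjective S.g.hom := (Rep.epi_iff_surjective S.g).1 hS.epi_g
  have he := (aux_rep_exact S).1 hS.exact
  have hz : ∀ y, S.g.hom (S.f.hom y) = 0 := fun y => by
    have := congrArg (fun f => f.hom y) S.zero
    exact this
  refine @ShortComplex.ShortExact.mk _ _ _ _ ?_ ?_ ?_
  · rw [aux_rep_exact]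
    intro φ hφ
    change PontryaginDual' p S.X₂.V at φ
    have hφ' : ∀ y, φ (S.f.hom y) = 0 := fun y => LinearMap.congr_fun hφ y
    have hker : ∀ x x', S.g.hom x = S.g.hom x' → φ x = φ x' := by
      intro x x' h
      obtain ⟨y, hy⟩ := he (x - x') (by rw [map_sub, h, sub_self])
      have := hφ' y
      rw [hy, map_sub, sub_eq_zero] at this
      exact this
    let σ := Function.surjInv hs
    have hσ : ∀ z, S.g.hom (σ z) = z := Function.surjInv_eq hs
    refine ⟨(AddMonoidHom.toIntLinearMap (AddMonoidHom.mk' (fun z => φ (σ z)) (by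
      intro a b
      rw [← map_add]
      apply hker
      rw [map_add, hσ, hσ, hσ])) : PontryaginDual' p S.X₃.V), ?_⟩
    refine LinearMap.ext fun x => ?_
    exact hker _ _ (hσ _)
  · rw [Rep.mono_iff_injective]
    intro φ ψ h
    refine LinearMap.ext fun z => ?_
    obtain ⟨x, rfl⟩ := hs z
    exact LinearMap.congr_fun h x
  · rw [Rep.epi_iff_surjective]
    intro φ
    change PontryaginDual' p S.X₁.V at φ
    obtain ⟨ψ, hψ⟩ := (aux_baer_int p).extension_property
      (auxHomAdd S.f).toIntLinearMap hi φ
    refine ⟨(ψ : PontryaginDual' p S.X₂.V), ?_⟩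
    exact hψ

def auxDrep (X : Rep ℤ_[p] G) : Representation ℤ G (X.V →ₗ[ℤ_[p]] ZpQuasicyclic p) where
  toFun g := AddMonoidHom.toIntLinearMap
    (AddMonoidHom.mk' (fun θ => θ ∘ₗ (X.ρ g⁻¹)) (fun θ η => LinearMap.add_comp _ _ _))
  map_one' := by
    refine LinearMap.ext fun θ => LinearMap.ext fun x => ?_
    change θ (X.ρ 1⁻¹ x) = θ x
    simp
  map_mul' g h := by
    refine LinearMap.ext fun θ => LinearMap.ext fun x => ?_
    change θ (X.ρ (g * h)⁻¹ x) = θ (X.ρ h⁻¹ (X.ρ g⁻¹ x))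
    simp [mul_inv_rev]

def auxD (X : Rep ℤ_[p] G) : Rep ℤ G := Rep.of (auxDrep p X)

def auxDmap {X Y : Rep ℤ_[p] G} (f : X ⟶ Y) : auxD p Y ⟶ auxD p X :=
  Rep.ofHom ⟨AddMonoidHom.toIntLinearMap
    (AddMonoidHom.mk' (fun θ : Y.V →ₗ[ℤ_[p]] ZpQuasicyclic p => θ ∘ₗ f.hom.toLinearMap)
      (fun θ η => LinearMap.add_comp _ _ _)), by
    intro g
    refine LinearMap.ext fun θ => LinearMap.ext fun x => ?_
    change θ (Y.ρ g⁻¹ (f.hom x)) = θ (f.hom (X.ρ g⁻¹ x))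
    rw [Rep.hom_comm_apply]⟩

theorem auxDmap_epi {X Y : Rep ℤ_[p] G} (f : X ⟶ Y) [Mono f] : Epi (auxDmap p f) := by
  rw [Rep.epi_iff_surjective]
  intro θ
  change X.V →ₗ[ℤ_[p]] ZpQuasicyclic p at θ
  have hi : Function.Injective f.hom := (Rep.mono_iff_injective f).1 inferInstance
  obtain ⟨ψ, hψ⟩ := (aux_baer_zp p).extension_property f.hom.toLinearMap hi θ
  exact ⟨(ψ : Y.V →ₗ[ℤ_[p]] ZpQuasicyclic p), hψ⟩

theorem aux_rho_inv {k : Type} [Ring k] (P : Rep k G) (g : G) (x : P) :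
    P.ρ g⁻¹ (P.ρ g x) = x := by
  simp

theorem aux_rho_inv' {k : Type} [Ring k] (P : Rep k G) (g : G) (x : P) :
    P.ρ g (P.ρ g⁻¹ x) = x := by
  simp

def auxEv (P : Rep ℤ G) (x : P) : PontryaginDual' p P.V →ₗ[ℤ_[p]] ZpQuasicyclic p where
  toFun φ := φ x
  map_add' _ _ := rfl
  map_smul' _ _ := rfl

def auxHomLin {X : Rep ℤ_[p] G} {P : Rep ℤ G} (h : X ⟶ pontryaginDualRep p P) :
    X.V →ₗ[ℤ_[p]] PontryaginDual' p P.V := h.hom.toLinearMap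

theorem auxHomLin_rho {X : Rep ℤ_[p] G} {P : Rep ℤ G} (h : X ⟶ pontryaginDualRep p P)
    (g : G) (x : X) (y : P) : auxHomLin p h (X.ρ g x) y = auxHomLin p h x (P.ρ g⁻¹ y) := by
  have := Rep.hom_comm_apply h g x
  exact LinearMap.congr_fun this y

def auxZlin {M N : Type} [AddCommGroup M] [AddCommGroup N] (_ : Module ℤ M) (_ : Module ℤ N)
    (f : M →+ N) : M →ₗ[ℤ] N where
  toFun := f
  map_add' := map_add f
  map_smul' n x := by
    have := map_intCast_smul f ℤ ℤ n x
    simpa using this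

def auxMkHom' {M N : Type} [AddCommGroup M] [AddCommGroup N] [iM : Module ℤ M] [iN : Module ℤ N]
    (ρ : Representation ℤ G M) (σ : Representation ℤ G N)
    (f : M →+ N) (hf : ∀ g x, f (ρ g x) = σ g (f x)) : Rep.of ρ ⟶ Rep.of σ :=
  Rep.ofHom (ρ := ρ) (σ := σ) ⟨auxZlin iM iN f, fun g => LinearMap.ext fun x => hf g x⟩

def auxMkHom {A B : Rep ℤ G} (f : A.V →+ B.V) (hf : ∀ g x, f (A.ρ g x) = B.ρ g (f x)) : A ⟶ B :=
  @auxMkHom' G _ A.V B.V _ _ A.hV2 B.hV2 A.ρ B.ρ f hf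

def auxTr {X : Rep ℤ_[p] G} {P : Rep ℤ G} (h : X ⟶ pontryaginDualRep p P) : P ⟶ auxD p X :=
  auxMkHom (A := P) (B := auxD p X) (AddMonoidHom.mk'
    (fun y => (auxEv p P y ∘ₗ auxHomLin p h : X.V →ₗ[ℤ_[p]] ZpQuasicyclic p))
    (fun y z => LinearMap.ext fun x => map_add (auxHomLin p h x) y z)) (by
    intro g y
    refine LinearMap.ext fun x => ?_
    change auxHomLin p h x (P.ρ g y) = auxHomLin p h (X.ρ g⁻¹ x) y
    rw [auxHomLin_rho, inv_inv])

def auxVal {X : Rep ℤ_[p] G} {P : Rep ℤ G} (h : P ⟶ auxD p X) (y : P) :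
    X.V →ₗ[ℤ_[p]] ZpQuasicyclic p := h.hom y

theorem auxVal_add {X : Rep ℤ_[p] G} {P : Rep ℤ G} (h : P ⟶ auxD p X) (y z : P) :
    auxVal p h (y + z) = auxVal p h y + auxVal p h z := map_add h.hom y z

theorem auxVal_rho {X : Rep ℤ_[p] G} {P : Rep ℤ G} (h : P ⟶ auxD p X)
    (g : G) (y : P) (x : X) : auxVal p h (P.ρ g y) x = auxVal p h y (X.ρ g⁻¹ x) := by
  have := Rep.hom_comm_apply h g y
  exact LinearMap.congr_fun this x

def auxTrInv {X : Rep ℤ_[p] G} {P : Rep ℤ G} (h : P ⟶ auxD p X) : X ⟶ pontryaginDualRep p P :=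
  Rep.ofHom (ρ := X.ρ) (σ := dualRep p P) ⟨{
    toFun := fun x => AddMonoidHom.toIntLinearMap (AddMonoidHom.mk' (fun y => auxVal p h y x)
      (fun y z => by rw [auxVal_add]; rfl))
    map_add' := fun x x' => LinearMap.ext fun y => map_add (auxVal p h y) x x'
    map_smul' := fun c x => LinearMap.ext fun y => map_smul (auxVal p h y) c x }, by
    intro g
    refine LinearMap.ext fun x => LinearMap.ext fun y => ?_
    change auxVal p h y (X.ρ g x) = auxVal p h (P.ρ g⁻¹ y) x
    rw [auxVal_rho, inv_inv]⟩

theorem auxF_inj (P : Rep ℤ G) (hP : Projective P) :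
    Injective ((auxF p).obj (Opposite.op P)) := by
  constructor
  intro X Y h i hi
  change X ⟶ pontryaginDualRep p P at h
  have := auxDmap_epi p i
  have hl : Projective.factorThru (auxTr p h) (auxDmap p i) ≫ auxDmap p i = auxTr p h :=
    Projective.factorThru_comp _ _
  refine ⟨auxTrInv p (Projective.factorThru (auxTr p h) (auxDmap p i)), ?_⟩
  refine aux_rep_ext fun x => LinearMap.ext fun y => ?_
  have h1 := congrArg (fun f => auxVal p f y x) hl
  exact h1

theorem auxF_bij (B : Rep ℤ G) (hBp : ∀ b : B.V, ∃ k : ℕ, (p ^ k : ℕ) • b = 0)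
    (hfin : {a : B.V | p • a = 0}.Finite) (X : Rep ℤ G) :
    Function.Bijective (fun f : X ⟶ B => (auxF p).map f.op) := by
  have hsep : ∀ b b' : B.V, (∀ φ : PontryaginDual' p B.V, φ b = φ b') → b = b' := by
    intro b b' h
    by_contra hne
    obtain ⟨φ, hφ⟩ := aux_sep p hBp (b - b') (sub_ne_zero.2 hne)
    exact hφ (by rw [map_sub, h φ, sub_self])
  constructor
  · intro f f' h
    refine aux_rep_ext fun x => hsep _ _ fun φ => ?_
    have h1 : (auxFmap p f).hom φ = (auxFmap p f').hom φ :=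
      congrArg (fun u : pontryaginDualRep p B ⟶ pontryaginDualRep p X => u.hom φ) h
    exact LinearMap.congr_fun h1 x
  · intro h
    change pontryaginDualRep p B ⟶ pontryaginDualRep p X at h
    let H : PontryaginDual' p B.V →ₗ[ℤ_[p]] PontryaginDual' p X.V := h.hom.toLinearMap
    have hH : ∀ (g : G) (φ : PontryaginDual' p B.V) (x : X),
        H (dualRep p B g φ) x = H φ (X.ρ g⁻¹ x) := by
      intro g φ x
      exact LinearMap.congr_fun (Rep.hom_comm_apply h g φ) x
    have hex := fun x : X.V => aux_reflexive p hBp hfin (auxEv p X x ∘ₗ H)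
    choose f hf using hex
    have hf' : ∀ x φ, H φ x = φ (f x) := hf
    refine ⟨auxMkHom (A := X) (B := B) (AddMonoidHom.mk' f ?_) ?_, ?_⟩
    · intro x y
      refine hsep _ _ fun φ => ?_
      rw [map_add, ← hf', ← hf', ← hf', map_add]
    · intro g x
      refine hsep _ _ fun φ => ?_
      change φ (f (X.ρ g x)) = φ (B.ρ g (f x))
      have h2 := hH g⁻¹ φ x
      rw [inv_inv, hf', hf', auxF_rho, inv_inv] at h2
      exact h2.symm
    · refine aux_rep_ext fun φ => LinearMap.ext fun x => ?_
      exact (hf' x φ).symm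

/-- **Lemma 2.9.**  Let `p` be a prime and `G` a group.  Let `A` and `B` be
`ℤG`-modules whose underlying additive groups are abelian `p`-groups of finite
rank, with `B` divisible.  Then for all `n ≥ 0` there is an isomorphism of
abelian groups `Ext^n_{ℤG}(A, B) ≅ Ext^n_{ℤ_pG}(B*, A*)`. -/
theorem ext_pontryagin_duality (A B : Rep ℤ G)
    (hAp : ∀ a : (A : Type), ∃ k : ℕ, (p ^ k : ℕ) • a = 0)
    (hBp : ∀ b : (B : Type), ∃ k : ℕ, (p ^ k : ℕ) • b = 0)
    (hAfr : FiniteRankAbelian (A : Type)) (hBfr : FiniteRankAbelian (B : Type))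
    (hBdiv : ∀ (b : (B : Type)) (m : ℕ), 0 < m → ∃ b' : (B : Type), m • b' = b)
    (n : ℕ) :
    Nonempty ((((Ext ℤ (Rep ℤ G) n).obj (Opposite.op A)).obj B) ≃+
      (((Ext ℤ_[p] (Rep ℤ_[p] G) n).obj
        (Opposite.op (pontryaginDualRep p B))).obj (pontryaginDualRep p A))) := by
  have : HasExt.{0} (Rep.{0} ℤ G) := hasExt_of_enoughProjectives _
  have : HasExt.{0} (Rep.{0} ℤ_[p] G) := hasExt_of_enoughProjectives _
  obtain ⟨e1⟩ := aux_ext_compare.{0} ℤ A B n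
  obtain ⟨e2⟩ := aux_ext_compare.{0} ℤ_[p] (pontryaginDualRep p B) (pontryaginDualRep p A) n
  obtain ⟨e3⟩ := aux_dim_shift.{0} (auxF p (G := G)) (aux_F_exact p) (auxF_inj p) B
    (auxF_bij p B hBp (hBfr.2 p Fact.out)) n A
  exact ⟨(e1.trans e3).trans e2.symm⟩

end
end
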